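/- Jonsson's theorem: the Witten index of the hard-core fermion model on the torus square lattice G_{u,v} is given by rhombus tilings: Σ_I (−1)^{|I|} = t_b − t_f − (−1)^d θ_d θ_{d*}, where the sum runs over all independent sets I of G_{u,v}, d = gcd(u₁−u₂, v₁−v₂), d* = gcd(u₁+u₂, v₁+v₂), and θ_k = 2 if 3 divides k and θ_k = −1 otherwise. -/

import Mathlib

/-! ### The supersymmetric hard-core fermion model on a graph

For a finite simple graph `G` with totally ordered vertex set, the Hilbert space has an
orthonormal basis `{|I⟩ : I an independent set of G}`, the supercharge acts by
`Q|I⟩ = Σ_v ε(v,I) |I ∪ {v}⟩` (sum over `v ∉ I` with `I ∪ {v}` independent,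
`ε(v,I) = (−1)^{#{w ∈ I : w < v}}`), and the Hamiltonian is `H = Q Q† + Q† Q`. -/

open scoped BigOperators

/-- A finite set of vertices is independent if it contains no edge of `G`. -/
def Indep {V : Type*} (G : SimpleGraph V) (I : Finset V) : Prop :=
  ∀ ⦃a⦄, a ∈ I → ∀ ⦃b⦄, b ∈ I → ¬ G.Adj a b

lemma Indep.mono {V : Type*} {G : SimpleGraph V} {I J : Finset V}
    (hI : Indep G I) (hJI : J ⊆ I) : Indep G J :=
  fun _ ha _ hb => hI (hJI ha) (hJI hb)

/-- The independent sets of `G`, indexing the orthonormal basis of the Hilbert space. -/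
def IndepSet {V : Type*} (G : SimpleGraph V) : Type _ := {I : Finset V // Indep G I}

noncomputable instance {V : Type*} [Fintype V] [LinearOrder V] (G : SimpleGraph V) :
    Fintype (IndepSet G) := by
  classical exact Subtype.fintype _

instance {V : Type*} [LinearOrder V] (G : SimpleGraph V) : DecidableEq (IndepSet G) := by
  unfold IndepSet; infer_instance

/-- The Hilbert space `ℋ_G` of the hard-core fermion model: one orthonormal basis state
`|I⟩` for every independent set `I` of `G`. -/
noncomputable abbrev FockSpace {V : Type*} [Fintype V] [LinearOrder V] (G : SimpleGraph V) :=
  EuclideanSpace ℂ (IndepSet G)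

/-- The fermionic sign `ε(v, I) = (−1)^{#{w ∈ I : w < v}}`. -/
def fsign {V : Type*} [LinearOrder V] (I : Finset V) (v : V) : ℂ :=
  (-1) ^ (I.filter (· < v)).card

/-- The supercharge `Q`, with `Q|I⟩ = Σ_v ε(v,I) |I ∪ {v}⟩` over vertices `v ∉ I` such that
`I ∪ {v}` is independent; equivalently `(Qψ)(J) = Σ_{v ∈ J} ε(v, J∖{v}) ψ(J∖{v})`. -/
noncomputable def supercharge {V : Type*} [Fintype V] [LinearOrder V] (G : SimpleGraph V) :
    FockSpace G →ₗ[ℂ] FockSpace G where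
  toFun ψ := WithLp.toLp 2 fun J => ∑ v ∈ J.1, fsign (J.1.erase v) v *
      ψ ⟨J.1.erase v, J.2.mono (Finset.erase_subset v J.1)⟩
  map_add' ψ φ := by
    ext J
    simp only [WithLp.ofLp_add, Pi.add_apply]
    rw [← Finset.sum_add_distrib]
    exact Finset.sum_congr rfl fun v _ => mul_add _ _ _
  map_smul' c ψ := by
    ext J
    simp only [WithLp.ofLp_smul, Pi.smul_apply, RingHom.id_apply, smul_eq_mul, Finset.mul_sum]
    exact Finset.sum_congr rfl fun v _ => (mul_left_comm c _ _).symm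

/-- The Hamiltonian `H = Q Q† + Q† Q` of the supersymmetric hard-core fermion model. -/
noncomputable def hamiltonian {V : Type*} [Fintype V] [LinearOrder V] (G : SimpleGraph V) :
    FockSpace G →ₗ[ℂ] FockSpace G :=
  supercharge G ∘ₗ LinearMap.adjoint (supercharge G)
    + LinearMap.adjoint (supercharge G) ∘ₗ supercharge G

/-- The fermion-number operator `F`, with `F|I⟩ = |I| · |I⟩`. -/
noncomputable def numberOp {V : Type*} [Fintype V] [LinearOrder V] (G : SimpleGraph V) :
    FockSpace G →ₗ[ℂ] FockSpace G where
  toFun ψ := WithLp.toLp 2 fun I => (I.1.card : ℂ) * ψ I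
  map_add' ψ φ := by ext I; simp [mul_add]
  map_smul' c ψ := by ext I; simp [mul_left_comm]

/-- The bosonic subspace: the span of the basis states `|I⟩` with `|I|` even. -/
noncomputable def bosonic {V : Type*} [Fintype V] [LinearOrder V] (G : SimpleGraph V) :
    Submodule ℂ (FockSpace G) :=
  Submodule.span ℂ
    {e : FockSpace G | ∃ I : IndepSet G, Even I.1.card ∧ e = EuclideanSpace.single I 1}

/-- The fermionic subspace: the span of the basis states `|I⟩` with `|I|` odd. -/
noncomputable def fermionic {V : Type*} [Fintype V] [LinearOrder V] (G : SimpleGraph V) :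
    Submodule ℂ (FockSpace G) :=
  Submodule.span ℂ
    {e : FockSpace G | ∃ I : IndepSet G, Odd I.1.card ∧ e = EuclideanSpace.single I 1}

/-! ### The torus square lattice and Jonsson's rhombus tilings -/

/-- The lattice `Λ = ℤu + ℤv ⊆ ℤ²`. -/
def lat (u v : ℤ × ℤ) : AddSubgroup (ℤ × ℤ) := AddSubgroup.closure {u, v}

/-- The torus square-lattice graph `G_{u,v}` on `ℤ²/Λ`: two distinct classes are adjacent
whenever they have representatives differing by `(1,0)` or `(0,1)`. -/
def torusGraph (u v : ℤ × ℤ) : SimpleGraph ((ℤ × ℤ) ⧸ lat u v) where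
  Adj a b := a ≠ b ∧
    (a - b = ((1, 0) : ℤ × ℤ) ∨ b - a = ((1, 0) : ℤ × ℤ) ∨
     a - b = ((0, 1) : ℤ × ℤ) ∨ b - a = ((0, 1) : ℤ × ℤ))
  symm := by
    refine ⟨?_⟩
    rintro a b ⟨hne, h⟩
    exact ⟨hne.symm, by tauto⟩
  loopless := ⟨fun a h => h.1 rfl⟩

/-- A rhombus placed in the plane: a corner in `ℤ²` together with one of the four Jonsson
rhombus kinds. -/
structure PlacedRhombus where
  corner : ℤ × ℤ
  kind : Fin 4

/-- First edge vectors of the four Jonsson rhombi. -/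
def edgeVec1 : Fin 4 → ℤ × ℤ := ![(1, 2), (2, 1), (1, 2), (2, 1)]

/-- Second edge vectors of the four Jonsson rhombi. -/
def edgeVec2 : Fin 4 → ℤ × ℤ := ![(-1, 2), (2, -1), (2, -1), (-1, 2)]

/-- Embedding of `ℤ²` into `ℝ²`. -/
def toR (p : ℤ × ℤ) : ℝ × ℝ := ((p.1 : ℝ), (p.2 : ℝ))

/-- The closed parallelogram covered by a placed rhombus. -/
def closedCell (r : PlacedRhombus) : Set (ℝ × ℝ) :=
  {x | ∃ s t : ℝ, 0 ≤ s ∧ s ≤ 1 ∧ 0 ≤ t ∧ t ≤ 1 ∧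
    x = toR r.corner + s • toR (edgeVec1 r.kind) + t • toR (edgeVec2 r.kind)}

/-- The open parallelogram (interior) covered by a placed rhombus. -/
def openCell (r : PlacedRhombus) : Set (ℝ × ℝ) :=
  {x | ∃ s t : ℝ, 0 < s ∧ s < 1 ∧ 0 < t ∧ t < 1 ∧
    x = toR r.corner + s • toR (edgeVec1 r.kind) + t • toR (edgeVec2 r.kind)}

/-- Translation of a placed rhombus by a lattice vector. -/
def rTranslate (w : ℤ × ℤ) (r : PlacedRhombus) : PlacedRhombus :=
  ⟨r.corner + w, r.kind⟩

/-- A rhombus tiling of the torus `ℝ²/Λ`: a `Λ`-invariant family of Jonsson rhombi with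
pairwise disjoint interiors whose union is all of `ℝ²`. -/
def IsTiling (Λ : AddSubgroup (ℤ × ℤ)) (T : Set PlacedRhombus) : Prop :=
  (∀ w ∈ Λ, ∀ r ∈ T, rTranslate w r ∈ T) ∧
  (∀ r ∈ T, ∀ r' ∈ T, r ≠ r' → openCell r ∩ openCell r' = ∅) ∧
  (⋃ r ∈ T, closedCell r) = Set.univ

/-- The number of tiles of a tiling, counted modulo `Λ`. -/
noncomputable def numTiles (Λ : AddSubgroup (ℤ × ℤ)) (T : Set PlacedRhombus) : ℕ :=
  Nat.card (Quot (fun r r' : T => ∃ w ∈ Λ, rTranslate w (r' : PlacedRhombus) = r))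

/-- `t_b`: the number of rhombus tilings of the torus `ℝ²/Λ` with an even number of tiles. -/
noncomputable def evenTilings (Λ : AddSubgroup (ℤ × ℤ)) : ℕ :=
  Nat.card {T : Set PlacedRhombus // IsTiling Λ T ∧ Even (numTiles Λ T)}

/-- `t_f`: the number of rhombus tilings of the torus `ℝ²/Λ` with an odd number of tiles. -/
noncomputable def oddTilings (Λ : AddSubgroup (ℤ × ℤ)) : ℕ :=
  Nat.card {T : Set PlacedRhombus // IsTiling Λ T ∧ Odd (numTiles Λ T)}

/-- `θ_k = 2` if `3 ∣ k`, and `θ_k = −1` otherwise. -/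
def theta (k : ℤ) : ℤ := if (3 : ℤ) ∣ k then 2 else -1

/-!
Let `i`, `j` be the classes of `(1, 0)` and `(0, 1)` on the torus. In an independent set `σ`, join
each `y` to its north-east children `y + (1, 2)`, `y + (2, 1)` and to its north-west children
`y + (-1, 2)`, `y + (-2, 1)`. The signed number of those `σ` whose set of elements without
north-west children contains no north-east cycle can be computed in two ways.

* Fix the set `K` of elements without north-west children, by Möbius inversion. Toggling a point
  `p + (j - i)` with `p ∈ K` cancels everything unless `K` is empty, which contributes the Witten
  index `Z`, or `K` is one of the `1 + θ_{d*}` level sets of `x + y mod 3`, each contributing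
  the signed number of its subsets without north-east cycle, namely `(-1)^d θ_d`.
* Ask whether `σ` itself has a north-east cycle. The diagonals of direction `i + j` interact like
  the vertices of a `d`-cycle, whose independent sets have signed count `(-1)^d θ_d`; this is the
  contribution of the `σ` without north-east cycle. If `σ` has a north-east cycle, toggling the
  points diagonally next to recurrent points cancels all but the vertex sets of rhombus tilings.

A tiling has as many tiles as vertices, since each tile has a lowest vertex, so comparison gives
`Z + (1 + θ_{d*}) (-1)^d θ_d = t_b - t_f + (-1)^d θ_d`. That the rhombi on a vertex set do tile the
plane holds because, in the coordinates `(x + y, y - x)`, the vertices are the points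
`(3m + f n, 3n + g m)` with `f` and `g` 1-Lipschitz, and this grid interpolates to a bijection of
the plane.
-/

/-! ### Signed counts of finite sets -/

section SignedCount

variable {V : Type*} [Fintype V] {Q R : Finset V → Prop}

open Classical in
/-- The signed number `∑_{σ : Q σ} (-1)^|σ|` of finite sets with the property `Q`. -/
noncomputable def signedCount (Q : Finset V → Prop) : ℤ :=
  ∑ σ : Finset V with Q σ, (-1) ^ σ.card

theorem signedCount_congr (h : ∀ σ, Q σ ↔ R σ) : signedCount Q = signedCount R := by
  rw [funext fun σ => propext (h σ)]

theorem signedCount_eq_zero (h : ∀ σ, ¬ Q σ) : signedCount Q = 0 := by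
  simp [signedCount, h]

theorem signedCount_eq_sum (Q : Finset V → Prop) [DecidablePred Q] :
    signedCount Q = ∑ σ : Finset V, if Q σ then (-1 : ℤ) ^ σ.card else 0 := by
  classical
  rw [← Finset.sum_filter, signedCount]
  congr!

theorem signedCount_eq_empty : signedCount (fun σ : Finset V => σ = ∅) = 1 := by
  classical
  simp [signedCount_eq_sum]

theorem signedCount_eq_mul_card {c : ℤ} (h : ∀ σ, Q σ → (-1) ^ σ.card = c) :
    signedCount Q = c * Nat.card {σ // Q σ} := by
  classical
  rw [signedCount, Finset.sum_congr rfl fun σ hσ => h σ (Finset.mem_filter.1 hσ).2,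
    Finset.sum_const, nsmul_eq_mul, mul_comm, Nat.card_eq_fintype_card, Fintype.card_subtype]

theorem signedCount_and_add_signedCount_and_not (Q R : Finset V → Prop) :
    signedCount (fun σ => Q σ ∧ R σ) + signedCount (fun σ => Q σ ∧ ¬ R σ) = signedCount Q := by
  classical
  simp only [signedCount, ← Finset.filter_filter]
  exact Finset.sum_filter_add_sum_filter_not _ _ _

theorem card_even_sub_card_odd_eq_signedCount (Q : Finset V → Prop) :
    (Nat.card {σ // Q σ ∧ Even σ.card} : ℤ) - Nat.card {σ // Q σ ∧ Odd σ.card} =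
      signedCount Q := by
  rw [← signedCount_and_add_signedCount_and_not Q (Even ·.card),
    signedCount_eq_mul_card fun σ hσ => hσ.2.neg_one_pow,
    signedCount_eq_mul_card fun σ hσ => (Nat.not_even_iff_odd.1 hσ.2).neg_one_pow]
  simp only [Nat.not_even_iff_odd]
  ring

theorem sum_signedCount_and_eq {W : Type*} [Fintype W] (Q : Finset V → Prop) (f : Finset V → W) :
    ∑ w, signedCount (fun σ => Q σ ∧ f σ = w) = signedCount Q := by
  classical
  simp only [signedCount, ← Finset.filter_filter]
  exact Finset.sum_fiberwise _ f _

theorem signedCount_superset [DecidableEq V] (M : Finset V) (Q : Finset V → Prop) :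
    signedCount (fun σ => M ⊆ σ ∧ Q σ) =
      (-1) ^ M.card * signedCount (fun τ => Disjoint M τ ∧ Q (M ∪ τ)) := by
  classical
  rw [signedCount, signedCount, Finset.mul_sum]
  refine Finset.sum_nbij' (· \ M) (M ∪ ·) ?_ ?_ ?_ ?_ ?_ <;>
    simp only [Finset.mem_filter, Finset.mem_univ, true_and]
  · rintro σ ⟨hM, hQ⟩
    exact ⟨Finset.disjoint_sdiff, by rwa [Finset.union_sdiff_of_subset hM]⟩
  · rintro τ ⟨-, hQ⟩
    exact ⟨Finset.subset_union_left, hQ⟩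
  · rintro σ ⟨hM, -⟩
    exact Finset.union_sdiff_of_subset hM
  · rintro τ ⟨hτ, -⟩
    exact Finset.union_sdiff_cancel_left hτ
  · rintro σ ⟨hM, -⟩
    rw [← pow_add, add_comm, Finset.card_sdiff_add_card_eq_card hM]

theorem signedCount_mem_and [DecidableEq V] (x : V) (Q : Finset V → Prop) :
    signedCount (fun σ => x ∈ σ ∧ Q σ) = -signedCount (fun τ => x ∉ τ ∧ Q (insert x τ)) := by
  simpa only [Finset.singleton_subset_iff, Finset.card_singleton, pow_one, neg_one_mul,
    Finset.disjoint_singleton_left, ← Finset.insert_eq] using signedCount_superset {x} Q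

theorem signedCount_eq_zero_of_insert_iff [DecidableEq V] (x : V)
    (h : ∀ σ, x ∉ σ → (Q σ ↔ Q (insert x σ))) : signedCount Q = 0 := by
  rw [← signedCount_and_add_signedCount_and_not Q (x ∈ ·)]
  simp only [and_comm (a := Q _)]
  rw [signedCount_mem_and, neg_add_eq_zero]
  exact signedCount_congr fun σ => and_congr_right fun hx => (h σ hx).symm

theorem signedCount_eq_zero_of_toggle (T : Finset V → Finset V)
    (hT : ∀ σ, Q σ → (T σ).Nonempty)
    (h : ∀ σ τ x, Q σ → x ∈ T σ → (∀ y, y ≠ x → (y ∈ σ ↔ y ∈ τ)) → Q τ ∧ T τ = T σ) :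
    signedCount Q = 0 := by
  classical
  rw [← sum_signedCount_and_eq Q T]
  refine Finset.sum_eq_zero fun M _ => ?_
  obtain rfl | ⟨x, hx⟩ := M.eq_empty_or_nonempty
  · exact signedCount_eq_zero fun σ hσ => (hT σ hσ.1).ne_empty hσ.2
  · have transfer : ∀ σ τ, (∀ y, y ≠ x → (y ∈ σ ↔ y ∈ τ)) → Q σ ∧ T σ = M → Q τ ∧ T τ = M := by
      rintro σ τ hστ ⟨hQ, rfl⟩
      exact h σ τ x hQ hx hστ
    exact signedCount_eq_zero_of_insert_iff x fun σ _ =>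
      ⟨transfer _ _ fun y hy => by simp [hy], transfer _ _ fun y hy => by simp [hy]⟩

theorem signedCount_between [DecidableEq V] (L M : Finset V) :
    signedCount (fun K => L ⊆ K ∧ K ⊆ M) = if L = M then (-1) ^ M.card else 0 := by
  split_ifs with hLM
  · subst hLM
    simpa using signedCount_superset L (· ⊆ L) |>.trans <| congrArg _ <|
      (signedCount_congr fun τ => by
        rw [Finset.union_subset_iff, and_iff_right subset_rfl]
        exact ⟨fun h => disjoint_self.1 (h.1.mono_left h.2), by rintro rfl; simp⟩).trans
      signedCount_eq_empty
  · by_cases hsub : L ⊆ M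
    · obtain ⟨x, hxM, hxL⟩ := Finset.exists_of_ssubset (hsub.ssubset_of_ne hLM)
      refine signedCount_eq_zero_of_insert_iff x fun K _ => ?_
      rw [Finset.insert_subset_iff, and_iff_right hxM, Finset.subset_insert_iff_of_notMem hxL]
    · exact signedCount_eq_zero fun K hK => hsub (hK.1.trans hK.2)

theorem sum_powerset_signedCount (R : Finset V → Prop) [DecidablePred R] (M : Finset V) :
    ∑ K ∈ M.powerset, (-1) ^ K.card * signedCount (fun L => L ⊆ K ∧ R L) =
      if R M then 1 else 0 := by
  classical
  have expand : ∀ K ∈ M.powerset, (-1 : ℤ) ^ K.card * signedCount (fun L => L ⊆ K ∧ R L) =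
      ∑ L with R L, (-1) ^ L.card * if L ⊆ K then (-1) ^ K.card else 0 := by
    intro K _
    rw [signedCount_eq_sum, Finset.mul_sum, Finset.sum_filter]
    refine Finset.sum_congr rfl fun L _ => ?_
    by_cases hL : L ⊆ K <;> by_cases hR : R L <;> simp [hL, hR, mul_comm]
  have inner : ∀ L : Finset V, ∑ K ∈ M.powerset, (if L ⊆ K then (-1 : ℤ) ^ K.card else 0) =
      if L = M then (-1) ^ M.card else 0 := by
    intro L
    rw [← signedCount_between, signedCount_eq_sum, ← Finset.sum_filter, ← Finset.sum_filter]
    congr 1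
    ext K
    simp [and_comm]
  rw [Finset.sum_congr rfl expand, Finset.sum_comm]
  simp only [← Finset.mul_sum, inner]
  simp [← pow_add, Finset.sum_ite_eq']

/- Möbius inversion on the Boolean lattice, applied to the indicator function of `R`. -/
theorem signedCount_and_comp (Q R : Finset V → Prop) (f : Finset V → Finset V) :
    signedCount (fun σ => Q σ ∧ R (f σ)) =
      ∑ K : Finset V, signedCount (fun L => L ⊆ K ∧ R L) *
        ((-1) ^ K.card * signedCount (fun σ => K ⊆ f σ ∧ Q σ)) := by
  classical
  have expand : ∀ σ, (if Q σ ∧ R (f σ) then (-1 : ℤ) ^ σ.card else 0) =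
      ∑ K : Finset V, if K ⊆ f σ ∧ Q σ then
        (-1) ^ K.card * signedCount (fun L => L ⊆ K ∧ R L) * (-1) ^ σ.card else 0 := by
    intro σ
    by_cases hQ : Q σ
    · simp only [hQ, true_and, and_true, ← Finset.sum_filter, ← Finset.sum_mul]
      rw [show Finset.univ.filter (· ⊆ f σ) = (f σ).powerset by ext; simp,
        sum_powerset_signedCount, ite_mul, one_mul, zero_mul]
    · simp [hQ]
  rw [signedCount_eq_sum, Finset.sum_congr rfl fun σ _ => expand σ, Finset.sum_comm]
  refine Finset.sum_congr rfl fun K _ => ?_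
  rw [signedCount_eq_sum (fun σ => K ⊆ f σ ∧ Q σ), Finset.mul_sum, Finset.mul_sum]
  refine Finset.sum_congr rfl fun σ _ => ?_
  split_ifs <;> ring

theorem signedCount_and_eq_empty (Q : Finset V → Prop) (f : Finset V → Finset V) :
    signedCount (fun σ => Q σ ∧ f σ = ∅) =
      ∑ K : Finset V, (-1) ^ K.card * signedCount (fun σ => K ⊆ f σ ∧ Q σ) := by
  have one : ∀ K : Finset V, signedCount (fun L => L ⊆ K ∧ L = ∅) = 1 := fun K =>
    (signedCount_congr fun L => ⟨And.right, by rintro rfl; simp⟩).trans signedCount_eq_empty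
  simp only [signedCount_and_comp Q (· = ∅) f, one, one_mul]

end SignedCount

/-! ### Independent sets of Cayley graphs -/

section StepIndep

variable {V : Type*} [AddCommGroup V] {D : Set V} {J K S : Finset V} {x : V}

/-- Independence in the Cayley graph on `V` with edges `p — p + s` for `s ∈ D`. A step `0 ∈ D` puts
a loop at every vertex, so that only `∅` is independent. -/
def StepIndep (D : Set V) (σ : Finset V) : Prop :=
  ∀ p ∈ σ, ∀ s ∈ D, p + s ∉ σ

open Classical in
/-- The set `S` with the closed neighbourhood of `J` removed, in the Cayley graph with steps `D`. -/
noncomputable def removeNbhd (D : Set V) (J S : Finset V) : Finset V :=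
  {x ∈ S | x ∉ J ∧ ∀ s ∈ D, x + s ∉ J ∧ x - s ∉ J}

theorem stepIndep_empty : StepIndep D ∅ := by
  simp [StepIndep]

theorem stepIndep_singleton (h0 : (0 : V) ∉ D) : StepIndep D {x} := by
  simp only [StepIndep, Finset.mem_singleton, forall_eq, add_eq_left]
  rintro s hs rfl
  exact h0 hs

theorem StepIndep.mono (hK : StepIndep D K) (hJK : J ⊆ K) : StepIndep D J :=
  fun p hp s hs h => hK p (hJK hp) s hs (hJK h)

theorem mem_removeNbhd :
    x ∈ removeNbhd D J S ↔ x ∈ S ∧ x ∉ J ∧ ∀ s ∈ D, x + s ∉ J ∧ x - s ∉ J := by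
  simp [removeNbhd]

theorem removeNbhd_empty : removeNbhd D ∅ S = S := by
  simp [removeNbhd]

theorem removeNbhd_ssubset (hJ : J.Nonempty) (hJS : J ⊆ S) : removeNbhd D J S ⊂ S := by
  obtain ⟨x, hx⟩ := hJ
  exact (Finset.ssubset_iff_of_subset fun y hy => (mem_removeNbhd.1 hy).1).2
    ⟨x, hJS hx, fun h => (mem_removeNbhd.1 h).2.1 hx⟩

theorem stepIndep_union_iff [DecidableEq V] :
    StepIndep D (J ∪ K) ↔
      StepIndep D J ∧ StepIndep D K ∧ ∀ k ∈ K, ∀ s ∈ D, k + s ∉ J ∧ k - s ∉ J := by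
  constructor
  · refine fun h => ⟨h.mono Finset.subset_union_left, h.mono Finset.subset_union_right,
      fun k hk s hs => ⟨fun hJ => ?_, fun hJ => ?_⟩⟩
    · exact h k (Finset.mem_union_right _ hk) s hs (Finset.mem_union_left _ hJ)
    · refine h (k - s) (Finset.mem_union_left _ hJ) s hs ?_
      rw [sub_add_cancel]
      exact Finset.mem_union_right _ hk
  · rintro ⟨hJ, hK, hJK⟩ p hp s hs hps
    rw [Finset.mem_union] at hp hps
    rcases hp with hp | hp <;> rcases hps with hps | hps
    · exact hJ p hp s hs hps
    · exact (hJK _ hps s hs).2 (by rwa [add_sub_cancel_right])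
    · exact (hJK p hp s hs).1 hps
    · exact hK p hp s hs hps

theorem subset_removeNbhd_and_stepIndep_iff [DecidableEq V] (hJS : J ⊆ S) (hJ : StepIndep D J) :
    K ⊆ removeNbhd D J S ∧ StepIndep D K ↔
      Disjoint J K ∧ J ∪ K ⊆ S ∧ StepIndep D (J ∪ K) := by
  simp only [stepIndep_union_iff, Finset.union_subset_iff, Finset.disjoint_right,
    Finset.subset_iff (s₁ := K), mem_removeNbhd]
  grind

variable [Fintype V]

/-- The signed number of independent subsets of `S` in the Cayley graph with steps `D`. -/
noncomputable def indepCount (D : Set V) (S : Finset V) : ℤ :=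
  signedCount fun σ => σ ⊆ S ∧ StepIndep D σ

theorem signedCount_superset_stepIndep (hJS : J ⊆ S) (hJ : StepIndep D J) :
    signedCount (fun σ => J ⊆ σ ∧ σ ⊆ S ∧ StepIndep D σ) =
      (-1) ^ J.card * indepCount D (removeNbhd D J S) := by
  classical
  rw [signedCount_superset, indepCount]
  exact congrArg _ (signedCount_congr fun K => (subset_removeNbhd_and_stepIndep_iff hJS hJ).symm)

theorem indepCount_empty : indepCount D ∅ = 1 :=
  (signedCount_congr fun σ => by
    simp only [Finset.subset_empty, and_iff_left_iff_imp]
    rintro rfl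
    exact stepIndep_empty).trans signedCount_eq_empty

theorem indepCount_eq_erase_sub [DecidableEq V] (h0 : (0 : V) ∉ D) (hx : x ∈ S) :
    indepCount D S = indepCount D (S.erase x) - indepCount D (removeNbhd D {x} S) := by
  have hmem := signedCount_superset_stepIndep (D := D)
    (Finset.singleton_subset_iff.2 hx) (stepIndep_singleton h0)
  rw [Finset.card_singleton, pow_one, neg_one_mul] at hmem
  rw [sub_eq_add_neg, ← hmem, indepCount,
    ← signedCount_and_add_signedCount_and_not _ (fun σ => x ∈ σ), add_comm]
  refine congrArg₂ _ (signedCount_congr fun σ => ?_) (signedCount_congr fun σ => ?_)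
  · rw [Finset.subset_erase]
    tauto
  · rw [Finset.singleton_subset_iff]
    tauto

open Classical in
theorem sum_indepCount_removeNbhd (D : Set V) (S : Finset V) :
    ∑ J with J ⊆ S ∧ StepIndep D J, indepCount D (removeNbhd D J S) = 1 := by
  have only_empty : signedCount (fun σ => (σ ⊆ S ∧ StepIndep D σ) ∧ id σ = ∅) = 1 :=
    (signedCount_congr fun σ => and_iff_right_of_imp (by rintro rfl; simp [stepIndep_empty])).trans
      signedCount_eq_empty
  rw [← only_empty, signedCount_and_eq_empty, Finset.sum_filter]
  refine Finset.sum_congr rfl fun J _ => ?_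
  split_ifs with hJ
  · simp only [id]
    rw [signedCount_superset_stepIndep hJ.1 hJ.2, ← mul_assoc, ← mul_pow,
      neg_one_mul, neg_neg, one_pow, one_mul]
  · rw [signedCount_eq_zero, mul_zero]
    exact fun σ hσ => hJ ⟨hσ.1.trans hσ.2.1, hσ.2.2.mono hσ.1⟩

open Classical in
theorem eq_indepCount_of_sum_removeNbhd (e : Finset V → ℤ)
    (he : ∀ S, ∑ J with J ⊆ S ∧ StepIndep D J, e (removeNbhd D J S) = 1) (S : Finset V) :
    e S = indepCount D S := by
  induction S using Finset.strongInduction with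
  | H S ih =>
    have hempty : ∅ ∈ Finset.univ.filter fun J => J ⊆ S ∧ StepIndep D J := by
      simp [stepIndep_empty]
    have hsum := (he S).trans (sum_indepCount_removeNbhd D S).symm
    rw [← Finset.add_sum_erase _ _ hempty, ← Finset.add_sum_erase _ _ hempty, removeNbhd_empty]
      at hsum
    refine add_right_cancel (hsum.trans (congrArg _ (Finset.sum_congr rfl fun J hJ => ?_)))
    simp only [Finset.mem_erase, Finset.mem_filter, Finset.mem_univ, true_and] at hJ
    exact (ih _ (removeNbhd_ssubset (Finset.nonempty_iff_ne_empty.2 hJ.1) hJ.2.1)).symm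

end StepIndep

/-! ### The signed number of independent sets of a cycle -/

section CycleGraph

/-- The signed number of independent sets of a path with the given number of vertices. -/
def pathCount : ℕ → ℤ
  | 0 => 1
  | 1 => 0
  | n + 2 => pathCount (n + 1) - pathCount n

theorem pathCount_add_three (n : ℕ) : pathCount (n + 3) = -pathCount n := by
  simp only [pathCount]
  ring

theorem pathCount_succ_sub_pathCount_pred (n : ℕ) :
    pathCount (n + 1) - pathCount (n - 1) = (-1) ^ (n + 2) * theta ((n + 2 : ℕ) : ℤ) := by
  induction n using Nat.strong_induction_on with
  | _ n ih =>
    match n with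
    | 0 | 1 | 2 | 3 => decide
    | n + 4 =>
      have hθ : theta ((n + 4 + 2 : ℕ) : ℤ) = theta ((n + 1 + 2 : ℕ) : ℤ) := by
        simp only [theta]
        congr 1
        push_cast
        exact propext (by omega)
      rw [hθ, show n + 4 + 1 = n + 1 + 1 + 3 by ring, show n + 4 - 1 = n + 3 by omega,
        pathCount_add_three, pathCount_add_three, show n + 4 + 2 = n + 1 + 2 + 3 by ring, pow_add]
      have hn := ih (n + 1) (by omega)
      rw [Nat.add_sub_cancel] at hn
      linarith

variable {d : ℕ}

theorem mem_removeNbhd_singleton_one {S : Finset (ZMod d)} {j k : ZMod d} :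
    j ∈ removeNbhd {1} {k} S ↔ j ∈ S ∧ j ≠ k ∧ j + 1 ≠ k ∧ j - 1 ≠ k := by
  simp [mem_removeNbhd]

theorem zero_notMem_singleton_one (hd : 1 < d) : (0 : ZMod d) ∉ ({1} : Set (ZMod d)) :=
  have : Fact (1 < d) := ⟨hd⟩
  zero_ne_one

variable [NeZero d]

theorem zmod_eq_natCast_iff {j : ZMod d} {k : ℕ} (hk : k < d) : j = (k : ZMod d) ↔ j.val = k := by
  constructor
  · rintro rfl
    exact ZMod.val_natCast_of_lt hk
  · rintro rfl
    exact (ZMod.natCast_zmod_val j).symm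

theorem indepCount_interval (m n : ℕ) (h : m + n < d) :
    indepCount {1} {j : ZMod d | m ≤ j.val ∧ j.val < m + n} = pathCount n := by
  induction n using Nat.strong_induction_on with
  | _ n ih =>
    match n with
    | 0 =>
      rw [pathCount, ← indepCount_empty (D := {(1 : ZMod d)})]
      congr 1
      exact Finset.filter_false_of_mem fun j _ => by omega
    | 1 =>
      have hlast : ∀ j : ZMod d, j = (m : ℕ) ↔ j.val = m :=
        fun j => zmod_eq_natCast_iff (by omega)
      rw [indepCount_eq_erase_sub (zero_notMem_singleton_one (by omega)) (x := ((m : ℕ) : ZMod d)),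
        pathCount, sub_eq_zero]
      · congr 1
        ext j
        simp only [mem_removeNbhd_singleton_one, Finset.mem_erase, Finset.mem_filter,
          Finset.mem_univ, true_and, hlast j, ne_eq]
        constructor <;> intro hj <;> omega
      · simp only [Finset.mem_filter, Finset.mem_univ, true_and, (hlast _).1 rfl]
        omega
    | n + 2 =>
      have hlast : ∀ j : ZMod d, j = (m + n + 1 : ℕ) ↔ j.val = m + n + 1 :=
        fun j => zmod_eq_natCast_iff (by omega)
      have hpred : ∀ j : ZMod d, j + 1 = (m + n + 1 : ℕ) ↔ j.val = m + n := fun j => by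
        rw [← zmod_eq_natCast_iff (by omega), Nat.cast_succ, add_left_inj]
      have hsucc : ∀ j : ZMod d, j - 1 = (m + n + 1 : ℕ) ↔ j.val = m + n + 2 := fun j => by
        rw [← zmod_eq_natCast_iff (by omega), sub_eq_iff_eq_add, ← Nat.cast_succ]
      rw [indepCount_eq_erase_sub (zero_notMem_singleton_one (by omega))
        (x := ((m + n + 1 : ℕ) : ZMod d)), pathCount, ← ih (n + 1) (by omega) (by omega),
        ← ih n (by omega) (by omega)]
      · congr 2 <;> ext j <;>
          simp only [mem_removeNbhd_singleton_one, Finset.mem_erase, Finset.mem_filter,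
            Finset.mem_univ, true_and, ne_eq, hpred, hsucc, hlast j] <;> omega
      · simp only [Finset.mem_filter, Finset.mem_univ, true_and, (hlast _).1 rfl]
        omega

theorem indepCount_one_univ :
    indepCount {(1 : ZMod d)} Finset.univ = (-1) ^ d * theta (d : ℤ) := by
  obtain rfl | hd : d = 1 ∨ 2 ≤ d := by have := NeZero.pos d; omega
  · have loop : ∀ σ : Finset (ZMod 1), σ ⊆ Finset.univ ∧ StepIndep {1} σ ↔ σ = ∅ := by
      refine fun σ => ⟨fun h => Finset.eq_empty_of_forall_notMem fun p hp => ?_, ?_⟩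
      · exact h.2 p hp 1 rfl (by rwa [Subsingleton.elim (p + 1) p])
      · rintro rfl
        exact ⟨Finset.subset_univ _, stepIndep_empty⟩
    rw [indepCount, signedCount_congr loop, signedCount_eq_empty]
    rfl
  · obtain ⟨n, rfl⟩ := Nat.exists_eq_add_of_le' hd
    have hlast : ∀ j : ZMod (n + 2), j = (n + 1 : ℕ) ↔ j.val = n + 1 :=
      fun j => zmod_eq_natCast_iff (by omega)
    have hpred : ∀ j : ZMod (n + 2), j + 1 = (n + 1 : ℕ) ↔ j.val = n := fun j => by
      rw [← zmod_eq_natCast_iff (by omega), Nat.cast_succ, add_left_inj]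
    have hsucc : ∀ j : ZMod (n + 2), j - 1 = (n + 1 : ℕ) ↔ j.val = 0 := fun j => by
      rw [← zmod_eq_natCast_iff (by omega), sub_eq_iff_eq_add, ← Nat.cast_succ,
        ZMod.natCast_self, Nat.cast_zero]
    rw [indepCount_eq_erase_sub (zero_notMem_singleton_one (by omega))
      (Finset.mem_univ ((n + 1 : ℕ) : ZMod (n + 2))), ← pathCount_succ_sub_pathCount_pred,
      ← indepCount_interval (d := n + 2) 0 (n + 1) (by omega),
      ← indepCount_interval (d := n + 2) 1 (n - 1) (by omega)]
    congr 2 <;> ext j <;> have := j.val_lt <;>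
      simp only [mem_removeNbhd_singleton_one, Finset.mem_erase, Finset.mem_filter,
        Finset.mem_univ, true_and, and_true, ne_eq, hpred, hsucc, hlast j] <;> omega

end CycleGraph

/-! ### Cycles and childless elements -/

section HasCycle

variable {V : Type*} [AddCommGroup V] {a c q x y : V} {σ τ M : Finset V}

/-- The finite set `σ` contains a cycle of the directed graph with edges `y → y + a` and
`y → y + c`; equivalently, some nonempty subset has no sink. -/
def HasCycle (a c : V) (σ : Finset V) : Prop :=
  ∃ N ⊆ σ, N.Nonempty ∧ ∀ y ∈ N, y + a ∈ N ∨ y + c ∈ N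

theorem HasCycle.mono (hσ : HasCycle a c σ) (h : σ ⊆ τ) : HasCycle a c τ :=
  let ⟨N, hN, hN'⟩ := hσ
  ⟨N, hN.trans h, hN'⟩

theorem not_hasCycle_empty : ¬ HasCycle a c ∅ := by
  rintro ⟨N, hN, ⟨y, hy⟩, -⟩
  simpa using hN hy

variable [DecidableEq V]

theorem HasCycle.of_insert_parentless (ha : a ≠ 0) (hc : c ≠ 0) (hxa : x - a ∉ σ) (hxc : x - c ∉ σ)
    (h : HasCycle a c (insert x σ)) : HasCycle a c σ := by
  obtain ⟨N, hN, ⟨y, hy⟩, hsucc⟩ := h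
  have hNσ : ∀ z ∈ N, z ≠ x → z ∈ σ := fun z hz hzx =>
    (Finset.mem_insert.1 (hN hz)).resolve_left hzx
  refine ⟨N.erase x, fun z hz => hNσ z (Finset.mem_of_mem_erase hz) (Finset.ne_of_mem_erase hz),
    ?_, fun z hz => ?_⟩
  · obtain rfl | hyx := eq_or_ne y x
    · rcases hsucc y hy with h | h
      · exact ⟨y + a, Finset.mem_erase.2 ⟨by simpa using ha, h⟩⟩
      · exact ⟨y + c, Finset.mem_erase.2 ⟨by simpa using hc, h⟩⟩
    · exact ⟨y, Finset.mem_erase.2 ⟨hyx, hy⟩⟩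
  · obtain ⟨hzx, hz⟩ := Finset.mem_erase.1 hz
    have hza : z + a ≠ x := fun h => hxa (by rw [← h, add_sub_cancel_right]; exact hNσ z hz hzx)
    have hzc : z + c ≠ x := fun h => hxc (by rw [← h, add_sub_cancel_right]; exact hNσ z hz hzx)
    exact (hsucc z hz).imp (fun h => Finset.mem_erase.2 ⟨hza, h⟩)
      (fun h => Finset.mem_erase.2 ⟨hzc, h⟩)

/-- The sinks of the directed graph induced on `σ` by the edges `y → y + a` and `y → y + c`. -/
def childless (a c : V) (σ : Finset V) : Finset V :=
  {y ∈ σ | y + a ∉ σ ∧ y + c ∉ σ}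

theorem mem_childless : y ∈ childless a c σ ↔ y ∈ σ ∧ y + a ∉ σ ∧ y + c ∉ σ :=
  Finset.mem_filter

theorem childless_subset : childless a c σ ⊆ σ :=
  Finset.filter_subset _ _

theorem childless_eq_empty_iff (h : ¬ HasCycle a c σ) : childless a c σ = ∅ ↔ σ = ∅ := by
  refine ⟨fun hempty => ?_, by rintro rfl; rfl⟩
  by_contra hσ
  refine h ⟨σ, subset_rfl, Finset.nonempty_iff_ne_empty.2 hσ, fun y hy => ?_⟩
  by_contra! hy'
  exact Finset.notMem_empty y (hempty ▸ mem_childless.2 ⟨hy, hy'⟩)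

theorem HasCycle.sdiff_childless (h : HasCycle a c σ) (hM : M ⊆ childless a c σ) :
    HasCycle a c (σ \ M) := by
  obtain ⟨N, hN, hne, hsucc⟩ := h
  refine ⟨N, fun y hy => Finset.mem_sdiff.2 ⟨hN hy, fun hyM => ?_⟩, hne, hsucc⟩
  have hy' := (mem_childless.1 (hM hyM)).2
  exact (hsucc y hy).elim (fun h => hy'.1 (hN h)) (fun h => hy'.2 (hN h))

theorem childless_subset_childless_insert (hxa : x - a ∉ σ) (hxc : x - c ∉ σ) :
    childless a c σ ⊆ childless a c (insert x σ) := by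
  intro y hy
  rw [mem_childless] at hy ⊢
  have hya : y + a ≠ x := fun h => hxa (by rw [← h, add_sub_cancel_right]; exact hy.1)
  have hyc : y + c ≠ x := fun h => hxc (by rw [← h, add_sub_cancel_right]; exact hy.1)
  exact ⟨Finset.mem_insert_of_mem hy.1, fun h => hy.2.1 (Finset.mem_of_mem_insert_of_ne h hya),
    fun h => hy.2.2 (Finset.mem_of_mem_insert_of_ne h hyc)⟩

theorem subset_childless_of_insert (hxM : x ∉ M) (hM : M ⊆ childless a c (insert x σ)) :
    M ⊆ childless a c σ := by
  intro y hy
  have hy' := mem_childless.1 (hM hy)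
  simp only [Finset.mem_insert, not_or] at hy'
  exact mem_childless.2 ⟨hy'.1.resolve_left fun h => hxM (h ▸ hy), hy'.2.1.2, hy'.2.2.2⟩

theorem mem_childless_iff_of_agree {a c : V} (hxa : x - a ∉ σ) (hxc : x - c ∉ σ)
    (hτ : ∀ y, y ≠ x → (y ∈ σ ↔ y ∈ τ)) (hqx : q ≠ x) :
    q ∈ childless a c τ ↔ q ∈ childless a c σ := by
  rw [mem_childless, mem_childless, ← hτ q hqx]
  refine and_congr_right fun hq => ?_
  rw [← hτ (q + a) fun h => hxa (by simpa [← h] using hq),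
    ← hτ (q + c) fun h => hxc (by simpa [← h] using hq)]

end HasCycle

/-! ### Acyclic sets and independent sets of a cycle graph -/

section DiagonalFibration

variable {V : Type*} {d : ℕ} {B σ τ M : Finset V} {k : V → ZMod d} {J S : Finset (ZMod d)}

/-- The union of the fibres of `k : B → ℤ/d` over `J`. -/
def fiberUnion (k : V → ZMod d) (B : Finset V) (J : Finset (ZMod d)) : Finset V :=
  {y ∈ B | k y ∈ J}

theorem mem_fiberUnion {y : V} : y ∈ fiberUnion k B J ↔ y ∈ B ∧ k y ∈ J :=
  Finset.mem_filter

theorem fiberUnion_subset : fiberUnion k B J ⊆ B :=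
  Finset.filter_subset _ _

theorem subset_fiberUnion_removeNbhd_iff :
    τ ⊆ fiberUnion k B (removeNbhd {1} J S) ↔
      τ ⊆ fiberUnion k B S ∧ ∀ y ∈ τ, k y ∉ J ∧ k y + 1 ∉ J ∧ k y - 1 ∉ J := by
  simp only [Finset.subset_iff, mem_fiberUnion, mem_removeNbhd, Set.mem_singleton_iff, forall_eq]
  grind

variable [AddCommGroup V] [DecidableEq V] {a c t : V} {ok : Finset V → Prop}

/-- The situation in which the acyclic admissible subsets of `B` are counted by the independent sets
of the cycle graph on `ℤ/d`: the map `k` fibres `B` into diagonals, each of them a single orbit of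
the translation by `t`; the two child steps `a` and `c` move between neighbouring diagonals; and
admissibility `ok` allows to extend a childless element along its diagonal and to insert full
diagonals that are neither adjacent to each other nor to the rest of the set. -/
structure DiagonalFibration (a c t : V) (B : Finset V) (ok : Finset V → Prop) (k : V → ZMod d) :
    Prop where
  left_ne_zero : a ≠ 0
  right_ne_zero : c ≠ 0
  nonempty : B.Nonempty
  add_mem : ∀ y ∈ B, y + t ∈ B
  sub_left_mem : ∀ y ∈ B, y - a ∈ B
  sub_right_mem : ∀ y ∈ B, y - c ∈ B
  apply_sub_left : ∀ y, k (y - a) = k y + 1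
  apply_sub_right : ∀ y, k (y - c) = k y - 1
  apply_add : ∀ y, k (y + t) = k y
  exists_nsmul : ∀ p ∈ B, ∀ q ∈ B, k p = k q → ∃ n : ℕ, q = p + n • t
  ok_empty : ok ∅
  ok_mono : ∀ {σ τ}, ok σ → τ ⊆ σ → ok τ
  ok_insert : ∀ {σ}, σ ⊆ B → ok σ → ∀ p ∈ childless a c σ,
    ok (insert (p + t) σ) ∧ p + t - a ∉ σ ∧ p + t - c ∉ σ
  ok_union : ∀ {J τ}, StepIndep {1} J → (∀ y ∈ τ, k y ∉ J ∧ k y + 1 ∉ J ∧ k y - 1 ∉ J) →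
    τ ⊆ B → ok τ → ok (fiberUnion k B J ∪ τ)

namespace DiagonalFibration

variable (F : DiagonalFibration a c t B ok k)
include F

theorem apply_left (y : V) : k y = k (y + a) + 1 := by
  rw [← F.apply_sub_left, add_sub_cancel_right]

theorem apply_right (y : V) : k (y + c) = k y + 1 := by
  rw [← sub_eq_iff_eq_add, ← F.apply_sub_right, add_sub_cancel_right]

theorem fiberUnion_injective [NeZero d] : Function.Injective (fiberUnion k B) := by
  have hsurj : ∀ j : ZMod d, ∃ y ∈ B, k y = j := by
    obtain ⟨y, hy⟩ := F.nonempty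
    have shift : ∀ n : ℕ, ∃ z ∈ B, k z = k y + n := fun n => by
      induction n with
      | zero => exact ⟨y, hy, by simp⟩
      | succ n ih =>
        obtain ⟨z, hz, hkz⟩ := ih
        exact ⟨z - a, F.sub_left_mem z hz, by rw [F.apply_sub_left, hkz, Nat.cast_succ, add_assoc]⟩
    intro j
    obtain ⟨z, hz, hkz⟩ := shift (j - k y).val
    exact ⟨z, hz, by rw [hkz, ZMod.natCast_zmod_val, add_sub_cancel]⟩
  intro J J' h
  ext j
  obtain ⟨y, hy, rfl⟩ := hsurj j
  simpa [mem_fiberUnion, hy] using Finset.ext_iff.1 h y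

theorem fiberUnion_image (hM : M ⊆ B) (ht : ∀ p ∈ M, p + t ∈ M) :
    fiberUnion k B (M.image k) = M := by
  have hn : ∀ n : ℕ, ∀ p ∈ M, p + n • t ∈ M := fun n => by
    induction n with
    | zero => simp
    | succ n ih => exact fun p hp => by rw [succ_nsmul, ← add_assoc]; exact ht _ (ih p hp)
  ext y
  rw [mem_fiberUnion, Finset.mem_image]
  refine ⟨?_, fun hy => ⟨hM hy, y, hy, rfl⟩⟩
  rintro ⟨hy, p, hp, hpy⟩
  obtain ⟨n, rfl⟩ := F.exists_nsmul p (hM hp) y hy hpy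
  exact hn n p hp

theorem stepIndep_of_fiberUnion_subset_childless (hJ : ∀ j ∈ J, ∃ p ∈ B, k p = j)
    (h : fiberUnion k B J ⊆ childless a c σ) :
    StepIndep {1} J := by
  rintro j hj _ rfl hj1
  obtain ⟨p, hp, rfl⟩ := hJ j hj
  have hpa : p - a ∈ fiberUnion k B J :=
    mem_fiberUnion.2 ⟨F.sub_left_mem p hp, F.apply_sub_left p ▸ hj1⟩
  have hpσ := (mem_childless.1 (h (mem_fiberUnion.2 ⟨hp, hj⟩))).1
  exact (mem_childless.1 (h hpa)).2.1 (by rwa [sub_add_cancel])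

theorem subset_fiberUnion_removeNbhd (hdisj : Disjoint (fiberUnion k B J) τ)
    (hS : τ ⊆ fiberUnion k B S)
    (hJ : fiberUnion k B J ⊆ childless a c (fiberUnion k B J ∪ τ)) :
    τ ⊆ fiberUnion k B (removeNbhd {1} J S) := by
  refine subset_fiberUnion_removeNbhd_iff.2 ⟨hS, fun y hy => ?_⟩
  have hyB := (mem_fiberUnion.1 (hS hy)).1
  have hyU : y ∈ fiberUnion k B J ∪ τ := Finset.mem_union_right _ hy
  refine ⟨fun h => ?_, fun h => ?_, fun h => ?_⟩
  · exact Finset.disjoint_right.1 hdisj hy (mem_fiberUnion.2 ⟨hyB, h⟩)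
  · have hya := hJ (mem_fiberUnion.2 ⟨F.sub_left_mem y hyB, F.apply_sub_left y ▸ h⟩)
    exact (mem_childless.1 hya).2.1 (by rwa [sub_add_cancel])
  · have hyc := hJ (mem_fiberUnion.2 ⟨F.sub_right_mem y hyB, F.apply_sub_right y ▸ h⟩)
    exact (mem_childless.1 hyc).2.2 (by rwa [sub_add_cancel])

theorem fiberUnion_subset_childless_union (hJ : StepIndep {1} J)
    (hτ : ∀ y ∈ τ, k y ∉ J ∧ k y + 1 ∉ J ∧ k y - 1 ∉ J) :
    fiberUnion k B J ⊆ childless a c (fiberUnion k B J ∪ τ) := by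
  intro y hy
  have hyJ := (mem_fiberUnion.1 hy).2
  refine mem_childless.2 ⟨Finset.mem_union_left _ hy, fun h => ?_, fun h => ?_⟩
  · rw [F.apply_left y] at hyJ
    rcases Finset.mem_union.1 h with h | h
    · exact hJ _ (mem_fiberUnion.1 h).2 1 rfl hyJ
    · exact (hτ _ h).2.1 hyJ
  · rcases Finset.mem_union.1 h with h | h
    · exact hJ _ hyJ 1 rfl (F.apply_right y ▸ (mem_fiberUnion.1 h).2)
    · exact (hτ _ h).2.2 (by rwa [F.apply_right, add_sub_cancel_right])

variable [Fintype V]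

theorem signedCount_subset_childless_eq_zero {p : V} (hp : p ∈ M) (hpt : p + t ∉ M) :
    signedCount (fun σ => M ⊆ childless a c σ ∧
      σ ⊆ fiberUnion k B S ∧ ok σ ∧ ¬ HasCycle a c σ) = 0 := by
  refine signedCount_eq_zero_of_insert_iff (p + t) fun σ _ => ⟨?_, ?_⟩
  · rintro ⟨hM, hS, hok, hacyc⟩
    obtain ⟨hok', hpa, hpc⟩ := F.ok_insert (hS.trans fiberUnion_subset) hok p (hM hp)
    have hpS := mem_fiberUnion.1 (hS (childless_subset (hM hp)))
    exact ⟨hM.trans (childless_subset_childless_insert hpa hpc),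
      Finset.insert_subset (mem_fiberUnion.2 ⟨F.add_mem p hpS.1, F.apply_add p ▸ hpS.2⟩) hS, hok',
      fun h => hacyc (h.of_insert_parentless F.left_ne_zero F.right_ne_zero hpa hpc)⟩
  · rintro ⟨hM, hS, hok, hacyc⟩
    have hsub := Finset.subset_insert (p + t) σ
    exact ⟨subset_childless_of_insert hpt hM, hsub.trans hS, F.ok_mono hok hsub,
      fun h => hacyc (h.mono hsub)⟩

theorem signedCount_fiberUnion_subset_childless (hJS : J ⊆ S) (hJ : StepIndep {1} J) :
    signedCount (fun σ => fiberUnion k B J ⊆ childless a c σ ∧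
      σ ⊆ fiberUnion k B S ∧ ok σ ∧ ¬ HasCycle a c σ) =
    (-1) ^ (fiberUnion k B J).card *
      signedCount fun τ => τ ⊆ fiberUnion k B (removeNbhd {1} J S) ∧ ok τ ∧ ¬ HasCycle a c τ := by
  refine (signedCount_congr fun σ => (and_iff_right_of_imp fun h =>
    h.1.trans childless_subset).symm).trans ((signedCount_superset (fiberUnion k B J) _).trans
      (congrArg _ (signedCount_congr fun τ => ⟨?_, ?_⟩)))
  · rintro ⟨hdisj, hchildless, hS, hok, hacyc⟩
    have hτ : τ ⊆ fiberUnion k B J ∪ τ := Finset.subset_union_right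
    exact ⟨F.subset_fiberUnion_removeNbhd hdisj (hτ.trans hS) hchildless, F.ok_mono hok hτ,
      fun h => hacyc (h.mono hτ)⟩
  · rintro ⟨hτ, hok, hacyc⟩
    obtain ⟨hτS, hfar⟩ := subset_fiberUnion_removeNbhd_iff.1 hτ
    have hdisj : Disjoint (fiberUnion k B J) τ :=
      Finset.disjoint_right.2 fun y hy h => (hfar y hy).1 (mem_fiberUnion.1 h).2
    have hchildless := F.fiberUnion_subset_childless_union hJ hfar
    refine ⟨hdisj, hchildless, Finset.union_subset (fun y hy => ?_) hτS,
      F.ok_union hJ hfar (hτS.trans fiberUnion_subset) hok, fun h => hacyc ?_⟩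
    · exact mem_fiberUnion.2 ⟨(mem_fiberUnion.1 hy).1, hJS (mem_fiberUnion.1 hy).2⟩
    · simpa only [Finset.union_sdiff_cancel_left hdisj] using h.sdiff_childless hchildless

open Classical in
/- Expanding over the sets `M` of childless elements, only unions of full diagonals survive: if
`p ∈ M` but `p + t ∉ M`, then toggling `p + t` cancels the contribution of `M`. -/
theorem sum_signedCount_fiberUnion_removeNbhd [NeZero d] (S : Finset (ZMod d)) :
    ∑ J with J ⊆ S ∧ StepIndep {1} J, signedCount (fun σ =>
      σ ⊆ fiberUnion k B (removeNbhd {1} J S) ∧ ok σ ∧ ¬ HasCycle a c σ) = 1 := by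
  have only_empty : signedCount (fun σ => (σ ⊆ fiberUnion k B S ∧ ok σ ∧ ¬ HasCycle a c σ) ∧
      childless a c σ = ∅) = 1 := by
    refine (signedCount_congr fun σ => ⟨fun h => (childless_eq_empty_iff h.1.2.2).1 h.2, ?_⟩).trans
      signedCount_eq_empty
    rintro rfl
    exact ⟨⟨Finset.empty_subset _, F.ok_empty, not_hasCycle_empty⟩, rfl⟩
  rw [← only_empty, signedCount_and_eq_empty,
    ← Finset.sum_subset (Finset.subset_univ (Finset.image (fiberUnion k B)
      {J | J ⊆ S ∧ StepIndep {1} J})), Finset.sum_image F.fiberUnion_injective.injOn]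
  · refine Finset.sum_congr rfl fun J hJ => ?_
    obtain ⟨hJS, hJ⟩ := (Finset.mem_filter.1 hJ).2
    rw [F.signedCount_fiberUnion_subset_childless hJS hJ, ← mul_assoc, ← mul_pow, neg_one_mul,
      neg_neg, one_pow, one_mul]
  · intro M _ hM
    by_cases ht : ∀ p ∈ M, p + t ∈ M
    · rw [signedCount_eq_zero, mul_zero]
      rintro σ ⟨hMσ, hσ, -, -⟩
      have hMS := hMσ.trans (childless_subset.trans hσ)
      have hMk := F.fiberUnion_image (hMS.trans fiberUnion_subset) ht
      refine hM (Finset.mem_image.2 ⟨M.image k, Finset.mem_filter.2 ⟨Finset.mem_univ _, ?_, ?_⟩,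
        hMk⟩)
      · exact Finset.image_subset_iff.2 fun p hp => (mem_fiberUnion.1 (hMS hp)).2
      · refine F.stepIndep_of_fiberUnion_subset_childless (fun j hj => ?_) (hMk.symm ▸ hMσ)
        obtain ⟨p, hp, rfl⟩ := Finset.mem_image.1 hj
        exact ⟨p, fiberUnion_subset (hMS hp), rfl⟩
    · push Not at ht
      obtain ⟨p, hp, hpt⟩ := ht
      rw [F.signedCount_subset_childless_eq_zero hp hpt, mul_zero]

theorem signedCount_acyclic [NeZero d] :
    signedCount (fun σ => σ ⊆ B ∧ ok σ ∧ ¬ HasCycle a c σ) = (-1) ^ d * theta (d : ℤ) := by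
  have h := eq_indepCount_of_sum_removeNbhd (D := {1}) (fun S : Finset (ZMod d) =>
    signedCount fun σ => σ ⊆ fiberUnion k B S ∧ ok σ ∧ ¬ HasCycle a c σ)
    (fun S => by convert F.sum_signedCount_fiberUnion_removeNbhd S) Finset.univ
  simpa [fiberUnion, indepCount_one_univ] using h

end DiagonalFibration

end DiagonalFibration

/-! ### Independent sets of a grid -/

section GridSteps

variable {V : Type*} [AddCommGroup V]

/-- The rhombus edge vector `(1, 2)`. -/
def neSteep (i j : V) : V := i + 2 • j

/-- The rhombus edge vector `(2, 1)`. -/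
def neFlat (i j : V) : V := 2 • i + j

/-- The rhombus edge vector `(-1, 2)`. -/
def nwSteep (i j : V) : V := 2 • j - i

/-- The rhombus edge vector `(-2, 1)`. -/
def nwFlat (i j : V) : V := j - 2 • i

/-- `σ` is an independent set of the grid graph on `V` with edges `p — p + i` and `p — p + j`. -/
abbrev GridIndep (i j : V) (σ : Finset V) : Prop :=
  StepIndep {i, j} σ

/-- `σ` contains a cycle of north-east steps. -/
abbrev HasNECycle (i j : V) (σ : Finset V) : Prop :=
  HasCycle (neSteep i j) (neFlat i j) σ

/-- The points of `σ` whose north-west neighbours are both missing from `σ`. -/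
abbrev nwChildless [DecidableEq V] (i j : V) (σ : Finset V) : Finset V :=
  childless (nwSteep i j) (nwFlat i j) σ

variable {i j p q x : V} {σ τ K : Finset V}

theorem gridIndep_iff : GridIndep i j σ ↔ ∀ p ∈ σ, p + i ∉ σ ∧ p + j ∉ σ := by
  simp [GridIndep, StepIndep]

theorem GridIndep.not_adjacent (h : GridIndep i j σ) (hp : p ∈ σ) (hq : q ∈ σ) :
    ¬ (q - p = i ∨ p - q = i ∨ q - p = j ∨ p - q = j) := by
  rw [gridIndep_iff] at h
  rintro (rfl | rfl | rfl | rfl)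
  · exact (h p hp).1 (by simpa using hq)
  · exact (h q hq).1 (by simpa using hp)
  · exact (h p hp).2 (by simpa using hq)
  · exact (h q hq).2 (by simpa using hp)

theorem GridIndep.insert_of_notMem [DecidableEq V] (h : GridIndep i j σ) (hi : i ≠ 0) (hj : j ≠ 0)
    (hxi : x + i ∉ σ) (hxi' : x - i ∉ σ) (hxj : x + j ∉ σ) (hxj' : x - j ∉ σ) :
    GridIndep i j (insert x σ) := by
  rw [GridIndep, Finset.insert_eq, Finset.union_comm, stepIndep_union_iff]
  exact ⟨h, stepIndep_singleton (by simp [hi.symm, hj.symm]), by simp [*]⟩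

/-- The homomorphism `k : V → ℤ/d` numbers the diagonals, that is the cosets of `i + j`, of the grid
generated by `i` and `j`. -/
structure DiagonalIndex {d : ℕ} (i j : V) (k : V →+ ZMod d) : Prop where
  apply_left : k i = 1
  apply_right : k j = -1
  ker_le : k.ker ≤ AddSubgroup.zmultiples (i + j)

namespace DiagonalIndex

variable {d : ℕ} {k : V →+ ZMod d} (hk : DiagonalIndex i j k)
include hk

theorem closure_eq_top [NeZero d] : AddSubgroup.closure {i, j} = ⊤ := by
  refine (AddSubgroup.eq_top_iff' _).2 fun x => AddSubgroup.mem_closure_pair.2 ?_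
  have hx : x - (k x).val • i ∈ k.ker := by
    rw [AddMonoidHom.mem_ker, map_sub, map_nsmul, hk.apply_left, nsmul_one,
      ZMod.natCast_rightInverse, sub_self]
  obtain ⟨n, hn⟩ := AddSubgroup.mem_zmultiples_iff.1 (hk.ker_le hx)
  refine ⟨(k x).val + n, n, ?_⟩
  rw [add_smul, natCast_zsmul, add_assoc, ← smul_add, hn, add_sub_cancel]

theorem exists_zsmul (h : k p = k q) : ∃ n : ℤ, q = p + n • (i + j) := by
  obtain ⟨n, hn⟩ := AddSubgroup.mem_zmultiples_iff.1
    (hk.ker_le (show q - p ∈ k.ker by rw [AddMonoidHom.mem_ker, map_sub, h, sub_self]))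
  exact ⟨n, by rw [hn, add_sub_cancel]⟩

theorem apply_sub_neSteep (y : V) : k (y - neSteep i j) = k y + 1 := by
  simp only [neSteep, map_sub, map_add, map_nsmul, hk.apply_left, hk.apply_right]
  ring

theorem apply_sub_neFlat (y : V) : k (y - neFlat i j) = k y - 1 := by
  simp only [neFlat, map_sub, map_add, map_nsmul, hk.apply_left, hk.apply_right]
  ring

theorem gridIndep_fiberUnion_union [Fintype V] [DecidableEq V] {J : Finset (ZMod d)}
    (hJ : StepIndep {1} J) (hJσ : ∀ y ∈ σ, k y ∉ J ∧ k y + 1 ∉ J ∧ k y - 1 ∉ J)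
    (hσ : GridIndep i j σ) : GridIndep i j (fiberUnion k Finset.univ J ∪ σ) := by
  refine stepIndep_union_iff.2 ⟨gridIndep_iff.2 fun p hp => ?_, hσ, fun y hy s hs => ?_⟩
  · simp only [mem_fiberUnion, Finset.mem_univ, true_and, map_add, hk.apply_left,
      hk.apply_right] at hp ⊢
    exact ⟨hJ _ hp 1 rfl, fun h => hJ _ h 1 rfl (by simpa using hp)⟩
  · simp only [mem_fiberUnion, Finset.mem_univ, true_and, map_add, map_sub]
    obtain rfl | rfl := hs
    · rw [hk.apply_left]
      exact (hJσ y hy).2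
    · rw [hk.apply_right, sub_neg_eq_add, ← sub_eq_add_neg]
      exact (hJσ y hy).2.symm

end DiagonalIndex

theorem exists_nsmul_eq_zsmul [Finite V] (t : V) (n : ℤ) : ∃ m : ℕ, m • t = n • t := by
  have hmem : n • t ∈ AddSubmonoid.multiples t :=
    mem_multiples_iff_mem_zmultiples.2 (AddSubgroup.zsmul_mem_zmultiples t n)
  exact hmem

theorem DiagonalIndex.signedCount_gridIndep_acyclic [Fintype V] {d : ℕ} [NeZero d]
    {k : V →+ ZMod d} (hk : DiagonalIndex i j k) (hi : i ≠ 0) (hj : j ≠ 0)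
    (hsteep : neSteep i j ≠ 0) (hflat : neFlat i j ≠ 0) :
    signedCount (fun σ => GridIndep i j σ ∧ ¬ HasNECycle i j σ) =
      (-1) ^ d * theta d := by
  classical
  have F : DiagonalFibration (neSteep i j) (neFlat i j) (i + j) Finset.univ (GridIndep i j) k :=
    { left_ne_zero := hsteep
      right_ne_zero := hflat
      nonempty := Finset.univ_nonempty
      add_mem := fun _ _ => Finset.mem_univ _
      sub_left_mem := fun _ _ => Finset.mem_univ _
      sub_right_mem := fun _ _ => Finset.mem_univ _
      apply_sub_left := hk.apply_sub_neSteep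
      apply_sub_right := hk.apply_sub_neFlat
      apply_add := fun y => by simp [hk.apply_left, hk.apply_right]
      exists_nsmul := fun p _ q _ hpq => by
        obtain ⟨n, hn⟩ := hk.exists_zsmul hpq
        obtain ⟨m, hm⟩ := exists_nsmul_eq_zsmul (i + j) n
        exact ⟨m, by rw [hm, hn]⟩
      ok_empty := stepIndep_empty
      ok_mono := StepIndep.mono
      ok_insert := fun {σ} _ hσ p hp => by
        obtain ⟨hpσ, hps, hpf⟩ := mem_childless.1 hp
        have below : p + (i + j) - neSteep i j = p - j := by simp only [neSteep]; abel
        have left : p + (i + j) - neFlat i j = p - i := by simp only [neFlat]; abel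
        have above : p + (i + j) + j = p + neSteep i j := by simp only [neSteep]; abel
        have right : p + (i + j) + i = p + neFlat i j := by simp only [neFlat]; abel
        rw [below, left]
        refine ⟨GridIndep.insert_of_notMem hσ hi hj (right ▸ hpf) (fun h => ?_) (above ▸ hps)
          (fun h => ?_), fun h => ?_, fun h => ?_⟩ <;>
        exact GridIndep.not_adjacent hσ hpσ h (by grind)
      ok_union := fun hJ hJτ _ hτ => hk.gridIndep_fiberUnion_union hJ hJτ hτ }
  simpa using F.signedCount_acyclic

end GridSteps

/-! ### Level sets -/

section LevelSet

variable {V : Type*} [AddCommGroup V] {i j p q : V} {σ K : Finset V}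

/-- A level set of the function `(x, y) ↦ x + y mod 3` on the grid, characterised by closure
properties. Level sets exist if and only if this function is well defined on `V`. -/
structure IsLevelSet (i j : V) (K : Finset V) : Prop where
  nonempty : K.Nonempty
  gridIndep : GridIndep i j K
  add_mem : ∀ p ∈ K, p + (j - i) ∈ K
  add_ne_mem : ∀ p ∈ K, p + neSteep i j ∈ K ∨ p + neFlat i j ∈ K

theorem add_zsmul_induction [Finite V] {t : V} {Q : V → Prop} (h : ∀ p, Q p → Q (p + t)) (n : ℤ) :
    ∀ p, Q p → Q (p + n • t) := by
  obtain ⟨m, hm⟩ := exists_nsmul_eq_zsmul t n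
  rw [← hm]
  clear hm
  induction m with
  | zero => simp
  | succ m ih =>
    intro p hp
    rw [succ_nsmul, ← add_assoc]
    exact h _ (ih p hp)

namespace IsLevelSet

variable [Finite V] (hK : IsLevelSet i j K)
include hK

theorem add_zsmul_add_zsmul_mem (hp : p ∈ K) {m n : ℤ} (hmn : 3 ∣ m + n) :
    p + (m • i + n • j) ∈ K := by
  have hanti := fun n : ℤ => add_zsmul_induction hK.add_mem n
  have htriple : ∀ p ∈ K, p + 3 • j ∈ K := fun p hp => by
    rcases hK.add_ne_mem p hp with h | h
    · convert hanti 1 _ h using 1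
      simp only [neSteep]
      module
    · convert hanti 2 _ h using 1
      simp only [neFlat]
      module
  obtain ⟨l, hl⟩ := hmn
  convert add_zsmul_induction htriple l _ (hanti (-m) p hp) using 1
  rw [eq_sub_of_add_eq' hl]
  module

theorem add_zsmul_add_zsmul_mem_iff (hp : p ∈ K) {m n : ℤ} :
    p + (m • i + n • j) ∈ K ↔ 3 ∣ m + n := by
  refine ⟨fun hmem => ?_, hK.add_zsmul_add_zsmul_mem hp⟩
  by_contra h3
  have : 3 ∣ -m + (1 - n) ∨ 3 ∣ -m + (-1 - n) := by omega
  rcases this with h | h <;>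
  · refine hK.gridIndep.not_adjacent hp (hK.add_zsmul_add_zsmul_mem hmem h) ?_
    first
    | exact Or.inr (Or.inr (Or.inl (by module)))
    | exact Or.inr (Or.inr (Or.inr (by module)))

theorem subset_childless [DecidableEq V] : K ⊆ nwChildless i j K := by
  refine fun p hp => mem_childless.2 ⟨hp, fun h => ?_, fun h => ?_⟩
  · have : (3 : ℤ) ∣ -1 + 2 := (hK.add_zsmul_add_zsmul_mem_iff hp).1 (by
      convert h using 2
      simp only [nwSteep]
      module)
    omega
  · have : (3 : ℤ) ∣ -2 + 1 := (hK.add_zsmul_add_zsmul_mem_iff hp).1 (by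
      convert h using 2
      simp only [nwFlat]
      module)
    omega

theorem diagonalFibration [DecidableEq V] {d : ℕ} {k : V →+ ZMod d} (hk : DiagonalIndex i j k)
    (hsteep : neSteep i j ≠ 0) (hflat : neFlat i j ≠ 0) :
    DiagonalFibration (neSteep i j) (neFlat i j) ((3 : ℤ) • (i + j)) K (fun _ => True) k where
  left_ne_zero := hsteep
  right_ne_zero := hflat
  nonempty := hK.nonempty
  add_mem := fun y hy => by
    rw [smul_add]
    exact hK.add_zsmul_add_zsmul_mem hy (by norm_num)
  sub_left_mem := fun y hy => by
    convert hK.add_zsmul_add_zsmul_mem hy (m := -1) (n := -2) (by norm_num) using 1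
    simp only [neSteep]
    module
  sub_right_mem := fun y hy => by
    convert hK.add_zsmul_add_zsmul_mem hy (m := -2) (n := -1) (by norm_num) using 1
    simp only [neFlat]
    module
  apply_sub_left := hk.apply_sub_neSteep
  apply_sub_right := hk.apply_sub_neFlat
  apply_add := fun y => by simp [hk.apply_left, hk.apply_right]
  exists_nsmul := fun p hp q hq hpq => by
    obtain ⟨n, rfl⟩ := hk.exists_zsmul hpq
    rw [smul_add, hK.add_zsmul_add_zsmul_mem_iff hp] at hq
    obtain ⟨l, rfl⟩ : (3 : ℤ) ∣ n := by omega
    obtain ⟨m, hm⟩ := exists_nsmul_eq_zsmul ((3 : ℤ) • (i + j)) l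
    exact ⟨m, by rw [hm, smul_smul, mul_comm]⟩
  ok_empty := trivial
  ok_mono := fun _ _ => trivial
  ok_insert := fun {σ} _ _ p hp => by
    obtain ⟨-, hps, hpf⟩ := mem_childless.1 hp
    have : p + (3 : ℤ) • (i + j) - neSteep i j = p + neFlat i j := by
      simp only [neSteep, neFlat]
      module
    have : p + (3 : ℤ) • (i + j) - neFlat i j = p + neSteep i j := by
      simp only [neSteep, neFlat]
      module
    simp_all
  ok_union := fun _ _ _ _ => trivial

theorem signedCount_acyclic [Fintype V] {d : ℕ} [NeZero d] {k : V →+ ZMod d}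
    (hk : DiagonalIndex i j k) (hsteep : neSteep i j ≠ 0) (hflat : neFlat i j ≠ 0) :
    signedCount (fun σ => σ ⊆ K ∧ ¬ HasNECycle i j σ) =
      (-1) ^ d * theta d := by
  classical
  simpa using (hK.diagonalFibration hk hsteep hflat).signedCount_acyclic

theorem eq_of_subset (hgen : AddSubgroup.closure {i, j} = ⊤) (hKσ : K ⊆ σ)
    (hσ : GridIndep i j σ) : σ = K := by
  refine Finset.Subset.antisymm (fun q hq => ?_) hKσ
  obtain ⟨p, hp⟩ := hK.nonempty
  obtain ⟨m, n, hmn⟩ := AddSubgroup.mem_closure_pair.1 (hgen ▸ AddSubgroup.mem_top (q - p))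
  obtain rfl : p + (m • i + n • j) = q := by rw [hmn, add_sub_cancel]
  have h3 : 3 ∣ m + n ∨ 3 ∣ m + (n + 1) ∨ 3 ∣ m + (n - 1) := by omega
  rcases h3 with h3 | h3 | h3
  · exact hK.add_zsmul_add_zsmul_mem hp h3
  · exact (hσ.not_adjacent hq (hKσ (hK.add_zsmul_add_zsmul_mem hp h3))
      (Or.inr (Or.inr (Or.inl (by module))))).elim
  · exact (hσ.not_adjacent hq (hKσ (hK.add_zsmul_add_zsmul_mem hp h3))
      (Or.inr (Or.inr (Or.inr (by module))))).elim

end IsLevelSet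

theorem not_isLevelSet_of_zsmul_add_zsmul_eq_zero [Finite V] {m n : ℤ} (h0 : m • i + n • j = 0)
    (h3 : ¬ 3 ∣ m + n) : ¬ IsLevelSet i j K := by
  intro hK
  obtain ⟨p, hp⟩ := hK.nonempty
  exact h3 ((hK.add_zsmul_add_zsmul_mem_iff hp).1 (by rwa [h0, add_zero]))

section Height

variable {l : V →+ ZMod 3} (hi : l i = 1) (hj : l j = 1)
include hi

theorem apply_val_nsmul_eq_self (r : ZMod 3) : l (r.val • i) = r := by
  rw [map_nsmul, hi, nsmul_one, ZMod.natCast_rightInverse]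

variable [Fintype V]

theorem fiber_injective : Function.Injective fun r : ZMod 3 => ({x | l x = r} : Finset V) := by
  intro r r' h
  have : r.val • i ∈ ({x | l x = r'} : Finset V) := by
    simp only at h
    rw [← h]
    simpa using apply_val_nsmul_eq_self hi r
  rw [← (Finset.mem_filter.1 this).2, apply_val_nsmul_eq_self hi]

include hj

theorem isLevelSet_fiber (r : ZMod 3) : IsLevelSet i j ({x | l x = r} : Finset V) where
  nonempty := ⟨r.val • i, by simpa using apply_val_nsmul_eq_self hi r⟩
  gridIndep := by simp +contextual [gridIndep_iff, hi, hj]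
  add_mem := by simp [hi, hj]
  add_ne_mem := by
    have three : (1 : ZMod 3) + 2 = 0 := by decide
    simp +contextual [neSteep, hi, hj, three]

theorem isLevelSet_iff_exists_fiber (hgen : AddSubgroup.closure {i, j} = ⊤) :
    IsLevelSet i j K ↔ ∃ r, ({x | l x = r} : Finset V) = K := by
  refine ⟨fun hK => ?_, fun ⟨r, hr⟩ => hr ▸ isLevelSet_fiber hi hj r⟩
  obtain ⟨p, hp⟩ := hK.nonempty
  refine ⟨l p, ?_⟩
  ext q
  obtain ⟨m, n, hmn⟩ := AddSubgroup.mem_closure_pair.1 (hgen ▸ AddSubgroup.mem_top (q - p))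
  obtain rfl : p + (m • i + n • j) = q := by rw [hmn, add_sub_cancel]
  rw [hK.add_zsmul_add_zsmul_mem_iff hp]
  simpa [hi, hj] using ZMod.intCast_zmod_eq_zero_iff_dvd (m + n) 3

open Classical in
theorem card_isLevelSet (hgen : AddSubgroup.closure {i, j} = ⊤) :
    Finset.card {K | IsLevelSet i j K} = 3 := by
  simp only [isLevelSet_iff_exists_fiber hi hj hgen]
  rw [Finset.univ_filter_exists, Finset.card_image_of_injective _ (fiber_injective hi),
    Finset.card_univ, ZMod.card]

end Height

end LevelSet

/-! ### Conditioning on the elements without north-west children -/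

section NorthWest

variable {V : Type*} [AddCommGroup V] [DecidableEq V] {i j p : V} {σ K : Finset V}

theorem GridIndep.insert_of_mem_childless (h : GridIndep i j σ) (hi : i ≠ 0) (hj : j ≠ 0)
    (hp : p ∈ nwChildless i j σ) : GridIndep i j (insert (p + (j - i)) σ) := by
  obtain ⟨hpσ, hps, hpf⟩ := mem_childless.1 hp
  have above : p + (j - i) + j = p + nwSteep i j := by simp only [nwSteep]; abel
  have left : p + (j - i) - i = p + nwFlat i j := by simp only [nwFlat]; abel
  refine h.insert_of_notMem hi hj (fun hmem => ?_) (left ▸ hpf) (above ▸ hps) (fun hmem => ?_) <;>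
  exact h.not_adjacent hpσ hmem (by grind)

theorem GridIndep.childless_subset_insert (h : GridIndep i j σ) (hp : p ∈ σ) :
    nwChildless i j σ ⊆ nwChildless i j (insert (p + (j - i)) σ) := by
  have below : p + (j - i) - nwSteep i j = p - j := by simp only [nwSteep]; abel
  have right : p + (j - i) - nwFlat i j = p + i := by simp only [nwFlat]; abel
  apply childless_subset_childless_insert
  · rw [below]
    exact fun hmem => h.not_adjacent hp hmem (by simp)
  · rw [right]
    exact fun hmem => h.not_adjacent hp hmem (by simp)

theorem isLevelSet_of_subset_childless (hne : K.Nonempty) (hσ : GridIndep i j σ)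
    (hKσ : K ⊆ nwChildless i j σ) (hanti : ∀ p ∈ K, p + (j - i) ∈ K)
    (hempty : childless (neSteep i j) (neFlat i j) K = ∅) : IsLevelSet i j K where
  nonempty := hne
  gridIndep := hσ.mono (hKσ.trans childless_subset)
  add_mem := hanti
  add_ne_mem p hp := by
    by_contra! h
    simpa [hempty] using mem_childless.2 ⟨hp, h⟩

variable [Fintype V]

theorem signedCount_subset_childless_eq_zero (hi : i ≠ 0) (hj : j ≠ 0) (hp : p ∈ K)
    (hpK : p + (j - i) ∉ K) :
    signedCount (fun σ => K ⊆ nwChildless i j σ ∧ GridIndep i j σ) = 0 := by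
  refine signedCount_eq_zero_of_insert_iff (p + (j - i)) fun σ _ => ⟨fun ⟨hK, hσ⟩ => ?_,
    fun ⟨hK, hσ⟩ => ⟨subset_childless_of_insert hpK hK, hσ.mono (Finset.subset_insert _ _)⟩⟩
  exact ⟨hK.trans (GridIndep.childless_subset_insert hσ (childless_subset (hK hp))),
    GridIndep.insert_of_mem_childless hσ hi hj (hK hp)⟩

theorem signedCount_subset_acyclic_eq_zero {a c y : V} (hy : y ∈ childless a c K) :
    signedCount (fun σ => σ ⊆ K ∧ ¬ HasCycle a c σ) = 0 := by
  obtain ⟨hyK, hya, hyc⟩ := mem_childless.1 hy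
  refine signedCount_eq_zero_of_insert_iff y fun σ hyσ => ?_
  rw [Finset.insert_subset_iff, and_iff_right hyK]
  refine and_congr_right fun hσ => not_congr
    ⟨fun h => h.mono (Finset.subset_insert _ _), fun h => ?_⟩
  rw [← Finset.erase_insert hyσ, Finset.erase_eq]
  refine h.sdiff_childless (Finset.singleton_subset_iff.2 (mem_childless.2
    ⟨Finset.mem_insert_self _ _, ?_, ?_⟩))
  · exact fun hmem => hya (Finset.insert_subset hyK hσ hmem)
  · exact fun hmem => hyc (Finset.insert_subset hyK hσ hmem)

theorem IsLevelSet.signedCount_subset_childless (hK : IsLevelSet i j K)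
    (hgen : AddSubgroup.closure {i, j} = ⊤) :
    signedCount (fun σ => K ⊆ nwChildless i j σ ∧ GridIndep i j σ) =
      (-1) ^ K.card := by
  rw [signedCount_congr (R := fun σ => K ⊆ σ ∧ σ ⊆ K)]
  · rw [signedCount_between, if_pos rfl]
  · refine fun σ => ⟨fun ⟨hKσ, hσ⟩ => ?_, fun ⟨hKσ, hσK⟩ => ?_⟩
    · have hKσ' := hKσ.trans childless_subset
      exact ⟨hKσ', (hK.eq_of_subset hgen hKσ' hσ).subset⟩
    · rw [Finset.Subset.antisymm hσK hKσ]
      exact ⟨hK.subset_childless, hK.gridIndep⟩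

open Classical in
theorem signedCount_acyclic_childless_term (hi : i ≠ 0) (hj : j ≠ 0)
    (hgen : AddSubgroup.closure {i, j} = ⊤) (K : Finset V) :
    signedCount (fun σ => σ ⊆ K ∧ ¬ HasNECycle i j σ) * ((-1) ^ K.card *
      signedCount (fun σ => K ⊆ nwChildless i j σ ∧ GridIndep i j σ)) =
    (if K = ∅ then signedCount (GridIndep i j) else 0) +
      if IsLevelSet i j K then
        signedCount (fun σ => σ ⊆ K ∧ ¬ HasNECycle i j σ) else 0 := by
  by_cases hK : IsLevelSet i j K
  · rw [hK.signedCount_subset_childless hgen, ← mul_pow]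
    simp [hK, hK.nonempty.ne_empty]
  rw [if_neg hK, add_zero]
  obtain rfl | hne := K.eq_empty_or_nonempty
  · have hacyclic : ∀ σ : Finset V,
        σ ⊆ ∅ ∧ ¬ HasNECycle i j σ ↔ σ = ∅ := by
      simp +contextual [Finset.subset_empty, not_hasCycle_empty]
    rw [signedCount_congr hacyclic, signedCount_eq_empty]
    simp
  rw [if_neg hne.ne_empty]
  by_cases hanti : ∀ p ∈ K, p + (j - i) ∈ K
  · obtain hempty | ⟨y, hy⟩ := (childless (neSteep i j) (neFlat i j) K).eq_empty_or_nonempty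
    · have hnone : ∀ σ, ¬ (K ⊆ nwChildless i j σ ∧ GridIndep i j σ) :=
        fun σ ⟨hKσ, hσ⟩ => hK (isLevelSet_of_subset_childless hne hσ hKσ hanti hempty)
      rw [signedCount_eq_zero hnone, mul_zero, mul_zero]
    · rw [signedCount_subset_acyclic_eq_zero hy, zero_mul]
  · push Not at hanti
    obtain ⟨p, hp, hpK⟩ := hanti
    rw [signedCount_subset_childless_eq_zero hi hj hp hpK, mul_zero, mul_zero]

open Classical in
theorem signedCount_acyclic_childless (hi : i ≠ 0) (hj : j ≠ 0)
    (hgen : AddSubgroup.closure {i, j} = ⊤) :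
    signedCount (fun σ => GridIndep i j σ ∧
      ¬ HasNECycle i j (nwChildless i j σ)) =
    signedCount (GridIndep i j) + ∑ K : Finset V with IsLevelSet i j K,
      signedCount (fun σ => σ ⊆ K ∧ ¬ HasNECycle i j σ) := by
  rw [signedCount_and_comp (GridIndep i j) (fun σ => ¬ HasNECycle i j σ),
    Finset.sum_congr rfl fun K _ => signedCount_acyclic_childless_term hi hj hgen K,
    Finset.sum_add_distrib, Finset.sum_filter]
  simp

end NorthWest

/-! ### Recurrent points -/

section Recurrent

open Function

theorem exists_mem_periodicPts {α : Type*} [Finite α] [Nonempty α] (f : α → α) :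
    ∃ x, x ∈ periodicPts f := by
  let x : α := Classical.arbitrary α
  obtain ⟨m, n, hmn, h⟩ := Set.finite_univ.exists_lt_map_eq_of_forall_mem
    (f := fun n => f^[n] x) fun _ => Set.mem_univ _
  refine ⟨f^[m] x, mk_mem_periodicPts (Nat.sub_pos_of_lt hmn) ?_⟩
  rw [IsPeriodicPt, IsFixedPt, ← iterate_add_apply, Nat.sub_add_cancel hmn.le]
  exact h.symm

theorem subset_periodicPts_of_injOn {α : Type*} {f : α → α} {s : Set α} (hs : s.Finite)
    (hmaps : Set.MapsTo f s s) (hinj : Set.InjOn f s) : s ⊆ periodicPts f := by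
  have := hs.to_subtype
  have hsemi : Semiconj Subtype.val (hmaps.restrict f s s) f := fun _ => rfl
  exact fun x hx => hsemi.mapsTo_periodicPts
    ((hmaps.restrict_inj.2 hinj).mem_periodicPts ⟨x, hx⟩)

variable {V : Type*} [AddCommGroup V] [Fintype V] {a c x y : V} {σ τ N R : Finset V}

open Classical in
/-- The largest subset of `σ` in which every `y` has one of `y + a` and `y + c` as a child. -/
noncomputable def cyclicCore (a c : V) (σ : Finset V) : Finset V :=
  {x | ∃ N ⊆ σ, x ∈ N ∧ ∀ y ∈ N, y + a ∈ N ∨ y + c ∈ N}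

theorem subset_cyclicCore (hNσ : N ⊆ σ) (hN : ∀ y ∈ N, y + a ∈ N ∨ y + c ∈ N) :
    N ⊆ cyclicCore a c σ := fun x hx => by
  simpa [cyclicCore] using ⟨N, hNσ, hx, hN⟩

theorem exists_subset_of_mem_cyclicCore (hx : x ∈ cyclicCore a c σ) :
    ∃ N ⊆ σ, x ∈ N ∧ ∀ y ∈ N, y + a ∈ N ∨ y + c ∈ N := by
  simpa [cyclicCore] using hx

theorem cyclicCore_subset : cyclicCore a c σ ⊆ σ := fun _ hx =>
  let ⟨_, hNσ, hxN, _⟩ := exists_subset_of_mem_cyclicCore hx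
  hNσ hxN

theorem cyclicCore_mono (h : σ ⊆ τ) : cyclicCore a c σ ⊆ cyclicCore a c τ := fun _ hx =>
  let ⟨_, hNσ, hxN, hN⟩ := exists_subset_of_mem_cyclicCore hx
  subset_cyclicCore (hNσ.trans h) hN hxN

theorem add_mem_cyclicCore (hx : x ∈ cyclicCore a c σ) :
    x + a ∈ cyclicCore a c σ ∨ x + c ∈ cyclicCore a c σ :=
  let ⟨_, hNσ, hxN, hN⟩ := exists_subset_of_mem_cyclicCore hx
  (hN x hxN).imp (subset_cyclicCore hNσ hN ·) (subset_cyclicCore hNσ hN ·)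

open Classical in
/-- A choice of child inside the cyclic core: the child `y + c` is preferred. -/
noncomputable def coreStep (a c : V) (σ : Finset V) (y : V) : V :=
  if y + c ∈ cyclicCore a c σ then y + c else y + a

theorem coreStep_of_mem (h : y + c ∈ cyclicCore a c σ) : coreStep a c σ y = y + c :=
  if_pos h

theorem coreStep_of_notMem (h : y + c ∉ cyclicCore a c σ) : coreStep a c σ y = y + a :=
  if_neg h

theorem coreStep_eq_or_eq (y : V) : coreStep a c σ y = y + a ∨ coreStep a c σ y = y + c := by
  by_cases h : y + c ∈ cyclicCore a c σ
  · exact .inr (coreStep_of_mem h)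
  · exact .inl (coreStep_of_notMem h)

theorem coreStep_mem_cyclicCore (hx : x ∈ cyclicCore a c σ) :
    coreStep a c σ x ∈ cyclicCore a c σ := by
  by_cases h : x + c ∈ cyclicCore a c σ
  · rwa [coreStep_of_mem h]
  · rw [coreStep_of_notMem h]
    exact (add_mem_cyclicCore hx).resolve_right h

open Classical in
/-- The points of the cyclic core lying on a cycle of the preferred child map. -/
noncomputable def recurrent (a c : V) (σ : Finset V) : Finset V :=
  {x ∈ cyclicCore a c σ | x ∈ periodicPts (coreStep a c σ)}

theorem mem_recurrent :
    x ∈ recurrent a c σ ↔ x ∈ cyclicCore a c σ ∧ x ∈ periodicPts (coreStep a c σ) := by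
  simp [recurrent]

theorem recurrent_subset_cyclicCore : recurrent a c σ ⊆ cyclicCore a c σ := fun _ hx =>
  (mem_recurrent.1 hx).1

theorem recurrent_subset : recurrent a c σ ⊆ σ :=
  recurrent_subset_cyclicCore.trans cyclicCore_subset

theorem coreStep_mem_recurrent (hx : x ∈ recurrent a c σ) : coreStep a c σ x ∈ recurrent a c σ :=
  have hx := mem_recurrent.1 hx
  mem_recurrent.2 ⟨coreStep_mem_cyclicCore hx.1, (bijOn_periodicPts _).mapsTo hx.2⟩

theorem injOn_coreStep_recurrent : Set.InjOn (coreStep a c σ) (recurrent a c σ) :=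
  (bijOn_periodicPts _).injOn.mono fun _ hx => (mem_recurrent.1 hx).2

theorem exists_mem_coreStep_eq (hR : R ⊆ recurrent a c σ) (hstep : ∀ y ∈ R, coreStep a c σ y ∈ R)
    (hx : x ∈ R) : ∃ y ∈ R, coreStep a c σ y = x :=
  Finset.surjOn_of_injOn_of_card_le _ hstep (injOn_coreStep_recurrent.mono hR) le_rfl hx

theorem exists_recurrent_coreStep_eq (hx : x ∈ recurrent a c σ) :
    ∃ y ∈ recurrent a c σ, coreStep a c σ y = x :=
  exists_mem_coreStep_eq subset_rfl (fun _ => coreStep_mem_recurrent) hx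

theorem mem_of_coreStep_mem (hR : R ⊆ recurrent a c σ) (hstep : ∀ y ∈ R, coreStep a c σ y ∈ R)
    (hx : x ∈ recurrent a c σ) (hxR : coreStep a c σ x ∈ R) : x ∈ R := by
  obtain ⟨y, hy, hyx⟩ := exists_mem_coreStep_eq hR hstep hxR
  rwa [← injOn_coreStep_recurrent (hR hy) hx hyx]

theorem subset_recurrent (hR : R ⊆ cyclicCore a c σ) (hstep : ∀ y ∈ R, coreStep a c σ y ∈ R)
    (hinj : Set.InjOn (coreStep a c σ) R) : R ⊆ recurrent a c σ := fun _ hx =>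
  mem_recurrent.2 ⟨hR hx, subset_periodicPts_of_injOn R.finite_toSet hstep hinj hx⟩

theorem add_mem_recurrent (hx : x ∈ recurrent a c σ) :
    x + a ∈ recurrent a c σ ∨ x + c ∈ recurrent a c σ := by
  have := coreStep_mem_recurrent hx
  rcases coreStep_eq_or_eq (a := a) (c := c) (σ := σ) x with h | h <;> rw [h] at this
  · exact .inl this
  · exact .inr this

theorem sub_mem_recurrent (hx : x ∈ recurrent a c σ) :
    x - a ∈ recurrent a c σ ∨ x - c ∈ recurrent a c σ := by
  obtain ⟨y, hy, rfl⟩ := exists_recurrent_coreStep_eq hx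
  rcases coreStep_eq_or_eq (a := a) (c := c) (σ := σ) y with h | h <;> rw [h]
  · exact .inl (by simpa using hy)
  · exact .inr (by simpa using hy)

theorem hasCycle_iff_recurrent_nonempty : HasCycle a c σ ↔ (recurrent a c σ).Nonempty := by
  refine ⟨fun ⟨N, hNσ, ⟨x, hx⟩, hN⟩ => ?_, fun h =>
    ⟨_, recurrent_subset, h, fun y hy => add_mem_recurrent hy⟩⟩
  have : Nonempty (cyclicCore a c σ) := ⟨x, subset_cyclicCore hNσ hN hx⟩
  have hmaps : Set.MapsTo (coreStep a c σ) (cyclicCore a c σ) (cyclicCore a c σ) := fun _ =>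
    coreStep_mem_cyclicCore
  have hsemi : Semiconj Subtype.val (hmaps.restrict (coreStep a c σ) _ _) (coreStep a c σ) :=
    fun _ => rfl
  obtain ⟨y, hy⟩ := exists_mem_periodicPts (hmaps.restrict (coreStep a c σ) _ _)
  exact ⟨y, mem_recurrent.2 ⟨y.2, hsemi.mapsTo_periodicPts hy⟩⟩

theorem add_mem_recurrent_of_invariant {b : V} (hR : R ⊆ recurrent a c σ)
    (hstep : ∀ y ∈ R, coreStep a c σ y ∈ R) (hb : ∀ y ∈ R, y + b ∈ σ)
    (hc : ∀ y ∈ R, coreStep a c σ y = y + a → y + b + c ∉ σ) :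
    ∀ y ∈ R, y + b ∈ recurrent a c σ := by
  classical
  have hclosed : ∀ y ∈ R, coreStep a c σ y + b ∈ R.image (· + b) := fun y hy =>
    Finset.mem_image_of_mem (· + b) (hstep y hy)
  have hcore : R.image (· + b) ⊆ cyclicCore a c σ := by
    refine subset_cyclicCore (Finset.image_subset_iff.2 hb)
      (Finset.forall_mem_image.2 fun y hy => ?_)
    have := hclosed y hy
    rcases coreStep_eq_or_eq (a := a) (c := c) (σ := σ) y with h | h <;>
    rw [h, add_right_comm] at this
    · exact .inl this
    · exact .inr this
  have hcomm : ∀ y ∈ R, coreStep a c σ (y + b) = coreStep a c σ y + b := fun y hy => by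
    have hmem := hcore (hclosed y hy)
    rcases coreStep_eq_or_eq (a := a) (c := c) (σ := σ) y with h | h
    · rw [coreStep_of_notMem fun hmem => hc y hy h (cyclicCore_subset hmem), h, add_right_comm]
    · rw [h, add_right_comm] at hmem
      rw [coreStep_of_mem hmem, h, add_right_comm]
  have hsub : R.image (· + b) ⊆ recurrent a c σ := by
    refine subset_recurrent hcore (Finset.forall_mem_image.2 fun y hy => ?_) ?_
    · rw [hcomm y hy]
      exact hclosed y hy
    · rw [Finset.coe_image]
      rintro _ ⟨y, hy, rfl⟩ _ ⟨z, hz, rfl⟩ hyz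
      rw [hcomm y hy, hcomm z hz, add_left_inj] at hyz
      exact congrArg (· + b) (injOn_coreStep_recurrent (hR hy) (hR hz) hyz)
  exact fun y hy => hsub (Finset.mem_image_of_mem (· + b) hy)

end Recurrent

/-! ### Toggling a bypassed point -/

section IsBypassed

variable {V : Type*} [AddCommGroup V] [Fintype V] {a c x y : V} {σ τ : Finset V}

/-- No preferred child step of `σ` leads into `x`, and the only possible parent of `x` in `σ` is the
recurrent point `x - a`. Adding or removing `x` then does not affect the recurrent points. -/
structure IsBypassed (a c : V) (σ : Finset V) (x : V) : Prop where
  sub_right_notMem : x - c ∉ σ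
  recurrent_of_mem : x - a ∈ σ → x - a ∈ recurrent a c σ
  coreStep_ne : x - a ∈ σ → coreStep a c σ (x - a) ≠ x

namespace IsBypassed

variable (hx : IsBypassed a c σ x)
include hx

theorem add_right_ne (hy : y ∈ σ) : y + c ≠ x := by
  rintro rfl
  exact hx.sub_right_notMem (by simpa using hy)

theorem notMem_recurrent : x ∉ recurrent a c σ := by
  intro hxr
  obtain ⟨y, hy, hyx⟩ := exists_recurrent_coreStep_eq hxr
  have hyσ := recurrent_subset hy
  rcases coreStep_eq_or_eq (a := a) (c := c) (σ := σ) y with h | h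
  · obtain rfl : y = x - a := by rw [← hyx, h, add_sub_cancel_right]
    exact hx.coreStep_ne hyσ hyx
  · exact hx.add_right_ne hyσ (h.symm.trans hyx)

theorem mem_cyclicCore_erase [DecidableEq V] (hy : y ∈ cyclicCore a c (insert x σ)) (hyx : y ≠ x) :
    y ∈ cyclicCore a c (σ.erase x) := by
  obtain ⟨N, hNσ, hyN, hN⟩ := exists_subset_of_mem_cyclicCore hy
  have hNσ' : ∀ q ∈ N, q ≠ x → q ∈ σ := fun q hq hqx =>
    (Finset.mem_insert.1 (hNσ hq)).resolve_left hqx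
  have hsub : N.erase x ∪ recurrent a c σ ⊆ σ.erase x := by
    refine Finset.union_subset (fun q hq => ?_) fun q hq =>
      Finset.mem_erase.2 ⟨fun h => hx.notMem_recurrent (h ▸ hq), recurrent_subset hq⟩
    obtain ⟨hqx, hqN⟩ := Finset.mem_erase.1 hq
    exact Finset.mem_erase.2 ⟨hqx, hNσ' q hqN hqx⟩
  refine subset_cyclicCore hsub (fun q hq => ?_)
    (Finset.mem_union_left _ (Finset.mem_erase.2 ⟨hyx, hyN⟩))
  simp only [Finset.mem_union, Finset.mem_erase]
  have of_recurrent : q ∈ recurrent a c σ → _ := add_mem_recurrent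
  rcases Finset.mem_union.1 hq with hq | hq
  · obtain ⟨hqx, hqN⟩ := Finset.mem_erase.1 hq
    have hqσ := hNσ' q hqN hqx
    rcases hN q hqN with h | h
    · by_cases hqa : q + a = x
      · obtain rfl : q = x - a := eq_sub_of_add_eq hqa
        exact (of_recurrent (hx.recurrent_of_mem hqσ)).imp .inr .inr
      · exact .inl (.inl ⟨hqa, h⟩)
    · exact .inr (.inl ⟨hx.add_right_ne hqσ, h⟩)
  · exact (of_recurrent hq).imp .inr .inr

variable (hτ : ∀ y, y ≠ x → (y ∈ σ ↔ y ∈ τ))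
include hτ

theorem mem_cyclicCore_iff (hyx : y ≠ x) : y ∈ cyclicCore a c τ ↔ y ∈ cyclicCore a c σ := by
  classical
  refine ⟨fun h => cyclicCore_mono (Finset.erase_subset x σ)
    (hx.mem_cyclicCore_erase (cyclicCore_mono (fun q hq => ?_) h) hyx), fun h => cyclicCore_mono
    (fun q hq => ?_) (hx.mem_cyclicCore_erase (cyclicCore_mono (Finset.subset_insert _ _) h) hyx)⟩
  · by_cases hqx : q = x
    · exact Finset.mem_insert.2 (.inl hqx)
    · exact Finset.mem_insert_of_mem ((hτ q hqx).2 hq)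
  · obtain ⟨hqx, hqσ⟩ := Finset.mem_erase.1 hq
    exact (hτ q hqx).1 hqσ

theorem coreStep_eq (hy : y ∈ σ) : coreStep a c τ y = coreStep a c σ y := by
  have h := hx.mem_cyclicCore_iff hτ (hx.add_right_ne hy)
  by_cases hyc : y + c ∈ cyclicCore a c σ
  · rw [coreStep_of_mem hyc, coreStep_of_mem (h.2 hyc)]
  · rw [coreStep_of_notMem hyc, coreStep_of_notMem (mt h.1 hyc)]

theorem recurrent_subset_of_agree : recurrent a c σ ⊆ recurrent a c τ := by
  have hstep : Set.EqOn (coreStep a c τ) (coreStep a c σ) (recurrent a c σ) := fun y hy =>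
    hx.coreStep_eq hτ (recurrent_subset hy)
  refine subset_recurrent (fun y hy => ?_) (fun y hy => ?_)
    ((Set.EqOn.injOn_iff hstep).2 injOn_coreStep_recurrent)
  · have hyx : y ≠ x := fun h => hx.notMem_recurrent (h ▸ hy)
    exact (hx.mem_cyclicCore_iff hτ hyx).2 (recurrent_subset_cyclicCore hy)
  · rw [hstep hy]
    exact coreStep_mem_recurrent hy

theorem of_agree (ha : a ≠ 0) (hc : c ≠ 0) : IsBypassed a c τ x := by
  have hxa : x - a ∈ σ ↔ x - a ∈ τ := hτ _ (by simpa using ha)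
  have hxc : x - c ∈ σ ↔ x - c ∈ τ := hτ _ (by simpa using hc)
  refine ⟨hxc.not.1 hx.sub_right_notMem, fun h => ?_, fun h => ?_⟩
  · exact hx.recurrent_subset_of_agree hτ (hx.recurrent_of_mem (hxa.2 h))
  · rw [hx.coreStep_eq hτ (hxa.2 h)]
    exact hx.coreStep_ne (hxa.2 h)

theorem recurrent_eq (ha : a ≠ 0) (hc : c ≠ 0) : recurrent a c τ = recurrent a c σ :=
  Finset.Subset.antisymm
    ((hx.of_agree hτ ha hc).recurrent_subset_of_agree fun y hy => (hτ y hy).symm)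
    (hx.recurrent_subset_of_agree hτ)

end IsBypassed

end IsBypassed

section Toggle

variable {V : Type*} [AddCommGroup V] [DecidableEq V] {i j p q x z : V}
  {σ τ : Finset V}

theorem GridIndep.mem_nwChildless_iff_of_agree (hσ : GridIndep i j σ) (hp : p ∈ σ)
    (hτ : ∀ y, y ≠ p + (j - i) → (y ∈ σ ↔ y ∈ τ)) (hq : q ≠ p + (j - i)) :
    q ∈ nwChildless i j τ ↔ q ∈ nwChildless i j σ := by
  have below : p + (j - i) - nwSteep i j = p - j := by simp only [nwSteep]; abel
  have right : p + (j - i) - nwFlat i j = p + i := by simp only [nwFlat]; abel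
  refine mem_childless_iff_of_agree (fun hmem => ?_) (fun hmem => ?_) hτ hq
  · exact hσ.not_adjacent hp (below ▸ hmem) (by simp)
  · exact hσ.not_adjacent hp (right ▸ hmem) (by simp)

theorem GridIndep.of_agree (hσ : GridIndep i j σ) (hi : i ≠ 0) (hj : j ≠ 0)
    (hp : p ∈ nwChildless i j σ) (hτ : ∀ y, y ≠ p + (j - i) → (y ∈ σ ↔ y ∈ τ)) :
    GridIndep i j τ := by
  refine (hσ.insert_of_mem_childless hi hj hp).mono fun q hq => ?_
  by_cases hqx : q = p + (j - i)
  · exact Finset.mem_insert.2 (.inl hqx)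
  · exact Finset.mem_insert_of_mem ((hτ q hqx).2 hq)

variable [Fintype V]

/-- The points of `σ` recurrent under the preferred north-east step. -/
noncomputable abbrev neRecurrent (i j : V) (σ : Finset V) : Finset V :=
  recurrent (neSteep i j) (neFlat i j) σ

/-- The preferred north-east step. -/
noncomputable abbrev neStep (i j : V) (σ : Finset V) (z : V) : V :=
  coreStep (neSteep i j) (neFlat i j) σ z

/-- The points at which an independent set with a north-east cycle can be toggled: those diagonally
beyond a recurrent point that has no north-west neighbour but whose predecessor has one. -/
noncomputable def togglePoints (i j : V) (σ : Finset V) : Finset V :=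
  {z ∈ neRecurrent i j σ | z ∉ nwChildless i j σ ∧ neStep i j σ z ∈ nwChildless i j σ}.image
    fun z => neStep i j σ z + (j - i)

theorem mem_togglePoints : x ∈ togglePoints i j σ ↔ ∃ z ∈ neRecurrent i j σ,
    z ∉ nwChildless i j σ ∧ neStep i j σ z ∈ nwChildless i j σ ∧ neStep i j σ z + (j - i) = x := by
  simp only [togglePoints, Finset.mem_image, Finset.mem_filter, and_assoc]

theorem GridIndep.neStep_sub_neFlat_notMem (h : GridIndep i j σ) (hz : z ∈ σ)
    (hzn : z ∉ nwChildless i j σ) : neStep i j σ z + (j - i) - neFlat i j ∉ σ := by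
  intro hmem
  have hw : z + nwSteep i j ∈ σ ∨ z + nwFlat i j ∈ σ := by grind [mem_childless]
  rcases coreStep_eq_or_eq (a := neSteep i j) (c := neFlat i j) (σ := σ) z with hs | hs <;>
  rw [neStep, hs] at hmem <;>
  rcases hw with hw | hw <;>
  exact h.not_adjacent hw hmem (by simp only [nwSteep, nwFlat, neSteep, neFlat]; grind)

theorem GridIndep.neStep_sub_neSteep_eq (h : GridIndep i j σ) (hz : z ∈ σ)
    (hzn : z ∉ nwChildless i j σ) (hmem : neStep i j σ z + (j - i) - neSteep i j ∈ σ) :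
    neStep i j σ z + (j - i) - neSteep i j = z := by
  have hw : z + nwSteep i j ∈ σ ∨ z + nwFlat i j ∈ σ := by grind [mem_childless]
  rcases coreStep_eq_or_eq (a := neSteep i j) (c := neFlat i j) (σ := σ) z with hs | hs
  · rw [neStep, hs] at hmem
    rcases hw with hw | hw <;>
    exact (h.not_adjacent hw hmem (by simp only [nwSteep, nwFlat, neSteep]; grind)).elim
  · rw [neStep, hs]
    simp only [neSteep, neFlat]
    abel

theorem GridIndep.isBypassed (h : GridIndep i j σ) (hji : j - i ≠ 0) (hz : z ∈ neRecurrent i j σ)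
    (hzn : z ∉ nwChildless i j σ) :
    IsBypassed (neSteep i j) (neFlat i j) σ (neStep i j σ z + (j - i)) where
  sub_right_notMem := h.neStep_sub_neFlat_notMem (recurrent_subset hz) hzn
  recurrent_of_mem hmem := by rwa [h.neStep_sub_neSteep_eq (recurrent_subset hz) hzn hmem]
  coreStep_ne hmem := by
    rw [h.neStep_sub_neSteep_eq (recurrent_subset hz) hzn hmem]
    simpa using hji

section

variable (hσ : GridIndep i j σ) (hz : z ∈ neRecurrent i j σ) (hzn : z ∉ nwChildless i j σ)
  (hτ : ∀ y, y ≠ neStep i j σ z + (j - i) → (y ∈ σ ↔ y ∈ τ))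
include hσ hz hzn hτ

theorem GridIndep.hasCycle_nwChildless_of_agree (hsteep : neSteep i j ≠ 0) (hflat : neFlat i j ≠ 0)
    (h : HasNECycle i j (nwChildless i j τ)) :
    HasNECycle i j (nwChildless i j σ) := by
  have hpσ := recurrent_subset (coreStep_mem_recurrent hz)
  have hins : nwChildless i j τ ⊆
      insert (neStep i j σ z + (j - i)) (nwChildless i j σ) := fun q hq => by
    by_cases hqx : q = neStep i j σ z + (j - i)
    · exact Finset.mem_insert.2 (.inl hqx)
    · exact Finset.mem_insert_of_mem ((hσ.mem_nwChildless_iff_of_agree hpσ hτ hqx).1 hq)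
  refine HasCycle.of_insert_parentless hsteep hflat (fun hmem => hzn ?_) (fun hmem => ?_)
    (h.mono hins)
  · rwa [hσ.neStep_sub_neSteep_eq (recurrent_subset hz) hzn (childless_subset hmem)] at hmem
  · exact hσ.neStep_sub_neFlat_notMem (recurrent_subset hz) hzn (childless_subset hmem)

theorem GridIndep.togglePoints_eq_of_agree (hji : j - i ≠ 0) (hsteep : neSteep i j ≠ 0)
    (hflat : neFlat i j ≠ 0) : togglePoints i j τ = togglePoints i j σ := by
  have hx := hσ.isBypassed hji hz hzn
  have hpσ := recurrent_subset (coreStep_mem_recurrent hz)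
  have hstep : ∀ y ∈ neRecurrent i j σ, neStep i j τ y = neStep i j σ y := fun y hy =>
    hx.coreStep_eq hτ (recurrent_subset hy)
  have hchildless : ∀ y ∈ neRecurrent i j σ, (y ∈ nwChildless i j τ ↔ y ∈ nwChildless i j σ) :=
    fun y hy => hσ.mem_nwChildless_iff_of_agree hpσ hτ fun h => hx.notMem_recurrent (h ▸ hy)
  ext y
  rw [mem_togglePoints, mem_togglePoints, neRecurrent, hx.recurrent_eq hτ hsteep hflat]
  refine exists_congr fun w => and_congr_right fun hw => ?_
  rw [hchildless w hw, hstep w hw, hchildless _ (coreStep_mem_recurrent hw)]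

end

theorem signedCount_togglePoints_nonempty (hi : i ≠ 0) (hj : j ≠ 0) (hji : j - i ≠ 0)
    (hsteep : neSteep i j ≠ 0) (hflat : neFlat i j ≠ 0) :
    signedCount (fun σ => (GridIndep i j σ ∧
      HasNECycle i j σ ∧
      ¬ HasNECycle i j (nwChildless i j σ)) ∧
      (togglePoints i j σ).Nonempty) = 0 := by
  refine signedCount_eq_zero_of_toggle (togglePoints i j) (fun σ h => h.2) ?_
  rintro σ τ _ ⟨⟨hσ, hcyc, hacyc⟩, hne⟩ hx hτ
  obtain ⟨z, hz, hzn, hpn, rfl⟩ := mem_togglePoints.1 hx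
  have htoggle := GridIndep.togglePoints_eq_of_agree hσ hz hzn hτ hji hsteep hflat
  refine ⟨⟨⟨GridIndep.of_agree hσ hi hj hpn hτ, ?_, fun h => hacyc ?_⟩, htoggle ▸ hne⟩, htoggle⟩
  · rw [HasNECycle, hasCycle_iff_recurrent_nonempty] at hcyc ⊢
    rwa [(GridIndep.isBypassed hσ hji hz hzn).recurrent_eq hτ hsteep hflat]
  · exact GridIndep.hasCycle_nwChildless_of_agree hσ hz hzn hτ hsteep hflat h

end Toggle

/-! ### Vertex sets of rhombus tilings -/

section TilingVertexSet

variable {V W : Type*} [AddCommGroup V] [AddCommGroup W] {i j p q : V} {P : Set V}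

/-- Algebraic description of the vertex sets of tilings by Jonsson rhombi: independent sets in which
every point has one neighbour along an edge vector in each of the four diagonal directions. -/
structure IsTilingVertexSet (i j : V) (P : Set V) : Prop where
  nonempty : P.Nonempty
  add_left_notMem : ∀ ⦃p⦄, p ∈ P → p + i ∉ P
  add_right_notMem : ∀ ⦃p⦄, p ∈ P → p + j ∉ P
  northEast : ∀ ⦃p⦄, p ∈ P → p + neSteep i j ∈ P ∨ p + neFlat i j ∈ P
  southWest : ∀ ⦃p⦄, p ∈ P → p - neSteep i j ∈ P ∨ p - neFlat i j ∈ P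
  northWest : ∀ ⦃p⦄, p ∈ P → p + nwSteep i j ∈ P ∨ p + nwFlat i j ∈ P
  southEast : ∀ ⦃p⦄, p ∈ P → p - nwSteep i j ∈ P ∨ p - nwFlat i j ∈ P

/-- The point `q` or one of its four neighbours in the grid belongs to `P`. -/
def IsDominated (i j : V) (P : Set V) (q : V) : Prop :=
  ∃ p ∈ P, q = p ∨ q - p = i ∨ p - q = i ∨ q - p = j ∨ p - q = j

theorem IsDominated.swap (h : IsDominated i j P q) : IsDominated j i P q :=
  let ⟨p, hp, h⟩ := h
  ⟨p, hp, by tauto⟩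

theorem IsDominated.neg (h : IsDominated i j P q) : IsDominated (-i) (-j) P q :=
  let ⟨p, hp, h⟩ := h
  ⟨p, hp, by grind⟩

namespace IsTilingVertexSet

theorem preimage_iff {f : V →+ W} (hf : Function.Surjective f) {P : Set W} :
    IsTilingVertexSet i j (f ⁻¹' P) ↔ IsTilingVertexSet (f i) (f j) P := by
  constructor
  · rintro ⟨hne, hi, hj, hNE, hSW, hNW, hSE⟩
    refine ⟨(hne.image f).mono (Set.image_preimage_subset f P), hf.forall.2 fun p hp => ?_,
      hf.forall.2 fun p hp => ?_, hf.forall.2 fun p hp => ?_, hf.forall.2 fun p hp => ?_,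
      hf.forall.2 fun p hp => ?_, hf.forall.2 fun p hp => ?_⟩
    · simpa using hi hp
    · simpa using hj hp
    · simpa [neSteep, neFlat] using hNE hp
    · simpa [neSteep, neFlat] using hSW hp
    · simpa [nwSteep, nwFlat] using hNW hp
    · simpa [nwSteep, nwFlat] using hSE hp
  · rintro ⟨hne, hi, hj, hNE, hSW, hNW, hSE⟩
    refine ⟨hne.preimage hf, fun p hp => ?_, fun p hp => ?_, fun p hp => ?_, fun p hp => ?_,
      fun p hp => ?_, fun p hp => ?_⟩
    · simpa using hi hp
    · simpa using hj hp
    · simpa [neSteep, neFlat] using hNE hp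
    · simpa [neSteep, neFlat] using hSW hp
    · simpa [nwSteep, nwFlat] using hNW hp
    · simpa [nwSteep, nwFlat] using hSE hp

variable (h : IsTilingVertexSet i j P)
include h

theorem swap : IsTilingVertexSet j i P where
  nonempty := h.nonempty
  add_left_notMem := h.add_right_notMem
  add_right_notMem := h.add_left_notMem
  northEast p hp := by simpa [neSteep, neFlat, add_comm] using (h.northEast hp).symm
  southWest p hp := by simpa [neSteep, neFlat, add_comm] using (h.southWest hp).symm
  northWest p hp := by
    have hs : p + nwSteep j i = p - nwFlat i j := by simp only [nwSteep, nwFlat]; abel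
    have hf : p + nwFlat j i = p - nwSteep i j := by simp only [nwSteep, nwFlat]; abel
    rw [hs, hf]
    exact (h.southEast hp).symm
  southEast p hp := by
    have hs : p - nwSteep j i = p + nwFlat i j := by simp only [nwSteep, nwFlat]; abel
    have hf : p - nwFlat j i = p + nwSteep i j := by simp only [nwSteep, nwFlat]; abel
    rw [hs, hf]
    exact (h.northWest hp).symm

theorem neg : IsTilingVertexSet (-i) (-j) P where
  nonempty := h.nonempty
  add_left_notMem p hp hp' := h.add_left_notMem hp' (by simpa using hp)
  add_right_notMem p hp hp' := h.add_right_notMem hp' (by simpa using hp)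
  northEast p hp := by
    convert h.southWest hp using 2 <;> simp only [neSteep, neFlat] <;> abel
  southWest p hp := by
    convert h.northEast hp using 2 <;> simp only [neSteep, neFlat] <;> abel
  northWest p hp := by
    convert h.southEast hp using 2 <;> simp only [nwSteep, nwFlat] <;> abel
  southEast p hp := by
    convert h.northWest hp using 2 <;> simp only [nwSteep, nwFlat] <;> abel

theorem not_adjacent (hp : p ∈ P) (hq : q ∈ P) :
    ¬ (q - p = i ∨ p - q = i ∨ q - p = j ∨ p - q = j) := by
  rintro (rfl | rfl | rfl | rfl)
  · exact h.add_left_notMem hp (by simpa using hq)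
  · exact h.add_left_notMem hq (by simpa using hp)
  · exact h.add_right_notMem hp (by simpa using hq)
  · exact h.add_right_notMem hq (by simpa using hp)

theorem isDominated_add_two_nsmul (hp : p ∈ P) : IsDominated i j P (p + 2 • i) := by
  rcases h.northEast hp with hNE | hNE
  swap
  · exact ⟨_, hNE, by simp [neFlat]⟩
  rcases h.southEast hNE with hE | hE
  · exact ⟨_, hE, by simp only [neSteep, nwSteep]; grind⟩
  rcases h.southWest hE with hmem | hmem
  · exact ⟨_, hmem, by simp only [nwFlat]; grind⟩
  · exact (h.not_adjacent hp hmem (by simp only [neSteep, neFlat, nwFlat]; grind)).elim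

theorem isDominated_add_left (hq : IsDominated i j P q) : IsDominated i j P (q + i) := by
  obtain ⟨p, hp, rfl | hqp | hqp | hqp | hqp⟩ := hq
  · exact ⟨_, hp, by simp⟩
  · convert h.isDominated_add_two_nsmul hp using 1
    grind
  · exact ⟨_, hp, by grind⟩
  · rcases h.northEast hp with hNE | hNE
    · exact ⟨_, hNE, by simp only [neSteep]; grind⟩
    · exact ⟨_, hNE, by simp only [neFlat]; grind⟩
  · rcases h.southEast hp with hSE | hSE
    · exact ⟨_, hSE, by simp only [nwSteep]; grind⟩
    · exact ⟨_, hSE, by simp only [nwFlat]; grind⟩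

theorem isDominated_add_left_iff : IsDominated i j P (q + i) ↔ IsDominated i j P q := by
  refine ⟨fun hq => ?_, h.isDominated_add_left⟩
  have := h.neg.isDominated_add_left hq.neg
  rw [add_neg_cancel_right] at this
  simpa using this.neg

theorem isDominated_add_right_iff : IsDominated i j P (q + j) ↔ IsDominated i j P q :=
  ⟨fun hq => (h.swap.isDominated_add_left_iff.1 hq.swap).swap,
    fun hq => (h.swap.isDominated_add_left_iff.2 hq.swap).swap⟩

theorem isDominated (hgen : AddSubgroup.closure {i, j} = ⊤) (q : V) : IsDominated i j P q := by
  have hadd : ∀ t ∈ AddSubgroup.closure {i, j}, ∀ q,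
      IsDominated i j P (q + t) ↔ IsDominated i j P q := fun t ht => by
    induction ht using AddSubgroup.closure_induction with
    | mem t ht =>
      rcases ht with rfl | rfl
      exacts [fun q => h.isDominated_add_left_iff, fun q => h.isDominated_add_right_iff]
    | zero => simp
    | add t t' _ _ ht ht' => exact fun q => by rw [← add_assoc, ht', ht]
    | neg t _ ht => exact fun q => by rw [← ht, neg_add_cancel_right]
  obtain ⟨p, hp⟩ := h.nonempty
  rw [← add_sub_cancel p q, hadd _ (hgen ▸ AddSubgroup.mem_top _)]
  exact ⟨p, hp, .inl rfl⟩

theorem eq_of_subset (hgen : AddSubgroup.closure {i, j} = ⊤) {S : Set V} (hPS : P ⊆ S)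
    (hS : ∀ p ∈ S, p + i ∉ S ∧ p + j ∉ S) : P = S := by
  refine hPS.antisymm fun q hq => ?_
  obtain ⟨p, hp, rfl | rfl | rfl | rfl | rfl⟩ := h.isDominated hgen q
  · exact hp
  · exact ((hS p (hPS hp)).1 (by simpa using hq)).elim
  · exact ((hS q hq).1 (by simpa using hPS hp)).elim
  · exact ((hS p (hPS hp)).2 (by simpa using hq)).elim
  · exact ((hS q hq).2 (by simpa using hPS hp)).elim

end IsTilingVertexSet

end TilingVertexSet

section Terminal

variable {V : Type*} [AddCommGroup V] {i j p q : V} {σ : Finset V}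

theorem IsTilingVertexSet.nwChildless_eq_empty [DecidableEq V]
    (h : IsTilingVertexSet i j (σ : Set V)) :
    nwChildless i j σ = ∅ := by
  refine Finset.eq_empty_of_forall_notMem fun p hp => ?_
  obtain ⟨hpσ, hsteep, hflat⟩ := mem_childless.1 hp
  exact (h.northWest hpσ).elim hsteep hflat

variable [Fintype V]

section

variable (hσ : GridIndep i j σ)
include hσ

theorem GridIndep.neStep_add_nwFlat_notMem (hp : p + nwSteep i j ∈ σ) :
    neStep i j σ p + nwFlat i j ∉ σ := by
  intro hmem
  rcases coreStep_eq_or_eq (a := neSteep i j) (c := neFlat i j) (σ := σ) p with h | h <;>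
  rw [neStep, h] at hmem <;>
  exact hσ.not_adjacent hp hmem (by simp only [nwSteep, nwFlat, neSteep, neFlat]; grind)

theorem GridIndep.add_nwSteep_ne_add_nwFlat (hp : p ∈ neRecurrent i j σ) (hq : q ∈ σ) :
    p + nwSteep i j ≠ q + nwFlat i j := by
  intro h
  have hmem : neStep i j σ p ∈ σ := recurrent_subset (coreStep_mem_recurrent hp)
  rcases coreStep_eq_or_eq (a := neSteep i j) (c := neFlat i j) (σ := σ) p with hs | hs <;>
  rw [neStep, hs] at hmem <;> simp only [nwSteep, nwFlat] at h <;>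
  exact hσ.not_adjacent hq hmem (by simp only [neSteep, neFlat]; grind)

variable (hnw : ∀ p ∈ neRecurrent i j σ, p + nwSteep i j ∈ σ ∨ p + nwFlat i j ∈ σ)
include hnw

theorem GridIndep.neStep_add_nwSteep_mem (hp : p ∈ neRecurrent i j σ)
    (hps : p + nwSteep i j ∈ σ) : neStep i j σ p + nwSteep i j ∈ σ :=
  (hnw _ (coreStep_mem_recurrent hp)).resolve_right (hσ.neStep_add_nwFlat_notMem hps)

theorem GridIndep.add_nwSteep_mem_recurrent (hp : p ∈ neRecurrent i j σ)
    (hps : p + nwSteep i j ∈ σ) : p + nwSteep i j ∈ neRecurrent i j σ := by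
  classical
  refine add_mem_recurrent_of_invariant
    (R := {q ∈ neRecurrent i j σ | q + nwSteep i j ∈ σ}) (Finset.filter_subset _ _)
    (fun y hy => ?_) (fun y hy => (Finset.mem_filter.1 hy).2) (fun y hy hs hmem => ?_) p
    (Finset.mem_filter.2 ⟨hp, hps⟩) <;> obtain ⟨hyR, hys⟩ := Finset.mem_filter.1 hy
  · exact Finset.mem_filter.2
      ⟨coreStep_mem_recurrent hyR, hσ.neStep_add_nwSteep_mem hnw hyR hys⟩
  · have := recurrent_subset (coreStep_mem_recurrent hyR)
    rw [hs] at this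
    exact hσ.not_adjacent this hmem (by simp only [nwSteep, neSteep, neFlat]; grind)

theorem GridIndep.neStep_add_nwFlat_mem (hp : p ∈ neRecurrent i j σ)
    (hpf : p + nwFlat i j ∈ σ) : neStep i j σ p + nwFlat i j ∈ σ := by
  classical
  have hsub : {q ∈ neRecurrent i j σ | q + nwSteep i j ∈ σ} ⊆ neRecurrent i j σ :=
    Finset.filter_subset _ _
  have hinv : ∀ y ∈ {q ∈ neRecurrent i j σ | q + nwSteep i j ∈ σ},
      neStep i j σ y ∈ {q ∈ neRecurrent i j σ | q + nwSteep i j ∈ σ} := fun y hy => by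
    obtain ⟨hyR, hys⟩ := Finset.mem_filter.1 hy
    exact Finset.mem_filter.2
      ⟨coreStep_mem_recurrent hyR, hσ.neStep_add_nwSteep_mem hnw hyR hys⟩
  refine (hnw _ (coreStep_mem_recurrent hp)).resolve_left fun hs => ?_
  have hps := mem_of_coreStep_mem hsub hinv hp
    (Finset.mem_filter.2 ⟨coreStep_mem_recurrent hp, hs⟩)
  obtain ⟨z, hz, rfl⟩ := exists_mem_coreStep_eq hsub hinv hps
  exact hσ.neStep_add_nwFlat_notMem (Finset.mem_filter.1 hz).2 hpf

theorem GridIndep.add_nwFlat_mem_recurrent (hp : p ∈ neRecurrent i j σ)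
    (hpf : p + nwFlat i j ∈ σ) : p + nwFlat i j ∈ neRecurrent i j σ := by
  classical
  refine add_mem_recurrent_of_invariant
    (R := {q ∈ neRecurrent i j σ | q + nwFlat i j ∈ σ}) (Finset.filter_subset _ _)
    (fun y hy => ?_) (fun y hy => (Finset.mem_filter.1 hy).2) (fun y hy hs hmem => ?_) p
    (Finset.mem_filter.2 ⟨hp, hpf⟩) <;> obtain ⟨hyR, hyf⟩ := Finset.mem_filter.1 hy
  · exact Finset.mem_filter.2
      ⟨coreStep_mem_recurrent hyR, hσ.neStep_add_nwFlat_mem hnw hyR hyf⟩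
  · have := recurrent_subset (coreStep_mem_recurrent hyR)
    rw [hs] at this
    exact hσ.not_adjacent this hmem (by simp only [nwFlat, neSteep, neFlat]; grind)

theorem GridIndep.sub_nw_mem_recurrent (hp : p ∈ neRecurrent i j σ) :
    p - nwSteep i j ∈ neRecurrent i j σ ∨ p - nwFlat i j ∈ neRecurrent i j σ := by
  classical
  let w (q : V) : V := if q + nwSteep i j ∈ σ then q + nwSteep i j else q + nwFlat i j
  have hmaps : Set.MapsTo w (neRecurrent i j σ) (neRecurrent i j σ) := fun q hq => by
    dsimp only [w]
    split_ifs with h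
    · exact hσ.add_nwSteep_mem_recurrent hnw hq h
    · exact hσ.add_nwFlat_mem_recurrent hnw hq ((hnw q hq).resolve_left h)
  have hinj : Set.InjOn w (neRecurrent i j σ) := fun q hq r hr hqr => by
    dsimp only [w] at hqr
    split_ifs at hqr
    · exact add_right_cancel hqr
    · exact (hσ.add_nwSteep_ne_add_nwFlat hq (recurrent_subset hr) hqr).elim
    · exact (hσ.add_nwSteep_ne_add_nwFlat hr (recurrent_subset hq) hqr.symm).elim
    · exact add_right_cancel hqr
  obtain ⟨q, hq, rfl⟩ := Finset.surjOn_of_injOn_of_card_le w hmaps hinj le_rfl hp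
  dsimp only [w]
  split_ifs
  · exact .inl (by simpa using hq)
  · exact .inr (by simpa using hq)

end

variable [DecidableEq V]

theorem notMem_nwChildless_of_togglePoints_eq_empty
    (hacyc : ¬ HasNECycle i j (nwChildless i j σ)) (htoggle : togglePoints i j σ = ∅)
    (hp : p ∈ neRecurrent i j σ) : p ∉ nwChildless i j σ := by
  intro hpn
  have hinv : ∀ y ∈ {q ∈ neRecurrent i j σ | q ∉ nwChildless i j σ},
      neStep i j σ y ∈ {q ∈ neRecurrent i j σ | q ∉ nwChildless i j σ} := fun y hy => by
    obtain ⟨hyR, hyn⟩ := Finset.mem_filter.1 hy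
    refine Finset.mem_filter.2 ⟨coreStep_mem_recurrent hyR, fun hstep => ?_⟩
    exact Finset.notMem_empty _ (htoggle ▸ mem_togglePoints.2 ⟨y, hyR, hyn, hstep, rfl⟩)
  refine hacyc ⟨{q ∈ neRecurrent i j σ | q ∈ nwChildless i j σ}, fun q hq =>
    (Finset.mem_filter.1 hq).2, ⟨p, Finset.mem_filter.2 ⟨hp, hpn⟩⟩, fun y hy => ?_⟩
  obtain ⟨hyR, hyn⟩ := Finset.mem_filter.1 hy
  have hstep : neStep i j σ y ∈ {q ∈ neRecurrent i j σ | q ∈ nwChildless i j σ} := by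
    refine Finset.mem_filter.2 ⟨coreStep_mem_recurrent hyR, ?_⟩
    by_contra hcon
    exact (Finset.mem_filter.1 (mem_of_coreStep_mem (Finset.filter_subset _ _) hinv hyR
      (Finset.mem_filter.2 ⟨coreStep_mem_recurrent hyR, hcon⟩))).2 hyn
  rcases coreStep_eq_or_eq (a := neSteep i j) (c := neFlat i j) (σ := σ) y with h | h <;>
  rw [neStep, h] at hstep
  · exact .inl hstep
  · exact .inr hstep

theorem GridIndep.isTilingVertexSet_neRecurrent (hσ : GridIndep i j σ) (hcyc : HasNECycle i j σ)
    (hacyc : ¬ HasNECycle i j (nwChildless i j σ)) (htoggle : togglePoints i j σ = ∅) :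
    IsTilingVertexSet i j (neRecurrent i j σ : Set V) := by
  have hnw : ∀ p ∈ neRecurrent i j σ, p + nwSteep i j ∈ σ ∨ p + nwFlat i j ∈ σ := fun p hp => by
    have := notMem_nwChildless_of_togglePoints_eq_empty hacyc htoggle hp
    have hpσ := recurrent_subset hp
    grind [mem_childless]
  have hR : GridIndep i j (neRecurrent i j σ) := hσ.mono recurrent_subset
  exact
    { nonempty := Finset.coe_nonempty.2 (hasCycle_iff_recurrent_nonempty.1 hcyc)
      add_left_notMem := fun p hp => (gridIndep_iff.1 hR p hp).1
      add_right_notMem := fun p hp => (gridIndep_iff.1 hR p hp).2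
      northEast := fun p hp => add_mem_recurrent hp
      southWest := fun p hp => sub_mem_recurrent hp
      northWest := fun p hp => (hnw p hp).imp (hσ.add_nwSteep_mem_recurrent hnw hp)
        (hσ.add_nwFlat_mem_recurrent hnw hp)
      southEast := fun p hp => hσ.sub_nw_mem_recurrent hnw hp }

theorem gridIndep_hasNECycle_togglePoints_eq_empty_iff (hgen : AddSubgroup.closure {i, j} = ⊤) :
    ((GridIndep i j σ ∧ HasNECycle i j σ ∧ ¬ HasNECycle i j (nwChildless i j σ)) ∧
      togglePoints i j σ = ∅) ↔ IsTilingVertexSet i j (σ : Set V) := by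
  refine ⟨fun ⟨⟨hσ, hcyc, hacyc⟩, htoggle⟩ => ?_, fun h => ⟨⟨?_, ?_, ?_⟩, ?_⟩⟩
  · have h := hσ.isTilingVertexSet_neRecurrent hcyc hacyc htoggle
    exact h.eq_of_subset hgen (Finset.coe_subset.2 recurrent_subset) (gridIndep_iff.1 hσ) ▸ h
  · exact gridIndep_iff.2 fun p hp => ⟨h.add_left_notMem hp, h.add_right_notMem hp⟩
  · exact ⟨σ, Finset.Subset.refl σ, Finset.coe_nonempty.1 h.nonempty, fun p hp => h.northEast hp⟩
  · exact h.nwChildless_eq_empty ▸ not_hasCycle_empty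
  · refine Finset.eq_empty_of_forall_notMem fun x hx => ?_
    obtain ⟨z, -, -, hz, -⟩ := mem_togglePoints.1 hx
    exact Finset.notMem_empty _ (h.nwChildless_eq_empty ▸ hz)

theorem signedCount_hasNECycle_acyclic_childless (hi : i ≠ 0) (hj : j ≠ 0) (hji : j - i ≠ 0)
    (hsteep : neSteep i j ≠ 0) (hflat : neFlat i j ≠ 0)
    (hgen : AddSubgroup.closure {i, j} = ⊤) :
    signedCount (fun σ => GridIndep i j σ ∧ HasNECycle i j σ ∧
      ¬ HasNECycle i j (nwChildless i j σ)) =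
    signedCount (fun P : Finset V => IsTilingVertexSet i j ↑P) := by
  rw [← signedCount_and_add_signedCount_and_not _ fun σ => (togglePoints i j σ).Nonempty,
    signedCount_togglePoints_nonempty hi hj hji hsteep hflat, zero_add]
  simp only [Finset.not_nonempty_iff_eq_empty, gridIndep_hasNECycle_togglePoints_eq_empty_iff hgen]

end Terminal

section Combine

variable {V : Type*} [AddCommGroup V] [Fintype V] {i j : V}

open Classical in
theorem card_isLevelSet_eq_one_add_theta (hgen : AddSubgroup.closure {i, j} = ⊤) {D : ℤ}
    (hrel : ¬ 3 ∣ D → ∃ m n : ℤ, m • i + n • j = 0 ∧ ¬ 3 ∣ m + n)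
    (hheight : 3 ∣ D → ∃ l : V →+ ZMod 3, l i = 1 ∧ l j = 1) :
    (Finset.card {K : Finset V | IsLevelSet i j K} : ℤ) = 1 + theta D := by
  by_cases hD : 3 ∣ D
  · obtain ⟨l, hi, hj⟩ := hheight hD
    rw [card_isLevelSet hi hj hgen, theta, if_pos hD]
    norm_num
  · obtain ⟨m, n, h0, h3⟩ := hrel hD
    rw [theta, if_neg hD]
    simp [not_isLevelSet_of_zsmul_add_zsmul_eq_zero h0 h3]

theorem signedCount_acyclic_childless_eq_add (hi : i ≠ 0) (hj : j ≠ 0) (hji : j - i ≠ 0)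
    (hsteep : neSteep i j ≠ 0) (hflat : neFlat i j ≠ 0)
    (hgen : AddSubgroup.closure {i, j} = ⊤) [DecidableEq V] :
    signedCount (fun σ => GridIndep i j σ ∧ ¬ HasNECycle i j (nwChildless i j σ)) =
      signedCount (fun P : Finset V => IsTilingVertexSet i j ↑P) +
        signedCount (fun σ => GridIndep i j σ ∧ ¬ HasNECycle i j σ) := by
  rw [← signedCount_hasNECycle_acyclic_childless hi hj hji hsteep hflat hgen,
    ← signedCount_and_add_signedCount_and_not _ fun σ => HasNECycle i j σ]
  congr 1
  · exact signedCount_congr fun σ => by tauto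
  · refine signedCount_congr fun σ => ?_
    have hmono (h : HasNECycle i j (nwChildless i j σ)) : HasNECycle i j σ :=
      h.mono childless_subset
    tauto

theorem DiagonalIndex.signedCount_gridIndep {d : ℕ} [NeZero d] {k : V →+ ZMod d}
    (hk : DiagonalIndex i j k) (hi : i ≠ 0) (hj : j ≠ 0) (hji : j - i ≠ 0)
    (hsteep : neSteep i j ≠ 0) (hflat : neFlat i j ≠ 0) {D : ℤ}
    (hrel : ¬ 3 ∣ D → ∃ m n : ℤ, m • i + n • j = 0 ∧ ¬ 3 ∣ m + n)
    (hheight : 3 ∣ D → ∃ l : V →+ ZMod 3, l i = 1 ∧ l j = 1) :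
    signedCount (GridIndep i j) =
      signedCount (fun P : Finset V => IsTilingVertexSet i j ↑P) -
        (-1) ^ d * theta d * theta D := by
  classical
  have hgen := hk.closure_eq_top
  have hlevel := signedCount_acyclic_childless hi hj hgen
  rw [signedCount_acyclic_childless_eq_add hi hj hji hsteep hflat hgen,
    hk.signedCount_gridIndep_acyclic hi hj hsteep hflat, Finset.sum_congr rfl fun K hK =>
      (Finset.mem_filter.1 hK).2.signedCount_acyclic hk hsteep hflat,
    Finset.sum_const, nsmul_eq_mul, card_isLevelSet_eq_one_add_theta hgen hrel hheight] at hlevel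
  linear_combination -hlevel

end Combine

/-! ### The torus grid -/

section Torus

variable {u v w : ℤ × ℤ}

/-- The class of `(1, 0)` in the torus group `ℤ² / Λ`. -/
abbrev torusEast (u v : ℤ × ℤ) : (ℤ × ℤ) ⧸ lat u v := ((1, 0) : ℤ × ℤ)

/-- The class of `(0, 1)` in the torus group `ℤ² / Λ`. -/
abbrev torusNorth (u v : ℤ × ℤ) : (ℤ × ℤ) ⧸ lat u v := ((0, 1) : ℤ × ℤ)

theorem zsmul_torusEast_add_zsmul_torusNorth (m n : ℤ) :
    m • torusEast u v + n • torusNorth u v = ((m, n) : ℤ × ℤ) := by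
  rw [← QuotientAddGroup.mk_zsmul, ← QuotientAddGroup.mk_zsmul, ← QuotientAddGroup.mk_add]
  simp

theorem zsmul_add_zsmul_mem_lat (m n : ℤ) : m • u + n • v ∈ lat u v :=
  AddSubgroup.mem_closure_pair.2 ⟨m, n, rfl⟩

theorem mk_ne_zero_of_sq_add_sq_lt (hlen : ∀ w ∈ lat u v, w ≠ 0 → 9 ≤ w.1 ^ 2 + w.2 ^ 2)
    (hw : w ≠ 0) (hlt : w.1 ^ 2 + w.2 ^ 2 < 9) : (w : (ℤ × ℤ) ⧸ lat u v) ≠ 0 :=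
  fun h => (hlen w ((QuotientAddGroup.eq_zero_iff w).1 h) hw).not_gt hlt

/-- The homomorphism on the torus group induced by a homomorphism `f` on `ℤ²` that vanishes on the
two generators of the lattice. -/
def torusLift {A : Type*} [AddCommGroup A] (f : ℤ × ℤ →+ A) (hu : f u = 0) (hv : f v = 0) :
    (ℤ × ℤ) ⧸ lat u v →+ A :=
  QuotientAddGroup.lift (lat u v) f ((AddSubgroup.closure_le f.ker).2 (by
    rintro w (rfl | rfl)
    exacts [hu, hv]))

theorem torusLift_mk {A : Type*} [AddCommGroup A] (f : ℤ × ℤ →+ A) (hu : f u = 0) (hv : f v = 0)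
    (w : ℤ × ℤ) : torusLift f hu hv w = f w :=
  rfl

theorem exists_hom_apply_torusEast_eq_one_and_apply_torusNorth_eq_one
    (h : (3 : ℤ) ∣ Int.gcd (u.1 + u.2) (v.1 + v.2)) :
    ∃ l : (ℤ × ℤ) ⧸ lat u v →+ ZMod 3, l (torusEast u v) = 1 ∧ l (torusNorth u v) = 1 := by
  refine ⟨torusLift ((Int.castAddHom (ZMod 3)).comp (.fst ℤ ℤ + .snd ℤ ℤ)) ?_ ?_, ?_, ?_⟩
  · exact (ZMod.intCast_zmod_eq_zero_iff_dvd _ 3).2 (h.trans (Int.gcd_dvd_left ..))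
  · exact (ZMod.intCast_zmod_eq_zero_iff_dvd _ 3).2 (h.trans (Int.gcd_dvd_right ..))
  · exact (torusLift_mk _ _ _ _).trans (by simp)
  · exact (torusLift_mk _ _ _ _).trans (by simp)

theorem exists_zsmul_torusEast_add_zsmul_torusNorth_eq_zero
    (h : ¬ (3 : ℤ) ∣ Int.gcd (u.1 + u.2) (v.1 + v.2)) :
    ∃ m n : ℤ, m • torusEast u v + n • torusNorth u v = 0 ∧ ¬ 3 ∣ m + n := by
  obtain ⟨a, b, hab⟩ := Int.gcd_dvd_iff.1 (dvd_refl (Int.gcd (u.1 + u.2) (v.1 + v.2)))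
  refine ⟨(a • u + b • v).1, (a • u + b • v).2, ?_, ?_⟩
  · rw [zsmul_torusEast_add_zsmul_torusNorth, QuotientAddGroup.eq_zero_iff]
    exact zsmul_add_zsmul_mem_lat a b
  · rw [hab] at h
    convert h using 2
    simp only [Prod.fst_add, Prod.snd_add, Prod.smul_fst, Prod.smul_snd, smul_eq_mul]
    ring

theorem exists_diagonalIndex_torus (u v : ℤ × ℤ) :
    ∃ k : (ℤ × ℤ) ⧸ lat u v →+ ZMod (Int.gcd (u.1 - u.2) (v.1 - v.2)),
      DiagonalIndex (torusEast u v) (torusNorth u v) k := by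
  let f : ℤ × ℤ →+ ZMod (Int.gcd (u.1 - u.2) (v.1 - v.2)) :=
    (Int.castAddHom _).comp (.fst ℤ ℤ - .snd ℤ ℤ)
  refine ⟨torusLift f ((ZMod.intCast_zmod_eq_zero_iff_dvd _ _).2 (Int.gcd_dvd_left ..))
    ((ZMod.intCast_zmod_eq_zero_iff_dvd _ _).2 (Int.gcd_dvd_right ..)), ?_, ?_, fun x hx => ?_⟩
  · simp [torusLift_mk, f]
  · simp [torusLift_mk, f]
  · obtain ⟨p, rfl⟩ := QuotientAddGroup.mk_surjective x
    obtain ⟨t, ht⟩ := (ZMod.intCast_zmod_eq_zero_iff_dvd (p.1 - p.2) _).1 hx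
    obtain ⟨a, b, hab⟩ := Int.gcd_dvd_iff.1 (dvd_refl (Int.gcd (u.1 - u.2) (v.1 - v.2)))
    refine AddSubgroup.mem_zmultiples_iff.2 ⟨p.1 - t * (a * u.1 + b * v.1), ?_⟩
    rw [zsmul_add, zsmul_torusEast_add_zsmul_torusNorth, QuotientAddGroup.eq]
    convert zsmul_add_zsmul_mem_lat (u := u) (v := v) (t * a) (t * b) using 1
    ext
    · simp only [Prod.fst_add, Prod.fst_neg, Prod.smul_fst, smul_eq_mul]
      ring
    · simp only [Prod.snd_add, Prod.snd_neg, Prod.smul_snd, smul_eq_mul]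
      linear_combination -ht - t * hab

theorem indep_torusGraph_iff (hi : torusEast u v ≠ 0) (hj : torusNorth u v ≠ 0)
    {σ : Finset ((ℤ × ℤ) ⧸ lat u v)} :
    Indep (torusGraph u v) σ ↔ GridIndep (torusEast u v) (torusNorth u v) σ := by
  refine ⟨fun h => gridIndep_iff.2 fun p hp => ⟨fun hp' => ?_, fun hp' => ?_⟩, ?_⟩
  · exact h hp hp' ⟨by simpa using hi, by simp⟩
  · exact h hp hp' ⟨by simpa using hj, by simp⟩
  · rintro h a ha b hb ⟨-, hab⟩
    exact h.not_adjacent ha hb (by tauto)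

theorem sum_indepSet_eq_signedCount {V : Type*} [Fintype V] [LinearOrder V] (G : SimpleGraph V) :
    ∑ I : IndepSet G, (-1 : ℤ) ^ I.1.card = signedCount (Indep G) := by
  classical
  rw [signedCount, Finset.sum_subtype _ (p := Indep G) (by simp)]
  rfl

theorem signedCount_indep_torusGraph [Fintype ((ℤ × ℤ) ⧸ lat u v)]
    (hindep : u.1 * v.2 - u.2 * v.1 ≠ 0)
    (hlen : ∀ w ∈ lat u v, w ≠ 0 → 9 ≤ w.1 ^ 2 + w.2 ^ 2) :
    signedCount (Indep (torusGraph u v)) =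
      signedCount (fun P : Finset ((ℤ × ℤ) ⧸ lat u v) =>
        IsTilingVertexSet (torusEast u v) (torusNorth u v) ↑P) -
      (-1) ^ Int.gcd (u.1 - u.2) (v.1 - v.2) * theta (Int.gcd (u.1 - u.2) (v.1 - v.2)) *
        theta (Int.gcd (u.1 + u.2) (v.1 + v.2)) := by
  have hi : torusEast u v ≠ 0 := mk_ne_zero_of_sq_add_sq_lt hlen (by simp) (by norm_num)
  have hj : torusNorth u v ≠ 0 := mk_ne_zero_of_sq_add_sq_lt hlen (by simp) (by norm_num)
  have hji : torusNorth u v - torusEast u v ≠ 0 :=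
    mk_ne_zero_of_sq_add_sq_lt (w := (0, 1) - (1, 0)) hlen (by simp) (by norm_num)
  have hsteep : neSteep (torusEast u v) (torusNorth u v) ≠ 0 :=
    mk_ne_zero_of_sq_add_sq_lt (w := neSteep (1, 0) (0, 1)) hlen
      (by simp [neSteep]) (by norm_num [neSteep])
  have hflat : neFlat (torusEast u v) (torusNorth u v) ≠ 0 :=
    mk_ne_zero_of_sq_add_sq_lt (w := neFlat (1, 0) (0, 1)) hlen
      (by simp [neFlat]) (by norm_num [neFlat])
  have : NeZero (Int.gcd (u.1 - u.2) (v.1 - v.2)) := ⟨fun h => hindep <| by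
    obtain ⟨hu, hv⟩ := Int.gcd_eq_zero_iff.1 h
    rw [sub_eq_zero.1 hu, sub_eq_zero.1 hv, sub_self]⟩
  obtain ⟨k, hk⟩ := exists_diagonalIndex_torus u v
  rw [signedCount_congr fun σ => indep_torusGraph_iff hi hj]
  exact hk.signedCount_gridIndep hi hj hji hsteep hflat
    exists_zsmul_torusEast_add_zsmul_torusNorth_eq_zero
    exists_hom_apply_torusEast_eq_one_and_apply_torusNorth_eq_one

end Torus

/-! ### Interpolated grids in the plane -/

section Interpolation

variable {α β : ℤ → ℝ}

/-- The piecewise linear interpolation of a two-sided sequence. -/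
noncomputable def intInterp (α : ℤ → ℝ) (x : ℝ) : ℝ :=
  α ⌊x⌋ + Int.fract x * (α (⌊x⌋ + 1) - α ⌊x⌋)

theorem intInterp_intCast_add (α : ℤ → ℝ) (i : ℤ) {s : ℝ} (h0 : 0 ≤ s) (h1 : s < 1) :
    intInterp α (i + s) = α i + s * (α (i + 1) - α i) := by
  rw [intInterp, Int.floor_intCast_add, Int.fract_intCast_add, Int.floor_eq_zero_iff.2 ⟨h0, h1⟩,
    Int.fract_eq_self.2 ⟨h0, h1⟩, add_zero]

theorem intInterp_cast_add (α : ℤ → ℝ) (x : ℝ) :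
    intInterp (fun i => i + α i) x = x + intInterp α x := by
  simp only [intInterp]
  push_cast
  linear_combination Int.floor_add_fract x

theorem intInterp_cast_sub (α : ℤ → ℝ) (x : ℝ) :
    intInterp (fun i => i - α i) x = x - intInterp α x := by
  simp only [intInterp]
  push_cast
  linear_combination Int.floor_add_fract x

theorem monotone_intInterp (hα : Monotone α) : Monotone (intInterp α) := by
  intro x y hxy
  have hx : 0 ≤ α (⌊x⌋ + 1) - α ⌊x⌋ := sub_nonneg.2 (hα (by simp))
  have hy : 0 ≤ α (⌊y⌋ + 1) - α ⌊y⌋ := sub_nonneg.2 (hα (by simp))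
  rcases (Int.floor_le_floor hxy).eq_or_lt with heq | hlt
  · have hfract : Int.fract x ≤ Int.fract y := by simp only [Int.fract, heq]; linarith
    simp only [intInterp, heq] at hx ⊢
    gcongr
  · calc intInterp α x ≤ α ⌊x⌋ + 1 * (α (⌊x⌋ + 1) - α ⌊x⌋) := by
          rw [intInterp]; gcongr; exact (Int.fract_lt_one x).le
      _ = α (⌊x⌋ + 1) := by ring
      _ ≤ α ⌊y⌋ := hα hlt
      _ ≤ intInterp α y := le_add_of_nonneg_right (mul_nonneg (Int.fract_nonneg y) hy)

theorem abs_intInterp_sub_le (hα : ∀ i, |α (i + 1) - α i| ≤ 1) (x y : ℝ) :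
    |intInterp α x - intInterp α y| ≤ |x - y| := by
  have hadd : Monotone fun x => x + intInterp α x := by
    simp only [← intInterp_cast_add]
    refine monotone_intInterp (monotone_int_of_le_succ fun i => ?_)
    push_cast
    linarith [(abs_le.1 (hα i)).1]
  have hsub : Monotone fun x => x - intInterp α x := by
    simp only [← intInterp_cast_sub]
    refine monotone_intInterp (monotone_int_of_le_succ fun i => ?_)
    push_cast
    linarith [(abs_le.1 (hα i)).2]
  rcases le_total x y with hxy | hxy
  · rw [abs_sub_comm x, abs_of_nonneg (sub_nonneg.2 hxy), abs_le]
    constructor <;> linarith [hadd hxy, hsub hxy]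
  · rw [abs_of_nonneg (sub_nonneg.2 hxy), abs_le]
    constructor <;> linarith [hadd hxy, hsub hxy]

end Interpolation

section SkewGrid

variable {c : ℝ} {f g : ℝ → ℝ}

/-- The map `(x, y) ↦ (c x + g y, f x + c y)`, a perturbation of the dilation by `c`. -/
def skewGrid (c : ℝ) (f g : ℝ → ℝ) (p : ℝ × ℝ) : ℝ × ℝ :=
  (c * p.1 + g p.2, f p.1 + c * p.2)

variable (hc : 1 < c) (hf : ∀ x y, |f x - f y| ≤ |x - y|) (hg : ∀ x y, |g x - g y| ≤ |x - y|)
include hc hf hg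

theorem skewGrid_injective : Function.Injective (skewGrid c f g) := by
  rintro ⟨x, y⟩ ⟨x', y'⟩ h
  obtain ⟨h1, h2⟩ := Prod.ext_iff.1 h
  simp only [skewGrid] at h1 h2
  have hc0 : 0 < c := zero_lt_one.trans hc
  have hcx : c * |x - x'| ≤ |y - y'| := by
    calc c * |x - x'| = |g y' - g y| := by
          rw [← abs_of_pos hc0, ← abs_mul]; congr 1; linarith
      _ ≤ |y' - y| := hg y' y
      _ = |y - y'| := abs_sub_comm _ _
  have hcy : c * |y - y'| ≤ |x - x'| := by
    calc c * |y - y'| = |f x' - f x| := by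
          rw [← abs_of_pos hc0, ← abs_mul]; congr 1; linarith
      _ ≤ |x' - x| := hf x' x
      _ = |x - x'| := abs_sub_comm _ _
  have hx : |x - x'| = 0 := by nlinarith [abs_nonneg (x - x'), abs_nonneg (y - y')]
  have hy : |y - y'| = 0 := by nlinarith [abs_nonneg (x - x'), abs_nonneg (y - y')]
  rw [sub_eq_zero.1 (abs_eq_zero.1 hx), sub_eq_zero.1 (abs_eq_zero.1 hy)]

theorem skewGrid_surjective : Function.Surjective (skewGrid c f g) := by
  rintro ⟨a, b⟩
  have hc0 : 0 < c := zero_lt_one.trans hc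
  let F (x : ℝ) : ℝ := (a - g ((b - f x) / c)) / c
  have hF : ContractingWith (Real.toNNReal (1 / c)) F := by
    refine ⟨Real.toNNReal_lt_one.2 ((div_lt_one hc0).2 hc), LipschitzWith.of_dist_le' fun x y => ?_⟩
    rw [Real.dist_eq, Real.dist_eq]
    have hdiv : |(b - f y) / c - (b - f x) / c| = |f x - f y| / c := by
      rw [← sub_div, abs_div, abs_of_pos hc0, sub_sub_sub_cancel_left]
    calc |F x - F y| = |g ((b - f y) / c) - g ((b - f x) / c)| / c := by
          rw [← sub_div, abs_div, abs_of_pos hc0, sub_sub_sub_cancel_left]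
      _ ≤ |f x - f y| / c / c := div_le_div_of_nonneg_right ((hg _ _).trans_eq hdiv) hc0.le
      _ ≤ |f x - f y| / c :=
          div_le_div_of_nonneg_right (div_le_self (abs_nonneg _) hc.le) hc0.le
      _ ≤ |x - y| / c := div_le_div_of_nonneg_right (hf x y) hc0.le
      _ = 1 / c * |x - y| := by ring
  obtain ⟨x, hx⟩ : ∃ x, F x = x := ⟨_, hF.fixedPoint_isFixedPt⟩
  refine ⟨(x, (b - f x) / c), ?_⟩
  rw [div_eq_iff hc0.ne'] at hx
  ext
  · change c * x + g ((b - f x) / c) = a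
    linarith
  · change f x + c * ((b - f x) / c) = b
    field_simp
    ring

end SkewGrid

/-! ### The grid structure of a tiling vertex set -/

section DiagonalSteps

variable {V : Type*} [AddCommGroup V] {i j : V}

/-- The two edge vectors `i + 2j` and `2i + j` pointing north-east. Those pointing north-west are
`diagSteps (-i) j`. -/
def diagSteps (i j : V) : Set V := {neSteep i j, neFlat i j}

theorem diagSteps_neg_left (i j : V) : diagSteps (-i) j = {nwSteep i j, nwFlat i j} := by
  simp only [diagSteps, neSteep, neFlat, nwSteep, nwFlat]
  congr 1
  · abel
  · congr 1
    abel

namespace IsTilingVertexSet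

variable {P : Set V} {e e' f p : V}

theorem reflect (h : IsTilingVertexSet i j P) : IsTilingVertexSet (-i) j P where
  nonempty := h.nonempty
  add_left_notMem p hp hp' := h.add_left_notMem hp' (by simpa using hp)
  add_right_notMem := h.add_right_notMem
  northEast p hp := by
    convert h.northWest hp using 3 <;> simp only [neSteep, neFlat, nwSteep, nwFlat] <;> abel
  southWest p hp := by
    convert h.southEast hp using 3 <;> simp only [neSteep, neFlat, nwSteep, nwFlat] <;> abel
  northWest p hp := by
    convert h.northEast hp using 3 <;> simp only [neSteep, neFlat, nwSteep, nwFlat] <;> abel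
  southEast p hp := by
    convert h.southWest hp using 3 <;> simp only [neSteep, neFlat, nwSteep, nwFlat] <;> abel

variable (h : IsTilingVertexSet i j P)
include h

theorem exists_add_mem (hp : p ∈ P) : ∃ e ∈ diagSteps i j, p + e ∈ P := by
  simpa [diagSteps] using h.northEast hp

theorem exists_sub_mem (hp : p ∈ P) : ∃ e ∈ diagSteps i j, p - e ∈ P := by
  simpa [diagSteps] using h.southWest hp

theorem add_neFlat_notMem (hp : p + neSteep i j ∈ P) : p + neFlat i j ∉ P := by
  intro hp'
  rcases h.northWest hp' with hq | hq <;>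
    exact h.not_adjacent hp hq (by simp only [neSteep, neFlat, nwSteep, nwFlat]; grind)

theorem eq_of_add_mem (he : e ∈ diagSteps i j) (he' : e' ∈ diagSteps i j) (hpe : p + e ∈ P)
    (hpe' : p + e' ∈ P) : e = e' := by
  rcases he with rfl | rfl <;> rcases he' with rfl | rfl
  · rfl
  · exact (h.add_neFlat_notMem hpe hpe').elim
  · exact (h.add_neFlat_notMem hpe' hpe).elim
  · rfl

theorem eq_of_sub_mem (he : e ∈ diagSteps i j) (he' : e' ∈ diagSteps i j) (hpe : p - e ∈ P)
    (hpe' : p - e' ∈ P) : e = e' := by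
  have hneg : ∀ e ∈ diagSteps i j, -e ∈ diagSteps (-i) (-j) := by
    rintro e (rfl | rfl)
    · exact .inl (by simp only [neSteep]; abel)
    · exact .inr (by simp only [neFlat, Set.mem_singleton_iff]; abel)
  rw [sub_eq_add_neg] at hpe hpe'
  exact neg_injective (h.neg.eq_of_add_mem (hneg e he) (hneg e' he') hpe hpe')

theorem add_add_mem_of_neFlat (hp : p ∈ P) (hne : p + neFlat i j ∈ P) (hnw : p + nwFlat i j ∈ P) :
    p + neFlat i j + nwFlat i j ∈ P := by
  rcases h.northWest hne with h1 | h1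
  swap
  · exact h1
  rcases h.northEast hnw with h2 | h2
  swap
  · rwa [add_right_comm]
  rcases h.southWest h1 with h3 | h3
  · exact (h.not_adjacent hp h3 (by simp only [neSteep, neFlat, nwSteep]; grind)).elim
  · exact (h.not_adjacent h3 h2 (by simp only [neSteep, neFlat, nwSteep, nwFlat]; grind)).elim

theorem add_add_mem (hp : p ∈ P) (he : e ∈ diagSteps i j) (hf : f ∈ diagSteps (-i) j)
    (hpe : p + e ∈ P) (hpf : p + f ∈ P) : p + e + f ∈ P := by
  rw [diagSteps_neg_left] at hf
  rcases he with rfl | rfl <;> rcases hf with rfl | rfl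
  · refine (h.northWest hpe).resolve_right fun hq => h.not_adjacent hpf hq ?_
    simp only [neSteep, nwSteep, nwFlat]
    grind
  · rw [add_right_comm]
    refine (h.northEast hpf).resolve_right fun hq => h.not_adjacent hpe hq ?_
    simp only [neSteep, neFlat, nwFlat]
    grind
  · refine (h.northWest hpe).resolve_right fun hq => h.not_adjacent hpf hq ?_
    simp only [neFlat, nwSteep, nwFlat]
    grind
  · exact h.add_add_mem_of_neFlat hp hpe hpf

/-- The vector of the edge leaving the vertex `p` to the north-east. -/
noncomputable def neStep (p : P) : V := (h.exists_add_mem p.2).choose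

theorem neStep_mem (p : P) : h.neStep p ∈ diagSteps i j :=
  (h.exists_add_mem p.2).choose_spec.1

theorem add_neStep_mem (p : P) : p + h.neStep p ∈ P :=
  (h.exists_add_mem p.2).choose_spec.2

theorem bijective_add_neStep :
    Function.Bijective fun p : P => (⟨p + h.neStep p, h.add_neStep_mem p⟩ : P) := by
  constructor
  · intro p q hpq
    replace hpq : p + h.neStep p = q + h.neStep q := congrArg Subtype.val hpq
    have hp : p + h.neStep p - h.neStep p ∈ P := by simp
    have hq : p + h.neStep p - h.neStep q ∈ P := by simp [hpq]
    rw [h.eq_of_sub_mem (h.neStep_mem p) (h.neStep_mem q) hp hq] at hpq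
    exact Subtype.ext (add_right_cancel hpq)
  · intro q
    obtain ⟨e, he, hq⟩ := h.exists_sub_mem q.2
    have hstep : h.neStep ⟨q - e, hq⟩ = e :=
      h.eq_of_add_mem (h.neStep_mem _) he (h.add_neStep_mem ⟨q - e, hq⟩) (by simp)
    exact ⟨⟨q - e, hq⟩, Subtype.ext (by simp [hstep])⟩

/-- The permutation of a tiling vertex set moving every vertex to the other end of the edge which
leaves it to the north-east. -/
noncomputable def neNext : Equiv.Perm P :=
  Equiv.ofBijective _ h.bijective_add_neStep

/-- The analogue of `neNext` in the north-west direction. -/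
noncomputable def nwNext : Equiv.Perm P := h.reflect.neNext

theorem neNext_sub_mem (p : P) :
    (h.neNext p : V) - p ∈ diagSteps i j := by
  simpa [neNext] using h.neStep_mem p

theorem neNext_eq {p q : P} (hpq : (q : V) - p ∈ diagSteps i j) :
    h.neNext p = q := by
  have heq := h.eq_of_add_mem (p := (p : V)) (h.neNext_sub_mem p) hpq (by simp) (by simp)
  exact Subtype.ext (sub_left_injective heq)

theorem nwNext_sub_mem (p : P) :
    (h.nwNext p : V) - p ∈ diagSteps (-i) j :=
  h.reflect.neNext_sub_mem p

theorem nwNext_eq {p q : P} (hpq : (q : V) - p ∈ diagSteps (-i) j) :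
    h.nwNext p = q :=
  h.reflect.neNext_eq hpq

theorem commute_neNext_nwNext : Commute h.neNext h.nwNext := by
  ext p
  have he := h.neNext_sub_mem p
  have hf := h.nwNext_sub_mem p
  have hmem := h.add_add_mem p.2 he hf (by simp) (by simp)
  have hne : h.neNext (h.nwNext p) = ⟨_, hmem⟩ := h.neNext_eq <| by
    convert he using 1
    simp only
    abel
  have hnw : h.nwNext (h.neNext p) = ⟨_, hmem⟩ := h.nwNext_eq (by simpa using hf)
  simp only [Equiv.Perm.mul_apply, hne, hnw]

/-- The vertex reached from `p` by `m` steps to the north-east and `n` steps to the north-west. -/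
noncomputable def gridVertex (p : P) (m n : ℤ) : P :=
  (h.neNext ^ m) ((h.nwNext ^ n) p)

theorem gridVertex_add_one_left (p : P) (m n : ℤ) :
    h.gridVertex p (m + 1) n = h.neNext (h.gridVertex p m n) := by
  rw [gridVertex, zpow_add_one, (Commute.refl _).zpow_left m |>.eq, Equiv.Perm.mul_apply,
    gridVertex]

theorem gridVertex_add_one_right (p : P) (m n : ℤ) :
    h.gridVertex p m (n + 1) = h.nwNext (h.gridVertex p m n) := by
  rw [gridVertex, zpow_add_one, (Commute.refl _).zpow_left n |>.eq, Equiv.Perm.mul_apply,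
    ← Equiv.Perm.mul_apply, (h.commute_neNext_nwNext.zpow_left m).eq, Equiv.Perm.mul_apply,
    gridVertex]

theorem isTilingVertexSet_gridVertex (p : P) :
    IsTilingVertexSet i j {q | ∃ m n, h.gridVertex p m n = q} where
  nonempty := ⟨_, 0, 0, rfl⟩
  add_left_notMem := by
    rintro _ ⟨m, n, rfl⟩ ⟨m', n', hq⟩
    exact h.add_left_notMem (h.gridVertex p m n).2 (hq ▸ (h.gridVertex p m' n').2)
  add_right_notMem := by
    rintro _ ⟨m, n, rfl⟩ ⟨m', n', hq⟩
    exact h.add_right_notMem (h.gridVertex p m n).2 (hq ▸ (h.gridVertex p m' n').2)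
  northEast := by
    rintro _ ⟨m, n, rfl⟩
    have hstep := h.neNext_sub_mem (h.gridVertex p m n)
    rw [← gridVertex_add_one_left] at hstep
    exact hstep.imp (fun he => ⟨m + 1, n, eq_add_of_sub_eq' he⟩)
      fun he => ⟨m + 1, n, eq_add_of_sub_eq' he⟩
  southWest := by
    rintro _ ⟨m, n, rfl⟩
    have hstep := h.neNext_sub_mem (h.gridVertex p (m - 1) n)
    rw [← gridVertex_add_one_left, sub_add_cancel] at hstep
    exact hstep.imp (fun he => ⟨m - 1, n, (sub_eq_of_eq_add (eq_add_of_sub_eq' he)).symm⟩)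
      fun he => ⟨m - 1, n, (sub_eq_of_eq_add (eq_add_of_sub_eq' he)).symm⟩
  northWest := by
    rintro _ ⟨m, n, rfl⟩
    have hstep := h.nwNext_sub_mem (h.gridVertex p m n)
    rw [← gridVertex_add_one_right, diagSteps_neg_left] at hstep
    exact hstep.imp (fun he => ⟨m, n + 1, eq_add_of_sub_eq' he⟩)
      fun he => ⟨m, n + 1, eq_add_of_sub_eq' he⟩
  southEast := by
    rintro _ ⟨m, n, rfl⟩
    have hstep := h.nwNext_sub_mem (h.gridVertex p m (n - 1))
    rw [← gridVertex_add_one_right, sub_add_cancel, diagSteps_neg_left] at hstep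
    exact hstep.imp (fun he => ⟨m, n - 1, (sub_eq_of_eq_add (eq_add_of_sub_eq' he)).symm⟩)
      fun he => ⟨m, n - 1, (sub_eq_of_eq_add (eq_add_of_sub_eq' he)).symm⟩

theorem exists_gridVertex_eq
    (hgen : AddSubgroup.closure {i, j} = ⊤) (p q : P) : ∃ m n, h.gridVertex p m n = q := by
  have hrange := (h.isTilingVertexSet_gridVertex p).eq_of_subset hgen
    (by rintro _ ⟨m, n, rfl⟩; exact (h.gridVertex p m n).2)
    fun q hq => ⟨h.add_left_notMem hq, h.add_right_notMem hq⟩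
  obtain ⟨m, n, hq⟩ : (q : V) ∈ {q : V | ∃ m n, h.gridVertex p m n = q} := by
    rw [hrange]
    exact q.2
  exact ⟨m, n, Subtype.ext hq⟩

end IsTilingVertexSet

end DiagonalSteps

/-! ### Rhombi seen from their lowest vertex -/

section PlacedRhombus

/-- The edge vector of a rhombus leaving its lowest vertex to the north-west; the one leaving it to
the north-east is `edgeVec1`. -/
def nwEdge : Fin 4 → ℤ × ℤ := ![(-1, 2), (-2, 1), (-2, 1), (-1, 2)]

/-- The displacement from the corner of a rhombus to its lowest vertex. -/
def bottomOffset : Fin 4 → ℤ × ℤ := ![0, (2, -1), (2, -1), 0]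

/-- The lowest vertex of a rhombus. -/
def bottom (r : PlacedRhombus) : ℤ × ℤ := r.corner + bottomOffset r.kind

theorem bottom_rTranslate (w : ℤ × ℤ) (r : PlacedRhombus) :
    bottom (rTranslate w r) = bottom r + w :=
  add_right_comm _ _ _

theorem PlacedRhombus.ext_bottom {r r' : PlacedRhombus} (hbottom : bottom r = bottom r')
    (hkind : r.kind = r'.kind) : r = r' := by
  obtain ⟨c, k⟩ := r
  obtain ⟨c', k'⟩ := r'
  obtain rfl : k = k' := hkind
  exact congrArg (PlacedRhombus.mk · k) (add_right_cancel hbottom)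

theorem kind_eq_of_edges_eq {k k' : Fin 4} (hne : edgeVec1 k = edgeVec1 k')
    (hnw : nwEdge k = nwEdge k') : k = k' := by
  revert k k'
  decide

theorem corner_add_eq_bottom_add (r : PlacedRhombus) :
    (∀ s t : ℝ, toR r.corner + s • toR (edgeVec1 r.kind) + t • toR (edgeVec2 r.kind) =
      toR (bottom r) + s • toR (edgeVec1 r.kind) + t • toR (nwEdge r.kind)) ∨
    ∀ s t : ℝ, toR r.corner + s • toR (edgeVec1 r.kind) + t • toR (edgeVec2 r.kind) =
      toR (bottom r) + s • toR (edgeVec1 r.kind) + (1 - t) • toR (nwEdge r.kind) := by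
  have hkind : ∀ k : Fin 4, nwEdge k = edgeVec2 k ∧ bottomOffset k = 0 ∨
      nwEdge k = -edgeVec2 k ∧ bottomOffset k = edgeVec2 k := by decide
  refine (hkind r.kind).imp (fun ⟨hedge, hoffset⟩ s t => ?_) fun ⟨hedge, hoffset⟩ s t => ?_
  · simp only [bottom, hedge, hoffset, add_zero]
  · ext <;> simp [bottom, hedge, hoffset, toR] <;> ring

theorem mem_closedCell_iff {r : PlacedRhombus} {x : ℝ × ℝ} : x ∈ closedCell r ↔
    ∃ s t : ℝ, 0 ≤ s ∧ s ≤ 1 ∧ 0 ≤ t ∧ t ≤ 1 ∧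
      x = toR (bottom r) + s • toR (edgeVec1 r.kind) + t • toR (nwEdge r.kind) := by
  rcases corner_add_eq_bottom_add r with h | h <;> simp only [closedCell, Set.mem_ofPred_eq, h]
  constructor <;> rintro ⟨s, t, hs0, hs1, ht0, ht1, rfl⟩ <;>
    exact ⟨s, 1 - t, hs0, hs1, by linarith, by linarith, by simp⟩

theorem mem_openCell_iff {r : PlacedRhombus} {x : ℝ × ℝ} : x ∈ openCell r ↔
    ∃ s t : ℝ, 0 < s ∧ s < 1 ∧ 0 < t ∧ t < 1 ∧
      x = toR (bottom r) + s • toR (edgeVec1 r.kind) + t • toR (nwEdge r.kind) := by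
  rcases corner_add_eq_bottom_add r with h | h <;> simp only [openCell, Set.mem_ofPred_eq, h]
  constructor <;> rintro ⟨s, t, hs0, hs1, ht0, ht1, rfl⟩ <;>
    exact ⟨s, 1 - t, hs0, hs1, by linarith, by linarith, by simp⟩

end PlacedRhombus

/-! ### From vertex sets to tilings of the plane -/

section PlaneSteps

theorem diagSteps_plane : diagSteps (1, 0) (0, 1) = ({(1, 2), (2, 1)} : Set (ℤ × ℤ)) := by
  simp [diagSteps, neSteep, neFlat]

theorem diagSteps_plane_neg : diagSteps (-(1, 0)) (0, 1) = ({(-1, 2), (-2, 1)} : Set (ℤ × ℤ)) := by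
  simp [diagSteps, neSteep, neFlat]

theorem edgeVec1_mem_diagSteps (k : Fin 4) : edgeVec1 k ∈ diagSteps (1, 0) (0, 1) := by
  rw [diagSteps_plane]
  fin_cases k <;> simp [edgeVec1]

theorem nwEdge_mem_diagSteps (k : Fin 4) : nwEdge k ∈ diagSteps (-(1, 0)) (0, 1) := by
  rw [diagSteps_plane_neg]
  fin_cases k <;> simp [nwEdge]

theorem exists_kind_of_mem_diagSteps {e f : ℤ × ℤ} (he : e ∈ diagSteps (1, 0) (0, 1))
    (hf : f ∈ diagSteps (-(1, 0)) (0, 1)) : ∃ k, edgeVec1 k = e ∧ nwEdge k = f := by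
  rw [diagSteps_plane] at he
  rw [diagSteps_plane_neg] at hf
  rcases he with rfl | rfl <;> rcases hf with rfl | rfl
  exacts [⟨0, rfl, rfl⟩, ⟨2, rfl, rfl⟩, ⟨3, rfl, rfl⟩, ⟨1, rfl, rfl⟩]

theorem closure_plane_generators :
    AddSubgroup.closure {((1, 0) : ℤ × ℤ), (0, 1)} = ⊤ := by
  refine (AddSubgroup.eq_top_iff' _).2 fun x => ?_
  rw [AddSubgroup.mem_closure_pair]
  exact ⟨x.1, x.2, by simp⟩

end PlaneSteps

/-- The rhombi whose two lower edges join points of `S`. -/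
def rhombiOn (S : Set (ℤ × ℤ)) : Set PlacedRhombus :=
  {r | bottom r ∈ S ∧ bottom r + edgeVec1 r.kind ∈ S ∧ bottom r + nwEdge r.kind ∈ S}

/-- The coordinates `(x + y, y - x)`, in which edges to the north-east add `3` to the first
coordinate and change the second by `±1`, while edges to the north-west do the opposite. -/
def diagCoord (x : ℝ × ℝ) : ℝ × ℝ := (x.1 + x.2, x.2 - x.1)

theorem diagCoord_injective : Function.Injective diagCoord := by
  intro x y h
  obtain ⟨h1, h2⟩ := Prod.ext_iff.1 h
  simp only [diagCoord] at h1 h2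
  ext <;> linarith

namespace IsTilingVertexSet

variable {S : Set (ℤ × ℤ)} (h : IsTilingVertexSet (1, 0) (0, 1) S)
include h

theorem bijOn_bottom : Set.BijOn bottom (rhombiOn S) S := by
  refine ⟨fun r hr => hr.1, fun r hr r' hr' hbottom => ?_, fun p hp => ?_⟩
  · refine PlacedRhombus.ext_bottom hbottom (kind_eq_of_edges_eq ?_ ?_)
    · exact h.eq_of_add_mem (edgeVec1_mem_diagSteps _) (edgeVec1_mem_diagSteps _) hr.2.1
        (hbottom ▸ hr'.2.1)
    · exact h.reflect.eq_of_add_mem (nwEdge_mem_diagSteps _) (nwEdge_mem_diagSteps _) hr.2.2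
        (hbottom ▸ hr'.2.2)
  · obtain ⟨e, he, hpe⟩ := h.exists_add_mem hp
    obtain ⟨f, hf, hpf⟩ := h.reflect.exists_add_mem hp
    obtain ⟨k, rfl, rfl⟩ := exists_kind_of_mem_diagSteps he hf
    have hbottom : bottom ⟨p - bottomOffset k, k⟩ = p := sub_add_cancel _ _
    refine ⟨⟨p - bottomOffset k, k⟩, ⟨?_, ?_, ?_⟩, hbottom⟩ <;> rwa [hbottom]

theorem neNext_eq_bottom_add {r : PlacedRhombus} (hr : r ∈ rhombiOn S) {p : S}
    (hp : bottom r = p) : (h.neNext p : ℤ × ℤ) = bottom r + edgeVec1 r.kind := by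
  rw [h.neNext_eq (q := ⟨_, hr.2.1⟩)]
  simpa [hp] using edgeVec1_mem_diagSteps r.kind

theorem nwNext_eq_bottom_add {r : PlacedRhombus} (hr : r ∈ rhombiOn S) {p : S}
    (hp : bottom r = p) : (h.nwNext p : ℤ × ℤ) = bottom r + nwEdge r.kind := by
  rw [h.nwNext_eq (q := ⟨_, hr.2.2⟩)]
  simpa [hp] using nwEdge_mem_diagSteps r.kind

/-- The first diagonal coordinate along the north-west path through `p`. -/
noncomputable def nwProfile (p : S) (n : ℤ) : ℝ := (diagCoord (toR (h.gridVertex p 0 n))).1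

/-- The second diagonal coordinate along the north-east path through `p`. -/
noncomputable def neProfile (p : S) (m : ℤ) : ℝ := (diagCoord (toR (h.gridVertex p m 0))).2

theorem diagCoord_neNext (p : S) : (diagCoord (toR (h.neNext p))).1 = (diagCoord (toR p)).1 + 3 ∧
    |(diagCoord (toR (h.neNext p))).2 - (diagCoord (toR p)).2| ≤ 1 := by
  have hstep := h.neNext_sub_mem p
  rw [diagSteps_plane] at hstep
  rcases hstep with hstep | hstep <;> rw [eq_add_of_sub_eq' hstep] <;>
    simp only [diagCoord, toR, Prod.fst_add, Prod.snd_add, Int.cast_add, abs_le] <;>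
    norm_num <;> grind

theorem diagCoord_nwNext (p : S) : (diagCoord (toR (h.nwNext p))).2 = (diagCoord (toR p)).2 + 3 ∧
    |(diagCoord (toR (h.nwNext p))).1 - (diagCoord (toR p)).1| ≤ 1 := by
  have hstep := h.nwNext_sub_mem p
  rw [diagSteps_plane_neg] at hstep
  rcases hstep with hstep | hstep <;> rw [eq_add_of_sub_eq' hstep] <;>
    simp only [diagCoord, toR, Prod.fst_add, Prod.snd_add, Int.cast_add, abs_le] <;>
    norm_num <;> grind

theorem abs_neProfile_sub_le (p : S) (m : ℤ) : |h.neProfile p (m + 1) - h.neProfile p m| ≤ 1 := by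
  rw [neProfile, gridVertex_add_one_left]
  exact (h.diagCoord_neNext _).2

theorem abs_nwProfile_sub_le (p : S) (n : ℤ) : |h.nwProfile p (n + 1) - h.nwProfile p n| ≤ 1 := by
  rw [nwProfile, gridVertex_add_one_right]
  exact (h.diagCoord_nwNext _).2

theorem diagCoord_gridVertex (p : S) (m n : ℤ) : diagCoord (toR (h.gridVertex p m n)) =
    (3 * m + h.nwProfile p n, h.neProfile p m + 3 * n) := by
  have hfst : Function.Periodic (fun m => (diagCoord (toR (h.gridVertex p m n))).1 - 3 * m) 1 := by
    intro m
    simp only [gridVertex_add_one_left, h.diagCoord_neNext]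
    push_cast
    ring
  have hsnd : Function.Periodic (fun n => (diagCoord (toR (h.gridVertex p m n))).2 - 3 * n) 1 := by
    intro n
    simp only [gridVertex_add_one_right, h.diagCoord_nwNext]
    push_cast
    ring
  have h1 := hfst.int_mul_eq m
  have h2 := hsnd.int_mul_eq n
  simp only [mul_one, Int.cast_id, Int.cast_zero, mul_zero, sub_zero] at h1 h2
  ext
  · simp only [nwProfile]
    linarith
  · simp only [neProfile]
    linarith

/-- The parametrisation of the plane, in diagonal coordinates, carrying the unit squares of `ℤ²` to
the rhombi with vertices in `S`. -/
noncomputable def gridMap (p : S) : ℝ × ℝ → ℝ × ℝ :=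
  skewGrid 3 (intInterp (h.neProfile p)) (intInterp (h.nwProfile p))

theorem bijective_gridMap (p : S) : Function.Bijective (h.gridMap p) :=
  have hne := abs_intInterp_sub_le (h.abs_neProfile_sub_le p)
  have hnw := abs_intInterp_sub_le (h.abs_nwProfile_sub_le p)
  ⟨skewGrid_injective (by norm_num) hne hnw, skewGrid_surjective (by norm_num) hne hnw⟩

theorem diagCoord_rhombus_point (p : S) {r : PlacedRhombus} (hr : r ∈ rhombiOn S) {m n : ℤ}
    (hmn : h.gridVertex p m n = bottom r) {s t : ℝ} (hs0 : 0 ≤ s) (hs1 : s < 1) (ht0 : 0 ≤ t)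
    (ht1 : t < 1) :
    diagCoord (toR (bottom r) + s • toR (edgeVec1 r.kind) + t • toR (nwEdge r.kind)) =
      h.gridMap p (m + s, n + t) := by
  have hbottom := h.diagCoord_gridVertex p m n
  have hne := h.diagCoord_gridVertex p (m + 1) n
  have hnw := h.diagCoord_gridVertex p m (n + 1)
  rw [gridVertex_add_one_left, h.neNext_eq_bottom_add hr hmn.symm] at hne
  rw [gridVertex_add_one_right, h.nwNext_eq_bottom_add hr hmn.symm] at hnw
  rw [hmn] at hbottom
  rw [gridMap, skewGrid, intInterp_intCast_add _ _ hs0 hs1, intInterp_intCast_add _ _ ht0 ht1]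
  simp only [diagCoord, toR, Prod.mk.injEq, Prod.fst_add, Prod.snd_add, Prod.smul_fst,
    Prod.smul_snd, smul_eq_mul, Int.cast_add, Int.cast_one] at hbottom hne hnw ⊢
  constructor
  · linear_combination hbottom.1 + s * (hne.1 - hbottom.1) + t * (hnw.1 - hbottom.1)
  · linear_combination hbottom.2 + s * (hne.2 - hbottom.2) + t * (hnw.2 - hbottom.2)

theorem iUnion_closedCell_rhombiOn : ⋃ r ∈ rhombiOn S, closedCell r = Set.univ := by
  refine Set.eq_univ_of_forall fun x => ?_
  obtain ⟨p, hp⟩ := h.nonempty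
  obtain ⟨y, hy⟩ := (h.bijective_gridMap ⟨p, hp⟩).surjective (diagCoord x)
  obtain ⟨r, hr, hbottom⟩ := h.bijOn_bottom.surjOn (h.gridVertex ⟨p, hp⟩ ⌊y.1⌋ ⌊y.2⌋).2
  refine Set.mem_biUnion hr (mem_closedCell_iff.2 ⟨Int.fract y.1, Int.fract y.2,
    Int.fract_nonneg _, (Int.fract_lt_one _).le, Int.fract_nonneg _, (Int.fract_lt_one _).le,
    diagCoord_injective ?_⟩)
  rw [h.diagCoord_rhombus_point _ hr hbottom.symm (Int.fract_nonneg _) (Int.fract_lt_one _)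
    (Int.fract_nonneg _) (Int.fract_lt_one _), Int.floor_add_fract, Int.floor_add_fract, ← hy]

theorem eq_of_mem_openCell {r r' : PlacedRhombus} (hr : r ∈ rhombiOn S) (hr' : r' ∈ rhombiOn S)
    {x : ℝ × ℝ} (hx : x ∈ openCell r) (hx' : x ∈ openCell r') : r = r' := by
  obtain ⟨s, t, hs0, hs1, ht0, ht1, hst⟩ := mem_openCell_iff.1 hx
  obtain ⟨s', t', hs0', hs1', ht0', ht1', hst'⟩ := mem_openCell_iff.1 hx'
  have p : S := ⟨_, hr.1⟩
  obtain ⟨m, n, hmn⟩ := h.exists_gridVertex_eq closure_plane_generators p ⟨_, hr.1⟩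
  obtain ⟨m', n', hmn'⟩ := h.exists_gridVertex_eq closure_plane_generators p ⟨_, hr'.1⟩
  rw [Subtype.ext_iff] at hmn hmn'
  have hparam : ((m + s, n + t) : ℝ × ℝ) = (m' + s', n' + t') := by
    apply (h.bijective_gridMap p).injective
    rw [← h.diagCoord_rhombus_point p hr hmn hs0.le hs1 ht0.le ht1,
      ← h.diagCoord_rhombus_point p hr' hmn' hs0'.le hs1' ht0'.le ht1', ← hst, ← hst']
  have floor_eq (a : ℤ) {b : ℝ} (h0 : 0 < b) (h1 : b < 1) : ⌊a + b⌋ = a := by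
    rw [Int.floor_intCast_add, Int.floor_eq_zero_iff.2 ⟨h0.le, h1⟩, add_zero]
  obtain ⟨hm, hn⟩ := Prod.ext_iff.1 hparam
  replace hm := congrArg Int.floor hm
  replace hn := congrArg Int.floor hn
  rw [floor_eq m hs0 hs1, floor_eq m' hs0' hs1'] at hm
  rw [floor_eq n ht0 ht1, floor_eq n' ht0' ht1'] at hn
  subst hm hn
  exact h.bijOn_bottom.injOn hr hr' (hmn.symm.trans hmn')

theorem isTiling_rhombiOn {Λ : AddSubgroup (ℤ × ℤ)} (hS : ∀ w ∈ Λ, ∀ p ∈ S, p + w ∈ S) :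
    IsTiling Λ (rhombiOn S) := by
  refine ⟨?_, fun r hr r' hr' hne => ?_, h.iUnion_closedCell_rhombiOn⟩
  · rintro w hw r ⟨hbottom, hne, hnw⟩
    simp only [rhombiOn, Set.mem_ofPred_eq, bottom_rTranslate, add_right_comm _ w]
    exact ⟨hS w hw _ hbottom, hS w hw _ hne, hS w hw _ hnw⟩
  · exact Set.disjoint_iff_inter_eq_empty.1 <| Set.disjoint_left.2 fun x hx hx' =>
      hne (h.eq_of_mem_openCell hr hr' hx hx')

end IsTilingVertexSet

/-! ### From tilings of the plane to vertex sets -/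

section CellCoordinates

/-- The pairing of an integral covector with a vector. -/
def pairing {R : Type*} [Ring R] (c : ℤ × ℤ) (x : R × R) : R := c.1 * x.1 + c.2 * x.2

/-- The covector vanishing on the north-west edge of a rhombus, scaled so that its value on the
north-east edge is the area. -/
def neCovector : Fin 4 → ℤ × ℤ := ![(2, 1), (1, 2), (1, 2), (2, 1)]

/-- The covector vanishing on the north-east edge of a rhombus, scaled so that its value on the
north-west edge is the area. -/
def nwCovector : Fin 4 → ℤ × ℤ := ![(-2, 1), (-1, 2), (-2, 1), (-1, 2)]

/-- The areas of the four rhombi. -/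
def rhombusArea : Fin 4 → ℤ := ![4, 4, 5, 5]

theorem rhombusArea_pos (k : Fin 4) : (0 : ℝ) < rhombusArea k := by
  fin_cases k <;> simp [rhombusArea]

theorem eq_add_smul_edges_iff (k : Fin 4) (b x : ℝ × ℝ) (s t : ℝ) :
    x = b + s • toR (edgeVec1 k) + t • toR (nwEdge k) ↔
      pairing (neCovector k) (x - b) / rhombusArea k = s ∧
        pairing (nwCovector k) (x - b) / rhombusArea k = t := by
  rw [div_eq_iff (rhombusArea_pos k).ne', div_eq_iff (rhombusArea_pos k).ne', Prod.ext_iff]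
  constructor <;> rintro ⟨h1, h2⟩ <;> fin_cases k <;> constructor <;>
    simp [pairing, neCovector, nwCovector, rhombusArea, toR, edgeVec1, nwEdge] at h1 h2 ⊢ <;>
    linarith

theorem mem_closedCell_iff_pairing {r : PlacedRhombus} {x : ℝ × ℝ} : x ∈ closedCell r ↔
    pairing (neCovector r.kind) (x - toR (bottom r)) ∈ Set.Icc (0 : ℝ) (rhombusArea r.kind) ∧
      pairing (nwCovector r.kind) (x - toR (bottom r)) ∈ Set.Icc (0 : ℝ) (rhombusArea r.kind) := by
  have hpos := rhombusArea_pos r.kind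
  simp only [mem_closedCell_iff, eq_add_smul_edges_iff, Set.mem_Icc]
  constructor
  · rintro ⟨s, t, hs0, hs1, ht0, ht1, rfl, rfl⟩
    rw [div_le_one hpos] at hs1 ht1
    rw [le_div_iff₀ hpos, zero_mul] at hs0 ht0
    exact ⟨⟨hs0, hs1⟩, ht0, ht1⟩
  · rintro ⟨⟨hs0, hs1⟩, ht0, ht1⟩
    exact ⟨_, _, div_nonneg hs0 hpos.le, (div_le_one hpos).2 hs1, div_nonneg ht0 hpos.le,
      (div_le_one hpos).2 ht1, rfl, rfl⟩

theorem mem_openCell_iff_pairing {r : PlacedRhombus} {x : ℝ × ℝ} : x ∈ openCell r ↔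
    pairing (neCovector r.kind) (x - toR (bottom r)) ∈ Set.Ioo (0 : ℝ) (rhombusArea r.kind) ∧
      pairing (nwCovector r.kind) (x - toR (bottom r)) ∈ Set.Ioo (0 : ℝ) (rhombusArea r.kind) := by
  have hpos := rhombusArea_pos r.kind
  simp only [mem_openCell_iff, eq_add_smul_edges_iff, Set.mem_Ioo]
  constructor
  · rintro ⟨s, t, hs0, hs1, ht0, ht1, rfl, rfl⟩
    rw [div_lt_one hpos] at hs1 ht1
    rw [lt_div_iff₀ hpos, zero_mul] at hs0 ht0
    exact ⟨⟨hs0, hs1⟩, ht0, ht1⟩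
  · rintro ⟨⟨hs0, hs1⟩, ht0, ht1⟩
    exact ⟨_, _, div_pos hs0 hpos, (div_lt_one hpos).2 hs1, div_pos ht0 hpos,
      (div_lt_one hpos).2 ht1, rfl, rfl⟩

theorem toR_mem_openCell_iff {r : PlacedRhombus} {q : ℤ × ℤ} : toR q ∈ openCell r ↔
    pairing (neCovector r.kind) (q - bottom r) ∈ Set.Ioo 0 (rhombusArea r.kind) ∧
      pairing (nwCovector r.kind) (q - bottom r) ∈ Set.Ioo 0 (rhombusArea r.kind) := by
  simp only [mem_openCell_iff_pairing, pairing, toR, Set.mem_Ioo, Prod.fst_sub, Prod.snd_sub]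
  norm_cast

end CellCoordinates

section Nudge

/-- The four extreme positions on the boundary of a rhombus. -/
inductive Side
  | bottom
  | top
  | left
  | right

/-- The unit vector pointing into a rhombus from its vertex on the given side. -/
def Side.inward : Side → ℤ × ℤ
  | bottom => (0, 1)
  | top => (0, -1)
  | left => (1, 0)
  | right => (-1, 0)

/-- The vertex of a rhombus on the given side. -/
def vertexAt (r : PlacedRhombus) : Side → ℤ × ℤ
  | .bottom => bottom r
  | .top => bottom r + edgeVec1 r.kind + nwEdge r.kind
  | .left => bottom r + nwEdge r.kind
  | .right => bottom r + edgeVec1 r.kind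

/-- A lattice point moved slightly away from the given side. The factor `1/10` makes the moved point
avoid all edges of rhombi. -/
noncomputable def nudge (q : ℤ × ℤ) (e : Side) : ℝ × ℝ := toR q + (1 / 10 : ℝ) • toR e.inward

variable {r : PlacedRhombus} {q : ℤ × ℤ}

theorem pairing_nudge_sub (c q b : ℤ × ℤ) (e : Side) : pairing c (nudge q e - toR b) =
    ((10 * pairing c (q - b) + pairing c e.inward : ℤ) : ℝ) / 10 := by
  simp only [pairing, nudge, toR, Prod.fst_sub, Prod.snd_sub, Prod.fst_add, Prod.snd_add,
    Prod.smul_fst, Prod.smul_snd, smul_eq_mul]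
  push_cast
  ring

theorem nudge_mem_openCell_iff (e : Side) : nudge q e ∈ openCell r ↔
    10 * pairing (neCovector r.kind) (q - bottom r) + pairing (neCovector r.kind) e.inward ∈
        Set.Ioo 0 (10 * rhombusArea r.kind) ∧
      10 * pairing (nwCovector r.kind) (q - bottom r) + pairing (nwCovector r.kind) e.inward ∈
        Set.Ioo 0 (10 * rhombusArea r.kind) := by
  simp only [mem_openCell_iff_pairing, pairing_nudge_sub, Set.mem_Ioo, Nat.ofNat_pos,
    lt_div_iff₀, div_lt_iff₀, mul_comm _ (10 : ℝ)]
  norm_cast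

theorem pairing_inward_ne_zero_and_abs_lt (k : Fin 4) (e : Side) :
    (pairing (neCovector k) e.inward ≠ 0 ∧ |pairing (neCovector k) e.inward| < 10) ∧
      pairing (nwCovector k) e.inward ≠ 0 ∧ |pairing (nwCovector k) e.inward| < 10 := by
  cases e <;> revert k <;> decide

theorem nudge_mem_openCell_of_mem_closedCell {e : Side} (h : nudge q e ∈ closedCell r) :
    nudge q e ∈ openCell r := by
  have hclosed :
      10 * pairing (neCovector r.kind) (q - bottom r) + pairing (neCovector r.kind) e.inward ∈
          Set.Icc 0 (10 * rhombusArea r.kind) ∧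
        10 * pairing (nwCovector r.kind) (q - bottom r) + pairing (nwCovector r.kind) e.inward ∈
          Set.Icc 0 (10 * rhombusArea r.kind) := by
    simp only [mem_closedCell_iff_pairing, pairing_nudge_sub, Set.mem_Icc, Nat.ofNat_pos,
      le_div_iff₀, div_le_iff₀, mul_comm _ (10 : ℝ)] at h
    exact_mod_cast h
  rw [nudge_mem_openCell_iff]
  obtain ⟨hne, hnw⟩ := pairing_inward_ne_zero_and_abs_lt r.kind e
  simp only [abs_lt] at hne hnw
  simp only [Set.mem_Icc, Set.mem_Ioo] at hclosed ⊢
  lia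

theorem toR_mem_openCell_or_eq_vertexAt_of_nudge_mem {e : Side} (h : nudge q e ∈ openCell r) :
    toR q ∈ openCell r ∨ q = vertexAt r e := by
  rw [nudge_mem_openCell_iff] at h
  rw [toR_mem_openCell_iff, Prod.ext_iff]
  cases e <;> simp only [vertexAt] <;> generalize bottom r = b at h ⊢ <;>
    generalize r.kind = k at h ⊢ <;> fin_cases k <;>
    simp [pairing, neCovector, nwCovector, rhombusArea, edgeVec1, nwEdge, Side.inward] at h ⊢ <;>
    lia

theorem nudge_vertexAt_mem_openCell (r : PlacedRhombus) (e : Side) :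
    nudge (vertexAt r e) e ∈ openCell r := by
  rw [nudge_mem_openCell_iff]
  cases e <;> simp only [vertexAt] <;> generalize bottom r = b <;>
    generalize r.kind = k <;> fin_cases k <;>
    simp [pairing, neCovector, nwCovector, rhombusArea, edgeVec1, nwEdge, Side.inward] <;>
    lia

theorem nudge_mem_openCell_of_toR_mem (h : toR q ∈ openCell r) (e : Side) :
    nudge q e ∈ openCell r := by
  rw [toR_mem_openCell_iff] at h
  rw [nudge_mem_openCell_iff]
  obtain ⟨hne, hnw⟩ := pairing_inward_ne_zero_and_abs_lt r.kind e
  simp only [abs_lt] at hne hnw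
  simp only [Set.mem_Ioo] at h ⊢
  lia

theorem toR_vertexAt_notMem_openCell (r : PlacedRhombus) (e : Side) :
    toR (vertexAt r e) ∉ openCell r := by
  rw [toR_mem_openCell_iff]
  cases e <;> simp only [vertexAt] <;> generalize bottom r = b <;>
    generalize r.kind = k <;> fin_cases k <;>
    simp [pairing, neCovector, nwCovector, rhombusArea, edgeVec1, nwEdge] <;>
    lia

theorem toR_vertexAt_add_inward_mem_openCell (r : PlacedRhombus) (e : Side) :
    toR (vertexAt r e + e.inward) ∈ openCell r := by
  rw [toR_mem_openCell_iff]
  cases e <;> simp only [vertexAt] <;> generalize bottom r = b <;>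
    generalize r.kind = k <;> fin_cases k <;>
    simp [pairing, neCovector, nwCovector, rhombusArea, edgeVec1, nwEdge, Side.inward] <;>
    lia

end Nudge

/-- The vertices of a family of rhombi, recorded as lowest vertices: in a tiling every vertex is the
lowest vertex of some rhombus. -/
def vertices (T : Set PlacedRhombus) : Set (ℤ × ℤ) := bottom '' T

namespace IsTiling

variable {Λ : AddSubgroup (ℤ × ℤ)} {T : Set PlacedRhombus} {r r' : PlacedRhombus} {q : ℤ × ℤ}
  (hT : IsTiling Λ T)
include hT

theorem eq_of_mem_openCell {x : ℝ × ℝ} (hr : r ∈ T) (hr' : r' ∈ T) (hx : x ∈ openCell r)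
    (hx' : x ∈ openCell r') : r = r' := by
  by_contra hne
  exact (Set.disjoint_iff_inter_eq_empty.2 (hT.2.1 r hr r' hr' hne)).notMem_of_mem_left hx hx'

theorem exists_nudge_mem_openCell (q : ℤ × ℤ) (e : Side) : ∃ r ∈ T, nudge q e ∈ openCell r := by
  have hcover : nudge q e ∈ ⋃ r ∈ T, closedCell r := hT.2.2 ▸ Set.mem_univ _
  obtain ⟨r, hr, h⟩ := Set.mem_iUnion₂.1 hcover
  exact ⟨r, hr, nudge_mem_openCell_of_mem_closedCell h⟩

theorem vertexAt_notMem_openCell (hr : r ∈ T) (hr' : r' ∈ T) (e : Side) :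
    toR (vertexAt r e) ∉ openCell r' := by
  intro hmem
  obtain rfl := hT.eq_of_mem_openCell hr hr' (nudge_vertexAt_mem_openCell r e)
    (nudge_mem_openCell_of_toR_mem hmem e)
  exact toR_vertexAt_notMem_openCell r e hmem

theorem exists_vertexAt_eq_iff (e : Side) :
    (∃ r ∈ T, vertexAt r e = q) ↔ ∀ r ∈ T, toR q ∉ openCell r := by
  constructor
  · rintro ⟨r, hr, rfl⟩ r' hr'
    exact hT.vertexAt_notMem_openCell hr hr' e
  · intro hq
    obtain ⟨r, hr, hnudge⟩ := hT.exists_nudge_mem_openCell q e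
    exact ⟨r, hr, ((toR_mem_openCell_or_eq_vertexAt_of_nudge_mem hnudge).resolve_left
      (hq r hr)).symm⟩

theorem mem_vertices_iff (e : Side) : q ∈ vertices T ↔ ∃ r ∈ T, vertexAt r e = q :=
  (hT.exists_vertexAt_eq_iff .bottom).trans (hT.exists_vertexAt_eq_iff e).symm

theorem vertexAt_mem_vertices (hr : r ∈ T) (e : Side) : vertexAt r e ∈ vertices T :=
  (hT.mem_vertices_iff e).2 ⟨r, hr, rfl⟩

theorem vertices_nonempty : (vertices T).Nonempty :=
  let ⟨_, hr, _⟩ := hT.exists_nudge_mem_openCell 0 .bottom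
  ⟨_, hT.vertexAt_mem_vertices hr .bottom⟩

theorem add_inward_notMem_vertices (e : Side) (hq : q ∈ vertices T) :
    q + e.inward ∉ vertices T := by
  obtain ⟨r, hr, rfl⟩ := (hT.mem_vertices_iff e).1 hq
  intro hmem
  exact (hT.exists_vertexAt_eq_iff e).1 ((hT.mem_vertices_iff e).1 hmem) r hr
    (toR_vertexAt_add_inward_mem_openCell r e)

theorem isTilingVertexSet : IsTilingVertexSet (1, 0) (0, 1) (vertices T) where
  nonempty := hT.vertices_nonempty
  add_left_notMem p := hT.add_inward_notMem_vertices .left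
  add_right_notMem p := hT.add_inward_notMem_vertices .bottom
  northEast p hp := by
    obtain ⟨r, hr, rfl⟩ := (hT.mem_vertices_iff .bottom).1 hp
    rcases edgeVec1_mem_diagSteps r.kind with h | h <;> rw [← h]
    exacts [.inl (hT.vertexAt_mem_vertices hr .right), .inr (hT.vertexAt_mem_vertices hr .right)]
  southWest p hp := by
    obtain ⟨r, hr, rfl⟩ := (hT.mem_vertices_iff .right).1 hp
    have hmem : vertexAt r .right - edgeVec1 r.kind ∈ vertices T :=
      (add_sub_cancel_right (bottom r) _).symm ▸ hT.vertexAt_mem_vertices hr .bottom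
    rcases edgeVec1_mem_diagSteps r.kind with h | h <;> rw [← h]
    exacts [.inl hmem, .inr hmem]
  northWest p hp := by
    obtain ⟨r, hr, rfl⟩ := (hT.mem_vertices_iff .bottom).1 hp
    rcases diagSteps_neg_left (V := ℤ × ℤ) _ _ ▸ nwEdge_mem_diagSteps r.kind with h | h <;> rw [← h]
    exacts [.inl (hT.vertexAt_mem_vertices hr .left), .inr (hT.vertexAt_mem_vertices hr .left)]
  southEast p hp := by
    obtain ⟨r, hr, rfl⟩ := (hT.mem_vertices_iff .left).1 hp
    have hmem : vertexAt r .left - nwEdge r.kind ∈ vertices T :=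
      (add_sub_cancel_right (bottom r) _).symm ▸ hT.vertexAt_mem_vertices hr .bottom
    rcases diagSteps_neg_left (V := ℤ × ℤ) _ _ ▸ nwEdge_mem_diagSteps r.kind with h | h <;> rw [← h]
    exacts [.inl hmem, .inr hmem]

theorem rhombiOn_vertices : rhombiOn (vertices T) = T := by
  have hsub : T ⊆ rhombiOn (vertices T) := fun r hr =>
    ⟨hT.vertexAt_mem_vertices hr .bottom, hT.vertexAt_mem_vertices hr .right,
      hT.vertexAt_mem_vertices hr .left⟩
  refine Set.Subset.antisymm (fun r hr => ?_) hsub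
  obtain ⟨r', hr', hbottom⟩ := hr.1
  exact hT.isTilingVertexSet.bijOn_bottom.injOn (hsub hr') hr hbottom ▸ hr'

end IsTiling

/-! ### Counting tilings of the torus -/

section CountTilings

variable {u v : ℤ × ℤ}

/-- The lattice points lying over a set of vertices of the torus. -/
def latticeLift (P : Set ((ℤ × ℤ) ⧸ lat u v)) : Set (ℤ × ℤ) :=
  QuotientAddGroup.mk' (lat u v) ⁻¹' P

theorem add_mem_latticeLift {P : Set ((ℤ × ℤ) ⧸ lat u v)} :
    ∀ w ∈ lat u v, ∀ p ∈ latticeLift P, p + w ∈ latticeLift P := by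
  intro w hw p hp
  have hmk : ((p + w : ℤ × ℤ) : (ℤ × ℤ) ⧸ lat u v) = p :=
    QuotientAddGroup.mk_add_of_mem p hw
  exact (congrArg (· ∈ P) hmk).mpr hp

theorem isTilingVertexSet_latticeLift_iff {P : Set ((ℤ × ℤ) ⧸ lat u v)} :
    IsTilingVertexSet (1, 0) (0, 1) (latticeLift P) ↔
      IsTilingVertexSet (torusEast u v) (torusNorth u v) P :=
  IsTilingVertexSet.preimage_iff (QuotientAddGroup.mk'_surjective _)

theorem IsTiling.latticeLift_image_vertices {T : Set PlacedRhombus} (hT : IsTiling (lat u v) T) :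
    latticeLift (QuotientAddGroup.mk' (lat u v) '' vertices T) = vertices T := by
  refine Set.Subset.antisymm ?_ (Set.subset_preimage_image _ _)
  rintro p ⟨_, ⟨r, hr, rfl⟩, hmk⟩
  refine ⟨rTranslate (-bottom r + p) r, hT.1 _ (QuotientAddGroup.eq.1 hmk) _ hr, ?_⟩
  rw [bottom_rTranslate, add_neg_cancel_left]

theorem numTiles_rhombiOn_latticeLift {P : Set ((ℤ × ℤ) ⧸ lat u v)}
    (h : IsTilingVertexSet (1, 0) (0, 1) (latticeLift P)) :
    numTiles (lat u v) (rhombiOn (latticeLift P)) = P.ncard := by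
  refine Nat.card_congr (Equiv.ofBijective
    (Quot.lift (fun r => ⟨QuotientAddGroup.mk' (lat u v) (bottom r.1), r.2.1⟩) ?_) ⟨?_, ?_⟩)
  · rintro ⟨_, _⟩ ⟨r, _⟩ ⟨w, hw, rfl⟩
    refine Subtype.ext ?_
    simp only [bottom_rTranslate]
    exact QuotientAddGroup.mk_add_of_mem _ hw
  · rintro ⟨r, hr⟩ ⟨r', hr'⟩ heq
    have hw : -bottom r' + bottom r ∈ lat u v :=
      QuotientAddGroup.eq.1 (congrArg Subtype.val heq).symm
    refine Quot.sound ⟨_, hw, h.bijOn_bottom.injOn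
      ((h.isTiling_rhombiOn add_mem_latticeLift).1 _ hw _ hr') hr ?_⟩
    rw [bottom_rTranslate, add_neg_cancel_left]
  · rintro ⟨p, hp⟩
    obtain ⟨q, rfl⟩ := QuotientAddGroup.mk'_surjective _ p
    obtain ⟨r, hr, rfl⟩ := h.bijOn_bottom.surjOn hp
    exact ⟨Quot.mk _ ⟨r, hr⟩, rfl⟩

/-- Tilings of the torus correspond to the vertex sets of the torus that lift to vertex sets of
tilings of the plane. -/
noncomputable def tilingEquiv (u v : ℤ × ℤ) : {T : Set PlacedRhombus // IsTiling (lat u v) T} ≃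
    {P : Set ((ℤ × ℤ) ⧸ lat u v) // IsTilingVertexSet (torusEast u v) (torusNorth u v) P} where
  toFun T := ⟨QuotientAddGroup.mk' (lat u v) '' vertices T, by
    rw [← isTilingVertexSet_latticeLift_iff, T.2.latticeLift_image_vertices]
    exact T.2.isTilingVertexSet⟩
  invFun P := ⟨rhombiOn (latticeLift P.1),
    (isTilingVertexSet_latticeLift_iff.2 P.2).isTiling_rhombiOn add_mem_latticeLift⟩
  left_inv T := Subtype.ext <|
    (congrArg rhombiOn T.2.latticeLift_image_vertices).trans T.2.rhombiOn_vertices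
  right_inv P := Subtype.ext <|
    (congrArg (QuotientAddGroup.mk' (lat u v) '' ·)
      (isTilingVertexSet_latticeLift_iff.2 P.2).bijOn_bottom.image_eq).trans <|
    Set.image_preimage_eq _ (QuotientAddGroup.mk'_surjective _)

theorem numTiles_eq_ncard_tilingEquiv (T : {T : Set PlacedRhombus // IsTiling (lat u v) T}) :
    numTiles (lat u v) T = (tilingEquiv u v T).1.ncard := by
  rw [← numTiles_rhombiOn_latticeLift (isTilingVertexSet_latticeLift_iff.2 (tilingEquiv u v T).2)]
  exact congrArg (numTiles _ ·.1) ((tilingEquiv u v).symm_apply_apply T).symm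

theorem card_tilings_eq_card_vertexSets [Finite ((ℤ × ℤ) ⧸ lat u v)] (f : ℕ → Prop) :
    Nat.card {T : Set PlacedRhombus // IsTiling (lat u v) T ∧ f (numTiles (lat u v) T)} =
      Nat.card {P : Finset ((ℤ × ℤ) ⧸ lat u v) //
        IsTilingVertexSet (torusEast u v) (torusNorth u v) ↑P ∧ f P.card} := by
  have := Fintype.ofFinite ((ℤ × ℤ) ⧸ lat u v)
  calc
    _ = Nat.card {T : {T : Set PlacedRhombus // IsTiling (lat u v) T} //
          f (numTiles (lat u v) T)} :=
      Nat.card_congr (Equiv.subtypeSubtypeEquivSubtypeInter _ _).symm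
    _ = Nat.card {P : {P : Set _ // IsTilingVertexSet (torusEast u v) (torusNorth u v) P} //
          f P.1.ncard} :=
      Nat.card_congr <| (tilingEquiv u v).subtypeEquiv fun T => by
        rw [numTiles_eq_ncard_tilingEquiv]
    _ = Nat.card {P : Set ((ℤ × ℤ) ⧸ lat u v) //
          IsTilingVertexSet (torusEast u v) (torusNorth u v) P ∧ f P.ncard} :=
      Nat.card_congr (Equiv.subtypeSubtypeEquivSubtypeInter _ fun P : Set _ => f P.ncard)
    _ = _ := Nat.card_congr <| (Fintype.finsetEquivSet.subtypeEquiv fun P => by simp).symm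

theorem evenTilings_sub_oddTilings [Fintype ((ℤ × ℤ) ⧸ lat u v)] :
    (evenTilings (lat u v) : ℤ) - oddTilings (lat u v) =
      signedCount fun P : Finset ((ℤ × ℤ) ⧸ lat u v) =>
        IsTilingVertexSet (torusEast u v) (torusNorth u v) ↑P := by
  rw [← card_even_sub_card_odd_eq_signedCount, evenTilings, oddTilings,
    card_tilings_eq_card_vertexSets, card_tilings_eq_card_vertexSets]

end CountTilings

/-- **Jonsson's theorem.** For the torus square lattice `G_{u,v}` (every nonzero
vector of `Λ = ℤu + ℤv` of Euclidean length at least 3), the Witten index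
`Σ_I (−1)^{|I|}` (sum over independent sets) equals
`t_b − t_f − (−1)^d θ_d θ_{d*}`, where `d = gcd(u₁−u₂, v₁−v₂)`, `d* = gcd(u₁+u₂, v₁+v₂)`. -/
theorem jonsson_witten_index (u v : ℤ × ℤ)
    (hindep : u.1 * v.2 - u.2 * v.1 ≠ 0)
    (hlen : ∀ w ∈ lat u v, w ≠ 0 → 9 ≤ w.1 ^ 2 + w.2 ^ 2)
    [Fintype ((ℤ × ℤ) ⧸ lat u v)] [LinearOrder ((ℤ × ℤ) ⧸ lat u v)] :
    (∑ I : IndepSet (torusGraph u v), (-1 : ℤ) ^ I.1.card)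
      = (evenTilings (lat u v) : ℤ) - oddTilings (lat u v)
        - (-1) ^ (Int.gcd (u.1 - u.2) (v.1 - v.2))
          * theta (Int.gcd (u.1 - u.2) (v.1 - v.2))
          * theta (Int.gcd (u.1 + u.2) (v.1 + v.2)) := by
  rw [sum_indepSet_eq_signedCount, signedCount_indep_torusGraph hindep hlen,
    evenTilings_sub_oddTilings]
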